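/- Let G be a finitely generated subgroup of PL₊(I). Then G is non-soluble if and only if Brin's group B embeds in G (i.e., G contains a subgroup isomorphic to B). -/

import Mathlib

open Set

namespace PLPaper

/-- We model `PL₊(I)` inside the group of bijections of `ℝ` with *opposite*
composition, so that the group acts on `ℝ` on the right:
`x · (g * h) = (x · g) · h`. -/
abbrev PermR : Type := (Equiv.Perm ℝ)ᵐᵒᵖ

/-- The (right) action of `g` on the point `x`. -/
def ap (g : PermR) (x : ℝ) : ℝ := g.unop x

/-- `g` is affine on a neighbourhood of `x`. -/
def IsLocallyAffineAt (g : PermR) (x : ℝ) : Prop :=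
  ∃ m b : ℝ, ∀ᶠ y in nhds x, ap g y = m * y + b

/-- The breakpoints of `g`: points of `(0,1)` where `g` is not locally affine
(equivalently, for a PL map, where the derivative fails to exist). -/
def Breakpoints (g : PermR) : Set ℝ :=
  {x ∈ Ioo (0:ℝ) 1 | ¬ IsLocallyAffineAt g x}

/-- `g` is an orientation-preserving piecewise-linear homeomorphism of `[0,1]`
(extended by the identity to all of `ℝ`), with finitely many breakpoints. -/
def IsPL (g : PermR) : Prop :=
  StrictMono (ap g) ∧ (∀ x ∉ Ioo (0:ℝ) 1, ap g x = x) ∧ (Breakpoints g).Finite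

/-- The support of `g`. -/
def Supp (g : PermR) : Set ℝ := {x | ap g x ≠ x}

/-- `(a,b)` is an orbital of `g`, i.e. a connected component of `Supp g`. -/
def IsOrbital (g : PermR) (a b : ℝ) : Prop :=
  a < b ∧ Ioo a b ⊆ Supp g ∧ a ∉ Supp g ∧ b ∉ Supp g

/-- The support of a subgroup `G`. -/
def GSupp (G : Subgroup PermR) : Set ℝ := ⋃ g ∈ (G : Set PermR), Supp g

/-- `(a,b)` is an orbital of the group `G`, i.e. a connected component of its support. -/
def IsGroupOrbital (G : Subgroup PermR) (a b : ℝ) : Prop :=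
  a < b ∧ Ioo a b ⊆ GSupp G ∧ a ∉ GSupp G ∧ b ∉ GSupp G

/-- The pair `g, h` carries a transition chain: orbitals `(a,b)` of `g` and
`(c,d)` of `h` with `a < c < b < d`. -/
def ElemsTransitionChain (g h : PermR) : Prop :=
  ∃ a b c d : ℝ, IsOrbital g a b ∧ IsOrbital h c d ∧ a < c ∧ c < b ∧ b < d

/-- The pair `g, h` carries a one-sided overlap: orbitals `(a,b)` of `g` and
`(a,c)` of `h`, or `(a,b)` of `g` and `(c,b)` of `h`, where `a < c < b`. -/
def ElemsOneSidedOverlap (g h : PermR) : Prop :=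
  ∃ a b c : ℝ, a < c ∧ c < b ∧
    ((IsOrbital g a b ∧ IsOrbital h a c) ∨ (IsOrbital g a b ∧ IsOrbital h c b))

def AdmitsTransitionChain (G : Subgroup PermR) : Prop :=
  ∃ g ∈ G, ∃ h ∈ G, ElemsTransitionChain g h

def AdmitsOneSidedOverlap (G : Subgroup PermR) : Prop :=
  ∃ g ∈ G, ∃ h ∈ G, ElemsOneSidedOverlap g h

/-- `G` admits a bad overlap: orbitals `A` of `f ∈ G` and `B` of `g ∈ G` which
intersect, are distinct, and neither closure is contained in the other orbital. -/
def AdmitsBadOverlap (G : Subgroup PermR) : Prop :=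
  ∃ f ∈ G, ∃ g ∈ G, ∃ a b c d : ℝ, IsOrbital f a b ∧ IsOrbital g c d ∧
    (Ioo a b ∩ Ioo c d).Nonempty ∧ Ioo a b ≠ Ioo c d ∧
    ¬ Icc a b ⊆ Ioo c d ∧ ¬ Icc c d ⊆ Ioo a b

/-- A tower: a set of signed orbitals `((a,b), g)` with pairwise nested orbitals,
where equal orbitals force equal signatures. -/
def IsTower (T : Set ((ℝ × ℝ) × PermR)) : Prop :=
  (∀ p ∈ T, IsOrbital p.2 p.1.1 p.1.2) ∧
  (∀ p ∈ T, ∀ q ∈ T,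
      Ioo p.1.1 p.1.2 ⊆ Ioo q.1.1 q.1.2 ∨ Ioo q.1.1 q.1.2 ⊆ Ioo p.1.1 p.1.2) ∧
  (∀ p ∈ T, ∀ q ∈ T, p.1 = q.1 → p.2 = q.2)

/-- `G` admits the tower `T` if `T` is a tower all of whose signatures lie in `G`. -/
def AdmitsTower (G : Subgroup PermR) (T : Set ((ℝ × ℝ) × PermR)) : Prop :=
  IsTower T ∧ ∀ p ∈ T, p.2 ∈ G

def AdmitsInfiniteTower (G : Subgroup PermR) : Prop :=
  ∃ T : Set ((ℝ × ℝ) × PermR), AdmitsTower G T ∧ T.Infinite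

/-- The set of breakpoints of the elements of a set `S`. -/
def BreakSet (S : Set PermR) : Set ℝ := ⋃ g ∈ S, Breakpoints g

/-- The derived length of a group: the least `n` with `derivedSeries G n = ⊥`. -/
noncomputable def derivedLength (G : Type*) [Group G] : ℕ :=
  sInf {n : ℕ | derivedSeries G n = ⊥}

/-- Generators of Brin's group `B`: the `w i` for `i : ℤ` (as `Sum.inl i`)
and the letter `s` (as `Sum.inr ()`). -/
abbrev BrinGen : Type := ℤ ⊕ Unit

def bw (i : ℤ) : FreeGroup BrinGen := FreeGroup.of (Sum.inl i)

def bs : FreeGroup BrinGen := FreeGroup.of (Sum.inr ())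

/-- Conjugation `g^h = h⁻¹ g h`. -/
def fgConj (g h : FreeGroup BrinGen) : FreeGroup BrinGen := h⁻¹ * g * h

/-- Commutator `[g,h] = g⁻¹ h⁻¹ g h`. -/
def fgComm (g h : FreeGroup BrinGen) : FreeGroup BrinGen := g⁻¹ * h⁻¹ * g * h

/-- The relators of Brin's group `B`:
`w_i^s = w_{i+1}` and `[w_i^{w_k^m}, w_j] = 1` for `i < k`, `j < k`, `m ≠ 0`. -/
def BrinRels : Set (FreeGroup BrinGen) :=
  {r | ∃ i : ℤ, r = fgConj (bw i) bs * (bw (i + 1))⁻¹} ∪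
  {r | ∃ i j k m : ℤ, i < k ∧ j < k ∧ m ≠ 0 ∧
        r = fgComm (fgConj (bw i) (bw k ^ m)) (bw j)}

/-- Brin's group `B`, by its presentation. -/
abbrev BrinB : Type := PresentedGroup BrinRels

/-!
An orbital `(a, b)` of `x ∈ G` is a *block* of `G` if every element of `G` moving one of its
endpoints moves the whole interval off itself. A strictly nested tower of block orbitals uses up
breakpoints of the generators, so its height is bounded; hence a subgroup all of whose orbitals are
blocks is soluble, of derived length bounded in terms of the generators.

If `G` is finitely generated and non-soluble, its derived subgroups therefore keep having non-block
orbitals. Unions of such orbitals that are invariant under `G` satisfy the descending chain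
condition, and a minimal one has, for each of its components `(α, β)`, a group `R` of elements with
trivial germs at `α` and `β`, without common fixed points in `(α, β)`, and normalised by the
stabilizer of `(α, β)`. An element of this stabilizer that is nontrivial near `α` provides a `t`
mapping the support of some `w ∈ R` in `(α, β)` into an interval displaced by all nonzero powers of
`w`, so that the conjugates of `w` by powers of `t` satisfy Brin's relations on `(α, β)`. An element
of `R` trivial on `(α, β)` has only blocks as orbitals, so by the bound on towers the relations hold
everywhere once `w` is replaced by an element deep enough in the derived series.

The resulting homomorphism from Brin's group is injective because `w` and its conjugate by `t` do
not commute, whereas an element of the kernel would make such conjugates commute. Conversely,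
Brin's group is not soluble, since the commutator of `w (i - 1)` and `w i` is nontrivial and lies in
the `n`-th derived subgroup whenever `i ≤ -2 * n`.
-/

section CommutatorClosure

open scoped commutatorElement

variable {Γ Γ' : Type*} [Group Γ] [Group Γ'] {u v : Γ}

theorem commutator_closure_pair_le_ker (f : Γ →* Γ') (huv : ⁅u, v⁆ ∈ f.ker) :
    ⁅Subgroup.closure {u, v}, Subgroup.closure {u, v}⁆ ≤ f.ker := by
  have hcomm : Commute (f u) (f v) := by
    rwa [← commutatorElement_eq_one_iff_commute, ← map_commutatorElement]
  rw [← Subgroup.map_eq_bot_iff, Subgroup.map_commutator, Subgroup.commutator_self_eq_bot_iff,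
    MonoidHom.map_closure, image_pair]
  refine Subgroup.isMulCommutative_closure ?_
  rintro x (rfl | rfl) y (rfl | rfl)
  exacts [rfl, hcomm, hcomm.symm, rfl]

theorem commutator_closure_pair_le {N : Subgroup Γ} (hu : u ∈ Subgroup.normalizer (N : Set Γ))
    (hv : v ∈ Subgroup.normalizer (N : Set Γ)) (huv : ⁅u, v⁆ ∈ N) :
    ⁅Subgroup.closure {u, v}, Subgroup.closure {u, v}⁆ ≤ N := by
  set M := Subgroup.normalizer (N : Set Γ)
  have hle := commutator_closure_pair_le_ker (QuotientGroup.mk' (N.subgroupOf M))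
    (u := ⟨u, hu⟩) (v := ⟨v, hv⟩) (by rwa [QuotientGroup.ker_mk'])
  have hmap := Subgroup.map_mono (f := M.subtype) hle
  rw [QuotientGroup.ker_mk', Subgroup.map_commutator, MonoidHom.map_closure, image_pair,
    Subgroup.subgroupOf_map_subtype] at hmap
  exact hmap.trans inf_le_left

end CommutatorClosure

section IteratedCommutator

variable {Γ : Type*} [Group Γ]

/-- The `n`-th derived subgroup of a subgroup `T`, as a subgroup of the ambient group rather
than of `T` (which is what `derivedSeries T n` would be). -/
def iteratedCommutator (T : Subgroup Γ) : ℕ → Subgroup Γ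
  | 0 => T
  | n + 1 => ⁅iteratedCommutator T n, iteratedCommutator T n⁆

theorem iteratedCommutator_succ (T : Subgroup Γ) (n : ℕ) : iteratedCommutator T (n + 1) =
    ⁅iteratedCommutator T n, iteratedCommutator T n⁆ :=
  rfl

theorem commutator_self_le (T : Subgroup Γ) : ⁅T, T⁆ ≤ T :=
  Subgroup.commutator_le.2 fun _ ha _ hb =>
    mul_mem (mul_mem (mul_mem ha hb) (inv_mem ha)) (inv_mem hb)

theorem iteratedCommutator_antitone (T : Subgroup Γ) : Antitone (iteratedCommutator T) :=
  antitone_nat_of_succ_le fun n => commutator_self_le (iteratedCommutator T n)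

theorem iteratedCommutator_le_self (T : Subgroup Γ) (n : ℕ) : iteratedCommutator T n ≤ T :=
  iteratedCommutator_antitone T n.zero_le

theorem iteratedCommutator_mono {S T : Subgroup Γ} (h : S ≤ T) (n : ℕ) :
    iteratedCommutator S n ≤ iteratedCommutator T n := by
  induction n with
  | zero => exact h
  | succ n ih => exact Subgroup.commutator_mono ih ih

theorem iteratedCommutator_iteratedCommutator (T : Subgroup Γ) (m n : ℕ) :
    iteratedCommutator (iteratedCommutator T m) n = iteratedCommutator T (m + n) := by
  induction n with
  | zero => rfl
  | succ n ih => rw [iteratedCommutator_succ, ih, ← iteratedCommutator_succ, add_assoc]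

theorem map_iteratedCommutator {Γ' : Type*} [Group Γ'] (f : Γ →* Γ') (T : Subgroup Γ) (n : ℕ) :
    (iteratedCommutator T n).map f = iteratedCommutator (T.map f) n := by
  induction n with
  | zero => rfl
  | succ n ih => rw [iteratedCommutator_succ, Subgroup.map_commutator, ih, iteratedCommutator_succ]

theorem map_subtype_derivedSeries (T : Subgroup Γ) (n : ℕ) :
    (derivedSeries T n).map T.subtype = iteratedCommutator T n := by
  induction n with
  | zero => rw [derivedSeries_zero, ← MonoidHom.range_eq_map, T.range_subtype]; rfl
  | succ n ih => rw [derivedSeries_succ, Subgroup.map_commutator, ih, iteratedCommutator_succ]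

theorem iteratedCommutator_top (n : ℕ) :
    iteratedCommutator (⊤ : Subgroup Γ) n = derivedSeries Γ n := by
  induction n with
  | zero => rfl
  | succ n ih => rw [iteratedCommutator_succ, ih, derivedSeries_succ]

theorem isSolvable_of_iteratedCommutator_eq_bot {T : Subgroup Γ} {n : ℕ}
    (h : iteratedCommutator T n = ⊥) : Group.IsSolvable T := by
  refine ⟨⟨n, ?_⟩⟩
  rw [← map_subtype_derivedSeries] at h
  exact (Subgroup.map_eq_bot_iff_of_injective _ T.subtype_injective).1 h

theorem conj_mem_iteratedCommutator {T : Subgroup Γ} {g : Γ}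
    (hg : ∀ x ∈ T, MulAut.conj g x ∈ T) {n : ℕ} {x : Γ} (hx : x ∈ iteratedCommutator T n) :
    MulAut.conj g x ∈ iteratedCommutator T n := by
  have hmap : T.map (MulAut.conj g).toMonoidHom ≤ T := by
    rintro _ ⟨y, hy, rfl⟩
    exact hg y hy
  refine iteratedCommutator_mono hmap n ?_
  rw [← map_iteratedCommutator]
  exact ⟨x, hx, rfl⟩

end IteratedCommutator

section BrinFamily

open scoped commutatorElement

variable {Γ : Type*} [Group Γ] {w : ℤ → Γ}

/-- The commutation relations of Brin's group, for a family `w` in an arbitrary group.  Since `m`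
ranges over all nonzero integers, conjugating by `w k ^ m` or by its inverse is the same thing. -/
def IsBrinFamily (w : ℤ → Γ) : Prop :=
  ∀ ⦃i j k m : ℤ⦄, i < k → j < k → m ≠ 0 → Commute (MulAut.conj (w k ^ m) (w i)) (w j)

theorem commutatorElement_inv_conj {a b c d : Γ}
    (ha : Commute (MulAut.conj c⁻¹ a) a) (hBa : Commute (MulAut.conj d⁻¹ c) a)
    (hBc : Commute (MulAut.conj d⁻¹ c) c) (hb : MulAut.conj c⁻¹ a = b) :
    ⁅⁅a⁻¹, c⁻¹⁆⁻¹, ⁅c⁻¹, d⁻¹⁆⁆ = a * (b⁻¹ * b⁻¹ * MulAut.conj c⁻¹ b) := by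
  have hac : ⁅a⁻¹, c⁻¹⁆ = a⁻¹ * b := by
    rw [← hb, commutatorElement_def, MulAut.conj_apply]; group
  set B := MulAut.conj d⁻¹ c with hB
  have hcd : ⁅c⁻¹, d⁻¹⁆ = c⁻¹ * B := by
    rw [hB, commutatorElement_def, MulAut.conj_apply]; group
  have hBb : Commute B b := by
    rw [← hb, MulAut.conj_apply]
    exact (hBc.inv_right.mul_right hBa).mul_right hBc.inv_right.inv_right
  have hconj : MulAut.conj (c⁻¹ * B) (a⁻¹ * b) = b⁻¹ * MulAut.conj c⁻¹ b := by
    rw [map_mul MulAut.conj, MulAut.mul_apply, MulAut.conj_apply B,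
      (hBa.inv_right.mul_right hBb).eq, mul_inv_cancel_right, map_mul, map_inv, hb]
  rw [hb] at ha
  calc ⁅⁅a⁻¹, c⁻¹⁆⁻¹, ⁅c⁻¹, d⁻¹⁆⁆
      = (a⁻¹ * b)⁻¹ * MulAut.conj (c⁻¹ * B) (a⁻¹ * b) := by
        rw [hac, hcd, commutatorElement_def, MulAut.conj_apply]; group
    _ = b⁻¹ * a * (b⁻¹ * MulAut.conj c⁻¹ b) := by rw [hconj]; group
    _ = a * (b⁻¹ * b⁻¹ * MulAut.conj c⁻¹ b) := by rw [ha.inv_left.eq]; group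

theorem IsBrinFamily.exists_commutatorElement_eq_mul (hw : IsBrinFamily w) (j : ℤ) :
    ∃ t, (∀ i ≤ j, Commute t (w i)) ∧
      ⁅⁅(w j)⁻¹, (w (j + 1))⁻¹⁆⁻¹, ⁅(w (j + 1))⁻¹, (w (j + 2))⁻¹⁆⁆ = w j * t := by
  have hcomm {i k : ℤ} (l : ℤ) (hi : i < k) (hl : l < k) :
      Commute (MulAut.conj (w k)⁻¹ (w i)) (w l) := by
    simpa using hw hi hl (m := -1) (by decide)
  refine ⟨_, fun i hi => ?_, commutatorElement_inv_conj (hcomm j (by lia) (by lia))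
    (hcomm j (by lia) (by lia)) (hcomm (j + 1) (by lia) (by lia)) rfl⟩
  have h₁ := hcomm (k := j + 1) (i := j) i (by lia) (by lia)
  have h₂ : Commute (MulAut.conj (w (j + 1))⁻¹ (MulAut.conj (w (j + 1))⁻¹ (w j))) (w i) := by
    have := hw (i := j) (j := i) (k := j + 1) (m := -2) (by lia) (by lia) (by decide)
    rwa [zpow_neg, zpow_two, mul_inv_rev, map_mul, MulAut.mul_apply] at this
  exact (h₁.inv_left.mul_left h₁.inv_left).mul_left h₂

theorem IsBrinFamily.commutatorElement_mem_iteratedCommutator (hw : IsBrinFamily w)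
    {T : Subgroup Γ} (hT : ∀ i ≤ 0, w i ∈ T) (n : ℕ) {i : ℤ} (hi : i ≤ -2 * n) :
    ⁅(w (i - 1))⁻¹, (w i)⁻¹⁆ ∈ iteratedCommutator T n := by
  induction n generalizing i with
  | zero =>
    have hi0 : i ≤ 0 := by simpa using hi
    exact commutator_self_le T (Subgroup.commutator_mem_commutator
      (inv_mem (hT _ (by lia))) (inv_mem (hT _ hi0)))
  | succ n ih =>
    push_cast at hi
    have h₁ := ih (i := i + 1) (by lia)
    have h₂ := ih (i := i + 2) (by lia)
    rw [show i + 1 - 1 = i by ring] at h₁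
    rw [show i + 2 - 1 = i + 1 by ring] at h₂
    obtain ⟨t, htw, ht⟩ := hw.exists_commutatorElement_eq_mul i
    have hmem : w i * t ∈ iteratedCommutator T (n + 1) :=
      ht ▸ Subgroup.commutator_mem_commutator (inv_mem h₁) h₂
    have hp : (w (i - 1))⁻¹ ∈ T := inv_mem (hT _ (by lia))
    have hconj : MulAut.conj (w (i - 1))⁻¹ (w i * t)⁻¹ ∈ iteratedCommutator T (n + 1) :=
      conj_mem_iteratedCommutator
        (fun x hx => mul_mem (mul_mem hp hx) (inv_mem hp)) (inv_mem hmem)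
    have hti : Commute t⁻¹ (w i) := (htw i le_rfl).inv_left
    have htp : Commute t⁻¹ (w (i - 1)) := (htw (i - 1) (by lia)).inv_left
    have habsorb : ⁅(w (i - 1))⁻¹, (w i)⁻¹⁆ =
        MulAut.conj (w (i - 1))⁻¹ (w i * t)⁻¹ * (w i * t) := by
      rw [MulAut.conj_apply, commutatorElement_def, mul_inv_rev]
      calc (w (i - 1))⁻¹ * (w i)⁻¹ * (w (i - 1))⁻¹⁻¹ * (w i)⁻¹⁻¹
          = (w (i - 1))⁻¹ * ((w i)⁻¹ * w (i - 1) * w i * t⁻¹) * t := by group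
        _ = (w (i - 1))⁻¹ * (t⁻¹ * ((w i)⁻¹ * w (i - 1) * w i)) * t := by
            rw [((hti.inv_right.mul_right htp).mul_right hti).eq]
        _ = _ := by group
    exact habsorb ▸ mul_mem hconj hmem

end BrinFamily

section CommutingConjugates

variable {B Γ : Type*} [Group B] [Group Γ] {N N₀ : Subgroup B} {w : B}

theorem commute_of_mem_closure {S T : Set B} (h : ∀ s ∈ S, ∀ t ∈ T, Commute s t) {x y : B}
    (hx : x ∈ Subgroup.closure S) (hy : y ∈ Subgroup.closure T) : Commute x y := by
  have hST : Subgroup.closure S ≤ Subgroup.centralizer (Subgroup.closure T : Subgroup B) := by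
    rw [Subgroup.centralizer_closure, Subgroup.closure_le]
    exact fun s hs => Subgroup.mem_centralizer_iff.2 fun t ht => (h s hs t ht).eq.symm
  exact (Subgroup.mem_centralizer_iff.1 (hST hx) y hy).symm

theorem commute_conj_conj_iff (g a b : B) :
    Commute (MulAut.conj g a) (MulAut.conj g b) ↔ Commute a b := by
  simp only [MulAut.conj_apply, Commute.conj_iff]

/-- The conjugates of `N` by distinct powers of `w` commute with one another, so that `N` and `w`
generate a homomorphic image of the wreath product `N ≀ ℤ`. -/
def HasCommutingConjugates (N : Subgroup B) (w : B) : Prop :=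
  ∀ ⦃m : ℤ⦄, m ≠ 0 → ∀ ⦃a⦄, a ∈ N → ∀ ⦃b⦄, b ∈ N → Commute (MulAut.conj (w ^ m) a) b

/-- The subgroup generated by the conjugates of `N` by `w ^ m`, `m ∈ F`. -/
def zpowConjugates (N : Subgroup B) (w : B) (F : Set ℤ) : Subgroup B :=
  ⨆ m ∈ F, N.map (MulAut.conj (w ^ m)).toMonoidHom

theorem conj_mem_zpowConjugates {F : Set ℤ} {m : ℤ} (hm : m ∈ F) {a : B} (ha : a ∈ N) :
    MulAut.conj (w ^ m) a ∈ zpowConjugates N w F :=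
  le_biSup (fun m : ℤ => N.map (MulAut.conj (w ^ m)).toMonoidHom) hm ⟨a, ha, rfl⟩

theorem zpowConjugates_mono (hN : N₀ ≤ N) {F F' : Set ℤ} (hF : F ⊆ F') :
    zpowConjugates N₀ w F ≤ zpowConjugates N w F' :=
  (biSup_mono fun _ h => hF h).trans (iSup₂_mono fun _ _ => Subgroup.map_mono hN)

theorem exists_zpowConjugates_mul_zpow {x : B} (hx : x ∈ N ⊔ Subgroup.zpowers w) :
    ∃ (F : Finset ℤ) (p : B) (e : ℤ), p ∈ zpowConjugates N w F ∧ x = p * w ^ e := by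
  rw [Subgroup.zpowers_eq_closure, ← Subgroup.closure_eq N, ← Subgroup.closure_union] at hx
  have mul_right {F : Finset ℤ} {p : B} {e : ℤ} (hp : p ∈ zpowConjugates N w F) {y : B}
      (hy : y ∈ N ∨ y = w ∨ y = w⁻¹) :
      ∃ (F : Finset ℤ) (q : B) (e' : ℤ), q ∈ zpowConjugates N w F ∧
        p * w ^ e * y = q * w ^ e' := by
    rcases hy with hy | rfl | rfl
    · refine ⟨insert e F, p * MulAut.conj (w ^ e) y, e,
        mul_mem (zpowConjugates_mono le_rfl (by simp) hp)
          (conj_mem_zpowConjugates (by simp) hy), ?_⟩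
      rw [MulAut.conj_apply]; group
    · exact ⟨F, p, e + 1, hp, by rw [zpow_add_one, mul_assoc]⟩
    · exact ⟨F, p, e - 1, hp, by rw [zpow_sub_one, mul_assoc]⟩
  induction hx using Subgroup.closure_induction_right with
  | one => exact ⟨∅, 1, 0, one_mem _, by simp⟩
  | mul_right z _ y hy h =>
    obtain ⟨F, p, e, hp, rfl⟩ := h
    exact mul_right hp (hy.imp id Or.inl)
  | mul_inv_cancel z _ y hy h =>
    obtain ⟨F, p, e, hp, rfl⟩ := h
    exact mul_right hp (hy.imp inv_mem fun hyw => Or.inr (by rw [mem_singleton_iff.1 hyw]))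

namespace HasCommutingConjugates

theorem mono (h : HasCommutingConjugates N w) (hN : N₀ ≤ N) : HasCommutingConjugates N₀ w :=
  fun _ hm _ ha _ hb => h hm (hN ha) (hN hb)

theorem commute_conj_zpow (h : HasCommutingConjugates N w) {m m' : ℤ} (hm : m ≠ m') {a b : B}
    (ha : a ∈ N) (hb : b ∈ N) : Commute (MulAut.conj (w ^ m) a) (MulAut.conj (w ^ m') b) := by
  rw [← add_sub_cancel m' m, zpow_add, map_mul, MulAut.mul_apply, commute_conj_conj_iff]
  exact h (sub_ne_zero.2 hm) ha hb

theorem zpowConjugates_le_centralizer (h : HasCommutingConjugates N w) {F : Set ℤ} {m : ℤ}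
    (hm : m ∉ F) : zpowConjugates N w F ≤
      Subgroup.centralizer (N.map (MulAut.conj (w ^ m)).toMonoidHom) := by
  refine iSup₂_le fun m' hm' => ?_
  rintro _ ⟨a, ha, rfl⟩
  rw [Subgroup.mem_centralizer_iff]
  rintro _ ⟨b, hb, rfl⟩
  exact (h.commute_conj_zpow (by rintro rfl; exact hm hm') hb ha).eq

theorem zpowConjugates_le_normalizer (h : HasCommutingConjugates N w) (F : Set ℤ) :
    zpowConjugates N w F ≤ Subgroup.normalizer N := by
  refine iSup₂_le fun m _ => ?_
  rintro _ ⟨a, ha, rfl⟩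
  rcases eq_or_ne m 0 with rfl | hm
  · simpa using Subgroup.le_normalizer ha
  · exact Subgroup.centralizer_le_normalizer _
      (Subgroup.mem_centralizer_iff.2 fun b hb => (h hm ha hb).eq.symm)

theorem exists_mul_of_mem_insert (h : HasCommutingConjugates N w) {F : Finset ℤ} {m : ℤ}
    (hm : m ∉ F) {p : B} (hp : p ∈ zpowConjugates N w (insert m F : Finset ℤ)) :
    ∃ a ∈ N, ∃ r ∈ zpowConjugates N w F, MulAut.conj (w ^ m) a * r = p := by
  rw [zpowConjugates, Finset.coe_insert, iSup_insert, ← zpowConjugates, ← SetLike.mem_coe,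
    Subgroup.coe_mul_of_right_le_normalizer_left _ _
      ((h.zpowConjugates_le_centralizer hm).trans (Subgroup.centralizer_le_normalizer _))] at hp
  obtain ⟨_, ⟨a, ha, rfl⟩, r, hr, rfl⟩ := hp
  exact ⟨a, ha, r, hr, rfl⟩

theorem commute_map_of_ne_zero (h : HasCommutingConjugates N w) (φ : B →* Γ) {F : Set ℤ} {p : B}
    (hp : p ∈ zpowConjugates N w F) {e : ℤ} (he : e ≠ 0)
    (hc : ∀ a ∈ N, Commute (φ (p * w ^ e)) (φ a)) {a b : B} (ha : a ∈ N) (hb : b ∈ N) :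
    Commute (φ a) (φ b) := by
  have hpb : MulAut.conj p⁻¹ b ∈ N :=
    (Subgroup.mem_normalizer_iff.1 (inv_mem (h.zpowConjugates_le_normalizer F hp)) b).1 hb
  have hab : Commute (MulAut.conj (p * w ^ e) a) b := by
    have := (commute_conj_conj_iff p _ _).2 (h he ha hpb)
    rwa [← MulAut.mul_apply, ← MulAut.mul_apply, ← map_mul, ← map_mul, mul_inv_cancel, map_one,
      MulAut.one_apply] at this
  have hfix : φ (MulAut.conj (p * w ^ e) a) = φ a := by
    rw [MulAut.conj_apply, map_mul, map_mul, (hc a ha).eq, map_inv, mul_inv_cancel_right]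
  exact hfix ▸ hab.map φ

theorem eq_one_of_commute_map (h : HasCommutingConjugates N w) (hN : N₀ ≤ N) (φ : B →* Γ)
    (hcent : ∀ a ∈ N₀, (∀ b ∈ N, Commute (φ a) (φ b)) → a = 1) {F : Finset ℤ} {p : B}
    (hp : p ∈ zpowConjugates N₀ w F)
    (hc : ∀ m : ℤ, ∀ b ∈ N, Commute (φ p) (φ (MulAut.conj (w ^ m) b))) : p = 1 := by
  induction F using Finset.induction_on generalizing p with
  | empty => simpa [zpowConjugates] using hp
  | insert m F hmF ih =>
    obtain ⟨a, ha, r, hr, rfl⟩ := (h.mono hN).exists_mul_of_mem_insert hmF hp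
    have ha1 : a = 1 := by
      refine hcent a ha fun b hb => ?_
      have hrb : Commute r (MulAut.conj (w ^ m) b) :=
        (Subgroup.mem_centralizer_iff.1 (h.zpowConjugates_le_centralizer hmF
          (zpowConjugates_mono hN subset_rfl hr)) _ ⟨b, hb, rfl⟩).symm
      have hab := (hc m b hb).mul_left (hrb.map φ).inv_left
      simpa only [map_mul, mul_inv_cancel_right, MulAut.conj_apply, map_inv, Commute.conj_iff]
        using hab
    rw [ha1, map_one, one_mul] at hc ⊢
    exact ih hr hc

end HasCommutingConjugates

end CommutingConjugates

section Injectivity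

variable {B Γ : Type*} [Group B] [Group Γ] {W : ℤ → B} {s : B}

theorem mem_closure_image_Iic (W : ℤ → B) {i n : ℤ} (h : i ≤ n) :
    W i ∈ Subgroup.closure (W '' Iic n) :=
  Subgroup.subset_closure ⟨i, h, rfl⟩

theorem IsBrinFamily.hasCommutingConjugates (hW : IsBrinFamily W) {n k : ℤ} (hk : n < k) :
    HasCommutingConjugates (Subgroup.closure (W '' Iic n)) (W k) := by
  intro m hm a ha b hb
  refine commute_of_mem_closure (S := MulAut.conj (W k ^ m) '' (W '' Iic n)) ?_ ?_ hb
  · rintro _ ⟨_, ⟨i, hi, rfl⟩, rfl⟩ _ ⟨j, hj, rfl⟩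
    exact hW (hi.trans_lt hk) (hj.trans_lt hk) hm
  · have := Subgroup.mem_map_of_mem (MulAut.conj (W k ^ m)).toMonoidHom ha
    rwa [MonoidHom.map_closure] at this

/-- Induction on the length `d` of the window of generators: the top generator `W n` and the group
generated by the lower ones have commuting conjugates, so either the exponent of `W n` in `x` is
nonzero and the lower generators have commuting images, or `x` is a product of conjugates of
shorter words, each of which satisfies the induction hypothesis. -/
theorem IsBrinFamily.eq_one_of_commute_map (hW : IsBrinFamily W) (φ : B →* Γ)
    (hnc : ∀ i, ¬ Commute (φ (W i)) (φ (W (i + 1)))) (d : ℕ) {n : ℤ} {x : B}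
    (hx : x ∈ Subgroup.closure (W '' Ioc (n - d) n))
    (hcx : ∀ j ≤ n, Commute (φ x) (φ (W j))) : x = 1 := by
  induction d generalizing n x with
  | zero => simpa using hx
  | succ d ih =>
    set N := Subgroup.closure (W '' Iic (n - 1))
    set N₀ := Subgroup.closure (W '' Ioc (n - 1 - d) (n - 1))
    have hN₀ : N₀ ≤ N := Subgroup.closure_mono (image_mono fun j hj => hj.2)
    have hN : HasCommutingConjugates N (W n) := hW.hasCommutingConjugates (by lia)
    have hcN : ∀ b ∈ N, Commute (φ x) (φ b) := by
      intro b hb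
      refine commute_of_mem_closure (S := {φ x}) (T := φ '' (W '' Iic (n - 1))) ?_
        (Subgroup.subset_closure rfl) (MonoidHom.map_closure φ _ ▸ Subgroup.mem_map_of_mem φ hb)
      rintro _ rfl _ ⟨_, ⟨j, hj, rfl⟩, rfl⟩
      exact hcx j (by have := mem_Iic.1 hj; lia)
    have hx' : x ∈ N₀ ⊔ Subgroup.zpowers (W n) := by
      refine (Subgroup.closure_le _).2 ?_ hx
      rintro _ ⟨j, hj, rfl⟩
      rcases eq_or_lt_of_le hj.2 with rfl | hjn
      · exact Subgroup.mem_sup_right (Subgroup.mem_zpowers _)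
      · refine Subgroup.mem_sup_left (Subgroup.subset_closure ⟨j, ⟨?_, by lia⟩, rfl⟩)
        have := hj.1
        push_cast at this
        lia
    obtain ⟨F, p, e, hp, rfl⟩ := exists_zpowConjugates_mul_zpow hx'
    rcases eq_or_ne e 0 with rfl | he
    · rw [zpow_zero, mul_one] at hcx hcN ⊢
      refine hN.eq_one_of_commute_map hN₀ φ
        (fun a ha hab => ih ha fun j hj => hab _ (mem_closure_image_Iic W hj)) hp fun m b hb => ?_
      have hn := (hcx n le_rfl).zpow_right m
      rw [MulAut.conj_apply, map_mul, map_mul, map_inv, map_zpow]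
      exact (hn.mul_right (hcN b hb)).mul_right hn.inv_right
    · have hcomm := hN.commute_map_of_ne_zero φ (zpowConjugates_mono hN₀ subset_rfl hp) he hcN
        (mem_closure_image_Iic W (show n - 2 ≤ n - 1 by lia)) (mem_closure_image_Iic W le_rfl)
      rw [show n - 1 = n - 2 + 1 by ring] at hcomm
      exact absurd hcomm (hnc (n - 2))

theorem exists_mem_closure_image_Ioc {y : B} (hy : y ∈ Subgroup.closure (range W)) :
    ∃ n : ℕ, y ∈ Subgroup.closure (W '' Ioc (-n : ℤ) n) := by
  have hdir : Directed (· ≤ ·) fun n : ℕ => Subgroup.closure (W '' Ioc (-n : ℤ) n) :=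
    (Monotone.directed_le fun m n hmn => Subgroup.closure_mono
      (image_mono (Ioc_subset_Ioc (by lia) (by lia))))
  rw [← Subgroup.mem_iSup_of_directed hdir, ← Subgroup.closure_iUnion]
  refine Subgroup.closure_mono ?_ hy
  rintro _ ⟨i, rfl⟩
  exact mem_iUnion.2 ⟨i.natAbs + 1, i, ⟨by lia, by lia⟩, rfl⟩

theorem conj_zpow_eq_sub (hs : ∀ i, MulAut.conj s⁻¹ (W i) = W (i + 1)) (k i : ℤ) :
    MulAut.conj (s ^ k) (W i) = W (i - k) := by
  have hs' (i : ℤ) : MulAut.conj s (W i) = W (i - 1) := by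
    have h := hs (i - 1)
    rw [sub_add_cancel] at h
    rw [← h, ← MulAut.mul_apply, ← map_mul, mul_inv_cancel, map_one, MulAut.one_apply]
  induction k generalizing i with
  | zero => simp
  | succ k ih => rw [zpow_add_one, map_mul, MulAut.mul_apply, hs', ih]; congr 1; ring
  | pred k ih => rw [zpow_sub_one, map_mul, MulAut.mul_apply, hs, ih]; congr 1; ring

theorem exists_eq_zpow_mul (hs : ∀ i, MulAut.conj s⁻¹ (W i) = W (i + 1))
    (hgen : Subgroup.closure (range W ∪ {s}) = ⊤) (x : B) :
    ∃ (k : ℤ), ∃ y ∈ Subgroup.closure (range W), s ^ k * y = x := by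
  have hnorm : Subgroup.zpowers s ≤ Subgroup.normalizer (Subgroup.closure (range W)) := by
    rw [Subgroup.zpowers_le, Subgroup.mem_normalizer_iff_map_conj_eq, MonoidHom.map_closure,
      ← range_comp]
    congr 1
    have hconj : MulAut.conj s ∘ W = W ∘ (Equiv.subRight (1 : ℤ)) :=
      funext fun i => by simpa using conj_zpow_eq_sub hs 1 i
    exact (congrArg range hconj).trans ((Equiv.subRight (1 : ℤ)).surjective.range_comp W)
  have hx : x ∈ ((Subgroup.zpowers s ⊔ Subgroup.closure (range W) : Subgroup B) : Set B) := by
    rw [Subgroup.zpowers_eq_closure, ← Subgroup.closure_union, union_comm, hgen]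
    trivial
  rw [Subgroup.coe_mul_of_left_le_normalizer_right _ _ hnorm] at hx
  obtain ⟨_, ⟨k, rfl⟩, y, hy, rfl⟩ := hx
  exact ⟨k, y, hy, rfl⟩

theorem IsBrinFamily.commute_map_of_map_eq (hW : IsBrinFamily W) (φ : B →* Γ) {n K : ℤ}
    (hK : n < K) {c : B} (hc : c ∈ Subgroup.closure (W '' Iic n)) (hφ : φ (W K) = φ c) {a b : B}
    (ha : a ∈ Subgroup.closure (W '' Iic n)) (hb : b ∈ Subgroup.closure (W '' Iic n)) :
    Commute (φ a) (φ b) := by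
  have hca : MulAut.conj c⁻¹ a ∈ Subgroup.closure (W '' Iic n) := by
    rw [MulAut.conj_apply]
    exact mul_mem (mul_mem (inv_mem hc) ha) (inv_mem (inv_mem hc))
  have h := (hW.hasCommutingConjugates hK one_ne_zero hca hb).map φ
  have hfix : φ (MulAut.conj (W K) (MulAut.conj c⁻¹ a)) = φ a := by
    calc φ (MulAut.conj (W K) (MulAut.conj c⁻¹ a))
        = φ c * φ (c⁻¹ * a * c) * (φ c)⁻¹ := by
          rw [MulAut.conj_apply, MulAut.conj_apply, inv_inv, map_mul, map_mul, map_inv, hφ]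
      _ = φ a := by rw [← map_inv, ← map_mul, ← map_mul]; congr 1; group
  rwa [zpow_one, hfix] at h

/-- An element `s ^ k * y` of the kernel with `k ≠ 0` would make a generator `W K` with large `K`
agree in the image with an element below it, while the conjugates by `W K` of the lower generators
commute with the lower generators. -/
theorem IsBrinFamily.injective_of_not_commute (hW : IsBrinFamily W)
    (hs : ∀ i, MulAut.conj s⁻¹ (W i) = W (i + 1))
    (hgen : Subgroup.closure (range W ∪ {s}) = ⊤) (φ : B →* Γ)
    (h01 : ¬ Commute (φ (W 0)) (φ (W 1))) : Function.Injective φ := by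
  have hnc (i : ℤ) : ¬ Commute (φ (W i)) (φ (W (i + 1))) := fun h => h01 <| by
    have h0 : W 0 = MulAut.conj (s ^ i) (W i) := by rw [conj_zpow_eq_sub hs, sub_self]
    have h1 : W 1 = MulAut.conj (s ^ i) (W (i + 1)) := by
      rw [conj_zpow_eq_sub hs, add_sub_cancel_left]
    rw [h0, h1]
    simpa only [MulAut.conj_apply, map_mul, map_inv, Commute.conj_iff] using h
  refine (injective_iff_map_eq_one φ).2 fun x hx => ?_
  obtain ⟨k, y, hy, rfl⟩ := exists_eq_zpow_mul hs hgen x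
  obtain ⟨n, hn⟩ := exists_mem_closure_image_Ioc hy
  rcases eq_or_ne k 0 with rfl | hk
  · rw [zpow_zero, one_mul] at hx ⊢
    refine hW.eq_one_of_commute_map φ hnc (2 * n) (n := n) ?_ fun j _ => hx ▸ Commute.one_left _
    convert hn using 4
    push_cast
    ring
  · exfalso
    set N := Subgroup.closure (W '' Iic (n : ℤ))
    have hyN : y ∈ N := Subgroup.closure_mono (image_mono fun j hj => hj.2) hn
    have hWn : W n ∈ N := mem_closure_image_Iic W le_rfl
    have hsk : φ (s ^ k) = (φ y)⁻¹ := eq_inv_of_mul_eq_one_left (by rwa [← map_mul])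
    have hshift (i : ℤ) : φ (W (i - k)) = φ (y⁻¹ * W i * y) := by
      rw [← conj_zpow_eq_sub hs, MulAut.conj_apply, map_mul, map_mul, map_inv, hsk]
      simp only [inv_inv, map_mul, map_inv]
    obtain ⟨K, hK, c, hc, hcK⟩ : ∃ K > (n : ℤ), ∃ c ∈ N, φ (W K) = φ c := by
      rcases hk.lt_or_gt with h | h
      · exact ⟨n - k, by lia, _, mul_mem (mul_mem (inv_mem hyN) hWn) hyN, hshift n⟩
      · refine ⟨n + k, by lia, y * W n * y⁻¹, mul_mem (mul_mem hyN hWn) (inv_mem hyN), ?_⟩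
        have := hshift (n + k)
        rw [add_sub_cancel_right] at this
        simp only [map_mul, map_inv, this]
        group
    have hcomm := hW.commute_map_of_map_eq φ hK hc hcK
      (mem_closure_image_Iic W (show (n : ℤ) - 1 ≤ n by lia)) hWn
    exact hnc (n - 1) (by rwa [sub_add_cancel])

end Injectivity

section OdometerModel

/-- Adds `e` to the coordinate `k` of a sequence which vanishes above `k`, and fixes all other
sequences.  For varying `k` these permutations and the shift form a concrete quotient of Brin's
group in which the generators `w i` and `w (i + 1)` do not commute. -/
noncomputable def addTop (k e : ℤ) (f : ℤ → ℤ) : ℤ → ℤ :=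
  open Classical in if ∀ j > k, f j = 0 then Function.update f k (f k + e) else f

theorem addTop_of_forall {k e : ℤ} {f : ℤ → ℤ} (h : ∀ j > k, f j = 0) :
    addTop k e f = Function.update f k (f k + e) :=
  if_pos h

theorem addTop_of_not_forall {k e : ℤ} {f : ℤ → ℤ} (h : ¬ ∀ j > k, f j = 0) : addTop k e f = f :=
  if_neg h

theorem addTop_zero (k : ℤ) (f : ℤ → ℤ) : addTop k 0 f = f := by
  unfold addTop
  split_ifs <;> simp

theorem addTop_add (k e e' : ℤ) (f : ℤ → ℤ) :
    addTop k (e + e') f = addTop k e (addTop k e' f) := by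
  by_cases h : ∀ j > k, f j = 0
  · have h' : ∀ j > k, Function.update f k (f k + e') j = 0 := fun j hj => by
      rw [Function.update_of_ne hj.ne', h j hj]
    rw [addTop_of_forall h, addTop_of_forall h, addTop_of_forall h', Function.update_self,
      Function.update_idem, add_comm e, add_assoc]
  · rw [addTop_of_not_forall h, addTop_of_not_forall h, addTop_of_not_forall h]

/-- The homomorphism `e ↦ addTop k e` from `ℤ` to the permutations of `ℤ → ℤ`. -/
noncomputable def addTopHom (k : ℤ) : Multiplicative ℤ →* Equiv.Perm (ℤ → ℤ) :=
  MonoidHom.toHomPerm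
    { toFun := fun e => addTop k e.toAdd
      map_one' := funext (addTop_zero k)
      map_mul' := fun e e' => funext (addTop_add k e.toAdd e'.toAdd) }

/-- The images of the generators `w k` of Brin's group in the concrete model. -/
noncomputable def incrTop (k : ℤ) : Equiv.Perm (ℤ → ℤ) :=
  addTopHom k (Multiplicative.ofAdd 1)

theorem incrTop_apply (k : ℤ) (f : ℤ → ℤ) : incrTop k f = addTop k 1 f :=
  rfl

theorem incrTop_zpow_apply (k m : ℤ) (f : ℤ → ℤ) : (incrTop k ^ m) f = addTop k m f := by
  rw [incrTop, ← map_zpow, ← ofAdd_zsmul, smul_eq_mul, mul_one]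
  rfl

theorem addTop_comp_add_one (k e : ℤ) (f : ℤ → ℤ) :
    addTop k e (fun j => f (j + 1)) = fun j => addTop (k + 1) e f (j + 1) := by
  have hiff : (∀ j > k, f (j + 1) = 0) ↔ ∀ j > k + 1, f j = 0 :=
    ⟨fun h j hj => by simpa using h (j - 1) (by lia), fun h j hj => h (j + 1) (by lia)⟩
  by_cases h : ∀ j > k + 1, f j = 0
  · rw [addTop_of_forall h, addTop_of_forall (hiff.2 h)]
    funext j
    rcases eq_or_ne j k with rfl | hj
    · rw [Function.update_self, Function.update_self]
    · rw [Function.update_of_ne hj, Function.update_of_ne (by lia)]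
  · rw [addTop_of_not_forall h, addTop_of_not_forall (hiff.not.2 h)]

/-- The image of the generator `s` of Brin's group in the concrete model. -/
def seqShift : Equiv.Perm (ℤ → ℤ) :=
  (Equiv.subRight (1 : ℤ)).arrowCongr (Equiv.refl ℤ)

theorem conj_seqShift_inv_incrTop (i : ℤ) :
    MulAut.conj seqShift⁻¹ (incrTop i) = incrTop (i + 1) := by
  rw [MulAut.conj_apply, inv_inv, mul_assoc, inv_mul_eq_iff_eq_mul]
  exact Equiv.ext fun f => addTop_comp_add_one i 1 f

theorem isBrinFamily_incrTop : IsBrinFamily incrTop := by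
  intro i j k m hi hj hm
  refine Equiv.Perm.Disjoint.commute fun f => ?_
  by_cases h : ∀ l > j, f l = 0
  · left
    have hk : ∀ l > k, f l = 0 := fun l hl => h l (hj.trans hl)
    have hfix : addTop i 1 (addTop k (-m) f) = addTop k (-m) f := by
      refine addTop_of_not_forall fun h' => hm ?_
      have := h' k hi
      rwa [addTop_of_forall hk, Function.update_self, h k hj, zero_add, neg_eq_zero] at this
    rw [MulAut.conj_apply, Equiv.Perm.mul_apply, Equiv.Perm.mul_apply, ← zpow_neg,
      incrTop_zpow_apply k (-m), incrTop_apply, hfix, ← incrTop_zpow_apply k (-m), 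
      ← Equiv.Perm.mul_apply, ← zpow_add, add_neg_cancel, zpow_zero, Equiv.Perm.one_apply]
  · exact Or.inr (addTop_of_not_forall h)

theorem not_commute_incrTop (i : ℤ) : ¬ Commute (incrTop i) (incrTop (i + 1)) := by
  intro h
  have h01 := congrFun (DFunLike.congr_fun h.eq 0) i
  have hl : incrTop i (incrTop (i + 1) 0) i = 0 := by
    rw [incrTop_apply, incrTop_apply, addTop_of_forall (f := 0) (fun _ _ => rfl),
      addTop_of_not_forall]
    · simp
    · exact fun h' => by simpa using h' (i + 1) (by simp)
  have hr : incrTop (i + 1) (incrTop i 0) i = 1 := by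
    rw [incrTop_apply, incrTop_apply, addTop_of_forall (f := 0) (k := i) (fun _ _ => rfl),
      addTop_of_forall]
    · simp
    · intro j hj
      rw [Function.update_of_ne (by lia), Pi.zero_apply]
  rw [Equiv.Perm.mul_apply, Equiv.Perm.mul_apply, hl, hr] at h01
  exact zero_ne_one h01

end OdometerModel

section BrinB

open scoped commutatorElement

/-- The generator `w i` of Brin's group. -/
def brinW (i : ℤ) : BrinB :=
  PresentedGroup.of (Sum.inl i)

/-- The generator `s` of Brin's group. -/
def brinS : BrinB :=
  PresentedGroup.of (Sum.inr ())

theorem conj_brinS_inv_brinW (i : ℤ) : MulAut.conj brinS⁻¹ (brinW i) = brinW (i + 1) := by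
  have h : PresentedGroup.mk BrinRels (fgConj (bw i) bs * (bw (i + 1))⁻¹) = 1 :=
    PresentedGroup.one_of_mem (Or.inl ⟨i, rfl⟩)
  rw [map_mul, map_inv, mul_inv_eq_one, fgConj, map_mul, map_mul, map_inv] at h
  rwa [MulAut.conj_apply, inv_inv]

theorem map_fgComm_fgConj_eq_one_iff {Γ : Type*} [Group Γ] (φ : FreeGroup BrinGen →* Γ)
    (x y z : FreeGroup BrinGen) (m : ℤ) : φ (fgComm (fgConj x (y ^ m)) z) = 1 ↔
      Commute (MulAut.conj (φ y ^ (-m)) (φ x)) (φ z) := by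
  have h : φ (fgComm (fgConj x (y ^ m)) z) = ⁅(MulAut.conj (φ y ^ (-m)) (φ x))⁻¹, (φ z)⁻¹⁆ := by
    rw [MulAut.conj_apply, commutatorElement_def]
    simp only [fgComm, fgConj, map_mul, map_inv, map_zpow, zpow_neg, inv_inv]
  rw [h, commutatorElement_eq_one_iff_commute, Commute.inv_inv_iff]

theorem isBrinFamily_brinW : IsBrinFamily brinW := by
  intro i j k m hi hj hm
  have h := (map_fgComm_fgConj_eq_one_iff (PresentedGroup.mk BrinRels) (bw i) (bw k) (bw j)
    (-m)).1 (PresentedGroup.one_of_mem (Or.inr ⟨i, j, k, -m, hi, hj, neg_ne_zero.2 hm, rfl⟩))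
  rwa [neg_neg] at h

theorem closure_range_brinW_union_brinS : Subgroup.closure (range brinW ∪ {brinS}) = ⊤ := by
  rw [← PresentedGroup.closure_range_of BrinRels]
  congr 1
  ext x
  simp only [brinW, brinS, mem_union, mem_range, mem_singleton_iff, Sum.exists, eq_comm (a := x),
    Unique.exists_iff, PUnit.default_eq_unit]

theorem exists_brinB_hom {Γ : Type*} [Group Γ] {w : ℤ → Γ} {s : Γ} (hw : IsBrinFamily w)
    (hs : ∀ i, MulAut.conj s⁻¹ (w i) = w (i + 1)) : ∃ φ : BrinB →* Γ, ∀ i, φ (brinW i) = w i := by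
  have h : ∀ r ∈ BrinRels, FreeGroup.lift (Sum.elim w fun _ => s) r = 1 := by
    rintro r (⟨i, rfl⟩ | ⟨i, j, k, m, hi, hj, hm, rfl⟩)
    · simp [fgConj, bw, bs, ← hs]
    · rw [map_fgComm_fgConj_eq_one_iff]
      simpa only [bw, FreeGroup.lift_apply_of, Sum.elim_inl] using hw hi hj (neg_ne_zero.2 hm)
  exact ⟨PresentedGroup.toGroup h, fun i => PresentedGroup.toGroup.of h⟩

theorem exists_brinB_embedding {Γ : Type*} [Group Γ] {w : ℤ → Γ} {s : Γ} (hw : IsBrinFamily w)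
    (hs : ∀ i, MulAut.conj s⁻¹ (w i) = w (i + 1)) (hnc : ¬ Commute (w 0) (w 1)) :
    ∃ φ : BrinB →* Γ, Function.Injective φ := by
  obtain ⟨φ, hφ⟩ := exists_brinB_hom hw hs
  exact ⟨φ, isBrinFamily_brinW.injective_of_not_commute conj_brinS_inv_brinW
    closure_range_brinW_union_brinS φ (by rwa [hφ, hφ])⟩

theorem not_commute_brinW (i : ℤ) : ¬ Commute (brinW i) (brinW (i + 1)) := by
  obtain ⟨φ, hφ⟩ := exists_brinB_hom isBrinFamily_incrTop conj_seqShift_inv_incrTop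
  intro h
  have := h.map φ
  rw [hφ, hφ] at this
  exact not_commute_incrTop i this

theorem not_isSolvable_brinB : ¬ Group.IsSolvable BrinB := by
  rintro ⟨⟨n, hn⟩⟩
  have h := isBrinFamily_brinW.commutatorElement_mem_iteratedCommutator (T := ⊤)
    (fun _ _ => trivial) n (i := -2 * n) le_rfl
  rw [iteratedCommutator_top, hn, Subgroup.mem_bot, commutatorElement_eq_one_iff_commute,
    Commute.inv_inv_iff] at h
  exact not_commute_brinW (-2 * n - 1) (by rwa [sub_add_cancel])

end BrinB

section Homeomorphisms

open Filter Topology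
open scoped commutatorElement

theorem ap_one (x : ℝ) : ap 1 x = x := rfl

theorem ap_mul (g h : PermR) (x : ℝ) : ap (g * h) x = ap h (ap g x) := rfl

theorem ap_inv_ap (g : PermR) (x : ℝ) : ap g⁻¹ (ap g x) = x := by
  rw [← ap_mul, mul_inv_cancel, ap_one]

theorem ap_ap_inv (g : PermR) (x : ℝ) : ap g (ap g⁻¹ x) = x := by
  rw [← ap_mul, inv_mul_cancel, ap_one]

theorem ap_ext {g h : PermR} (hgh : ∀ x, ap g x = ap h x) : g = h :=
  MulOpposite.unop_injective (Equiv.ext hgh)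

theorem ap_injective (g : PermR) : Function.Injective (ap g) := g.unop.injective

theorem ap_surjective (g : PermR) : Function.Surjective (ap g) := g.unop.surjective

theorem ap_inv_eq_iff {g : PermR} {x y : ℝ} : ap g⁻¹ x = y ↔ x = ap g y := by
  rw [← (ap_injective g).eq_iff, ap_ap_inv]

theorem ap_conj (h g : PermR) (x : ℝ) : ap (h⁻¹ * g * h) (ap h x) = ap h (ap g x) := by
  rw [ap_mul, ap_mul, ap_inv_ap]

theorem notMem_supp_iff {g : PermR} {x : ℝ} : x ∉ Supp g ↔ ap g x = x := not_not

/-- The subgroup of the permutations fixing every point of some set of the filter `l`. The filter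
`𝓟 A` gives the pointwise stabilizer of the set `A`, the filters `𝓝[≥] a` and `𝓝[≤] a` the
permutations with trivial right and left germ at `a`. -/
def fixer (l : Filter ℝ) : Subgroup PermR where
  carrier := {x | ∀ᶠ z in l, ap x z = z}
  one_mem' := Eventually.of_forall ap_one
  mul_mem' hx hy := by
    filter_upwards [hx, hy] with z hxz hyz
    rw [ap_mul, hxz, hyz]
  inv_mem' hx := hx.mono fun z hz => ap_inv_eq_iff.2 hz.symm

theorem mem_fixer {l : Filter ℝ} {x : PermR} : x ∈ fixer l ↔ ∀ᶠ z in l, ap x z = z := Iff.rfl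

theorem mem_fixer_principal {A : Set ℝ} {x : PermR} :
    x ∈ fixer (𝓟 A) ↔ ∀ z ∈ A, ap x z = z := eventually_principal

theorem ap_inv_eq_self {g : PermR} {x : ℝ} (h : ap g x = x) : ap g⁻¹ x = x :=
  ap_inv_eq_iff.2 h.symm

theorem ap_zpow_eq_self {x : PermR} {a : ℝ} (h : ap x a = a) (n : ℤ) : ap (x ^ n) a = a :=
  mem_fixer_principal.1
    (zpow_mem (mem_fixer_principal.2 fun _ hz => mem_singleton_iff.1 hz ▸ h : x ∈ fixer (𝓟 {a})) n)
    a rfl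

theorem commutatorElement_mem_fixer {l : Filter ℝ} {a m₁ m₂ : ℝ} {g h : PermR}
    (hg : ∀ᶠ z in l, ap g z = a + m₁ * (z - a)) (hh : ∀ᶠ z in l, ap h z = a + m₂ * (z - a))
    (hgl : Tendsto (ap g) l l) (hhl : Tendsto (ap h) l l) : ⁅g, h⁆ ∈ fixer l := by
  rw [mem_fixer]
  filter_upwards [hg, hh, hgl.eventually hh, hhl.eventually hg] with z hg₁ hh₁ hh₂ hg₂
  have hcomm : ap h (ap g z) = ap g (ap h z) := by rw [hh₂, hg₂, hg₁, hh₁]; ring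
  rw [commutatorElement_def, ap_mul, ap_mul, ap_mul, hcomm, ap_inv_ap, ap_inv_ap]

end Homeomorphisms

section PiecewiseLinear

open Filter Topology
open scoped commutatorElement

variable {x y : PermR} {a b c p z : ℝ}

theorem IsPL.lt (hx : IsPL x) : ap x a < ap x b ↔ a < b := hx.1.lt_iff_lt

theorem IsPL.le (hx : IsPL x) : ap x a ≤ ap x b ↔ a ≤ b := hx.1.le_iff_le

theorem IsPL.ap_of_nonpos (hx : IsPL x) (h : z ≤ 0) : ap x z = z :=
  hx.2.1 z fun hz => absurd hz.1 h.not_gt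

theorem IsPL.ap_of_one_le (hx : IsPL x) (h : 1 ≤ z) : ap x z = z :=
  hx.2.1 z fun hz => absurd hz.2 h.not_gt

theorem IsPL.mem_Ioo_of_ap_ne (hx : IsPL x) (h : ap x z ≠ z) : z ∈ Ioo 0 1 :=
  of_not_not fun hz => h (hx.2.1 z hz)

theorem IsPL.continuous (hx : IsPL x) : Continuous (ap x) :=
  hx.1.monotone.continuous_of_surjective (ap_surjective x)

theorem IsPL.isClosed_fixedPoints (hx : IsPL x) : IsClosed {t | ap x t = t} :=
  isClosed_eq hx.continuous continuous_id

theorem IsPL.ap_mem_Ioo_iff (hx : IsPL x) : ap x z ∈ Ioo (0 : ℝ) 1 ↔ z ∈ Ioo (0 : ℝ) 1 := by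
  rw [← hx.ap_of_nonpos le_rfl, ← hx.ap_of_one_le le_rfl, mem_Ioo, hx.lt, hx.lt,
    hx.ap_of_nonpos le_rfl, hx.ap_of_one_le le_rfl, mem_Ioo]

theorem IsPL.tendsto_nhdsGE (hx : IsPL x) (a : ℝ) :
    Tendsto (ap x) (𝓝[≥] a) (𝓝[≥] (ap x a)) :=
  hx.continuous.continuousWithinAt.tendsto_nhdsWithin fun _ hz => hx.le.2 hz

theorem IsPL.tendsto_nhdsLE (hx : IsPL x) (a : ℝ) :
    Tendsto (ap x) (𝓝[≤] a) (𝓝[≤] (ap x a)) :=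
  hx.continuous.continuousWithinAt.tendsto_nhdsWithin fun _ hz => hx.le.2 hz

theorem isLocallyAffineAt_of_eventually_eq_self (h : ∀ᶠ z in 𝓝 p, ap x z = z) :
    IsLocallyAffineAt x p :=
  ⟨1, 0, h.mono fun z hz => by rw [hz, one_mul, add_zero]⟩

theorem IsLocallyAffineAt.mul (hx : IsLocallyAffineAt x p) (hy : IsLocallyAffineAt y (ap x p))
    (hc : Continuous (ap x)) : IsLocallyAffineAt (x * y) p := by
  obtain ⟨m, b, hm⟩ := hx
  obtain ⟨m', b', hm'⟩ := hy
  refine ⟨m' * m, m' * b + b', ?_⟩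
  filter_upwards [hm, hc.continuousAt.eventually hm'] with z hxz hyz
  rw [ap_mul, hyz, hxz]
  ring

theorem IsLocallyAffineAt.inv (hx : IsLocallyAffineAt x p) (hc : Continuous (ap x⁻¹)) :
    IsLocallyAffineAt x⁻¹ (ap x p) := by
  obtain ⟨m, b, hmb⟩ := hx
  have hinv : ∀ᶠ z in 𝓝 (ap x p), z = m * ap x⁻¹ z + b := by
    rw [← ap_inv_ap x p] at hmb
    simpa only [ap_ap_inv] using hc.continuousAt.eventually hmb
  have hm : m ≠ 0 := by
    rintro rfl
    obtain ⟨z, hz, hne⟩ := ((hinv.filter_mono nhdsWithin_le_nhds).and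
      (self_mem_nhdsWithin (s := {ap x p}ᶜ))).exists
    have hp := hinv.self_of_nhds
    rw [zero_mul, zero_add] at hz hp
    exact hne (hz.trans hp.symm)
  refine ⟨m⁻¹, -(m⁻¹ * b), hinv.mono fun z hz => ?_⟩
  field_simp
  linarith

theorem affine_eq_of_eventually_eq {m b m' b' : ℝ}
    (h : ∀ᶠ z in 𝓝 p, m * z + b = m' * z + b') : m = m' ∧ b = b' := by
  obtain ⟨z, hz, hne⟩ := ((h.filter_mono nhdsWithin_le_nhds).and
    (self_mem_nhdsWithin (s := {p}ᶜ))).exists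
  have hp := h.self_of_nhds
  have hm : (m - m') * (z - p) = 0 := by linarith
  obtain rfl : m = m' :=
    sub_eq_zero.1 ((mul_eq_zero.1 hm).resolve_right (sub_ne_zero.2 hne))
  exact ⟨rfl, add_left_cancel hp⟩

theorem ap_eq_self_of_affineOn {s : Set ℝ} {m : ℝ} (h : ∀ z ∈ s, ap x z = m * z + c)
    (ha : a ∈ s) (hb : b ∈ s) (hab : a ≠ b) (hxa : ap x a = a) (hxb : ap x b = b) :
    ∀ z ∈ s, ap x z = z := by
  have ha' := h a ha
  have hb' := h b hb
  have hm : (m - 1) * (a - b) = 0 := by linarith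
  obtain rfl : m = 1 :=
    sub_eq_zero.1 ((mul_eq_zero.1 hm).resolve_right (sub_ne_zero.2 hab))
  intro z hz
  rw [h z hz]
  linarith

theorem exists_affineOn_Ioo (h : ∀ z ∈ Ioo a b, IsLocallyAffineAt x z) :
    ∃ m c : ℝ, ∀ z ∈ Ioo a b, ap x z = m * z + c := by
  rcases (Ioo a b).eq_empty_or_nonempty with hempty | ⟨p, hp⟩
  · exact ⟨0, 0, by simp [hempty]⟩
  set P : ℝ → ℝ → Prop := fun y z => ∃ m c : ℝ, (∀ᶠ t in 𝓝 y, ap x t = m * t + c) ∧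
    ∀ᶠ t in 𝓝 z, ap x t = m * t + c
  have htrans {q r s : ℝ} (hqr : P q r) (hrs : P r s) : P q s := by
    obtain ⟨m, c, hq, hr⟩ := hqr
    obtain ⟨m', c', hr', hs⟩ := hrs
    obtain ⟨rfl, rfl⟩ := affine_eq_of_eventually_eq
      (hr.mp (hr'.mono fun t ht' ht => ht.symm.trans ht'))
    exact ⟨m, c, hq, hs⟩
  have hall : ∀ z ∈ Ioo a b, P p z := fun z hz =>
    isPreconnected_Ioo.induction₂ P
      (fun q hq => by
        obtain ⟨m, c, hmc⟩ := h q hq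
        exact (hmc.eventually_nhds.mono fun r hr => ⟨m, c, hmc, hr⟩).filter_mono
          nhdsWithin_le_nhds)
      (fun _ _ _ _ _ _ => htrans) (fun _ _ _ _ ⟨m, c, h₁, h₂⟩ => ⟨m, c, h₂, h₁⟩) hp hz
  obtain ⟨m, c, hmc⟩ := h p hp
  refine ⟨m, c, fun z hz => ?_⟩
  obtain ⟨m', c', hp', hz'⟩ := hall z hz
  obtain ⟨rfl, rfl⟩ := affine_eq_of_eventually_eq
    (hmc.mp (hp'.mono fun t ht' ht => ht.symm.trans ht'))
  exact hz'.self_of_nhds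

theorem IsPL.exists_affineOn_Icc (hx : IsPL x) (hab : a < b)
    (h : ∀ z ∈ Ioo a b, IsLocallyAffineAt x z) :
    ∃ m > 0, ∃ c : ℝ, ∀ z ∈ Icc a b, ap x z = m * z + c := by
  obtain ⟨m, c, hmc⟩ := exists_affineOn_Ioo h
  have hcl : ∀ z ∈ Icc a b, ap x z = m * z + c := by
    rw [← closure_Ioo hab.ne]
    exact closure_minimal hmc (isClosed_eq hx.continuous (by fun_prop))
  have hlt := hx.lt.2 hab
  rw [hcl a (left_mem_Icc.2 hab.le), hcl b (right_mem_Icc.2 hab.le), add_lt_add_iff_right,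
    ← sub_pos, ← mul_sub] at hlt
  exact ⟨m, pos_of_mul_pos_left hlt (sub_pos.2 hab).le, c, hcl⟩

theorem IsPL.eventually_isLocallyAffineAt (hx : IsPL x) (p : ℝ) :
    ∀ᶠ z in 𝓝[≠] p, IsLocallyAffineAt x z := by
  have hfin : (Breakpoints x ∪ {0, 1}).Finite := hx.2.2.union (by simp)
  have hnhds : ∀ᶠ z in 𝓝 p, z ∉ (Breakpoints x ∪ {0, 1}) \ {p} :=
    (hfin.subset sdiff_subset).isClosed.compl_mem_nhds (by simp)
  filter_upwards [nhdsWithin_le_nhds hnhds, self_mem_nhdsWithin] with z hz hzp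
  replace hz : z ∉ Breakpoints x ∪ {0, 1} := fun h => hz ⟨h, hzp⟩
  rcases lt_trichotomy z 0 with h0 | rfl | h0
  · exact isLocallyAffineAt_of_eventually_eq_self
      ((eventually_lt_nhds h0).mono fun t ht => hx.ap_of_nonpos ht.le)
  · simp at hz
  rcases lt_trichotomy z 1 with h1 | rfl | h1
  · exact of_not_not fun h => hz (Or.inl ⟨⟨h0, h1⟩, h⟩)
  · simp at hz
  · exact isLocallyAffineAt_of_eventually_eq_self
      ((eventually_gt_nhds h1).mono fun t ht => hx.ap_of_one_le ht.le)

theorem IsPL.exists_affineOn_right (hx : IsPL x) (a : ℝ) :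
    ∃ e > a, ∃ m > 0, ∃ c : ℝ, ∀ z ∈ Icc a e, ap x z = m * z + c := by
  obtain ⟨e, he, hU⟩ := mem_nhdsGT_iff_exists_Ioo_subset.1
    ((hx.eventually_isLocallyAffineAt a).filter_mono (nhdsGT_le_nhdsNE a))
  exact ⟨e, he, hx.exists_affineOn_Icc he hU⟩

theorem IsPL.exists_affineOn_left (hx : IsPL x) (a : ℝ) :
    ∃ e < a, ∃ m > 0, ∃ c : ℝ, ∀ z ∈ Icc e a, ap x z = m * z + c := by
  obtain ⟨e, he, hU⟩ := mem_nhdsLT_iff_exists_Ioo_subset.1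
    ((hx.eventually_isLocallyAffineAt a).filter_mono (nhdsLT_le_nhdsNE a))
  exact ⟨e, he, hx.exists_affineOn_Icc he hU⟩

theorem mem_fixer_nhdsGE : x ∈ fixer (𝓝[≥] a) ↔ ∃ e > a, ∀ z ∈ Icc a e, ap x z = z :=
  mem_nhdsGE_iff_exists_Icc_subset

theorem mem_fixer_nhdsLE : x ∈ fixer (𝓝[≤] a) ↔ ∃ e < a, ∀ z ∈ Icc e a, ap x z = z :=
  mem_nhdsLE_iff_exists_Icc_subset

theorem ap_eq_self_of_mem_fixer_nhdsGE (h : x ∈ fixer (𝓝[≥] a)) : ap x a = a :=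
  (mem_fixer.1 h).self_of_nhdsWithin self_mem_Ici

theorem ap_eq_self_of_mem_fixer_nhdsLE (h : x ∈ fixer (𝓝[≤] a)) : ap x a = a :=
  (mem_fixer.1 h).self_of_nhdsWithin self_mem_Iic

theorem IsPL.commutatorElement_mem_fixer_nhdsGE (hx : IsPL x) (hy : IsPL y) (hxa : ap x a = a)
    (hya : ap y a = a) : ⁅x, y⁆ ∈ fixer (𝓝[≥] a) := by
  have hslope {g : PermR} (hg : IsPL g) (hga : ap g a = a) :
      ∃ m : ℝ, ∀ᶠ z in 𝓝[≥] a, ap g z = a + m * (z - a) := by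
    obtain ⟨e, he, m, -, c, hmc⟩ := hg.exists_affineOn_right a
    have ha := hmc a (left_mem_Icc.2 he.le)
    exact ⟨m, mem_of_superset (Icc_mem_nhdsGE he) fun z hz => by
      rw [mem_ofPred_eq, hmc z hz]; linarith⟩
  obtain ⟨m₁, h₁⟩ := hslope hx hxa
  obtain ⟨m₂, h₂⟩ := hslope hy hya
  exact commutatorElement_mem_fixer h₁ h₂ (by simpa only [hxa] using hx.tendsto_nhdsGE a)
    (by simpa only [hya] using hy.tendsto_nhdsGE a)

theorem IsPL.commutatorElement_mem_fixer_nhdsLE (hx : IsPL x) (hy : IsPL y) (hxa : ap x a = a)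
    (hya : ap y a = a) : ⁅x, y⁆ ∈ fixer (𝓝[≤] a) := by
  have hslope {g : PermR} (hg : IsPL g) (hga : ap g a = a) :
      ∃ m : ℝ, ∀ᶠ z in 𝓝[≤] a, ap g z = a + m * (z - a) := by
    obtain ⟨e, he, m, -, c, hmc⟩ := hg.exists_affineOn_left a
    have ha := hmc a (right_mem_Icc.2 he.le)
    exact ⟨m, mem_of_superset (Icc_mem_nhdsLE he) fun z hz => by
      rw [mem_ofPred_eq, hmc z hz]; linarith⟩
  obtain ⟨m₁, h₁⟩ := hslope hx hxa
  obtain ⟨m₂, h₂⟩ := hslope hy hya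
  exact commutatorElement_mem_fixer h₁ h₂ (by simpa only [hxa] using hx.tendsto_nhdsLE a)
    (by simpa only [hya] using hy.tendsto_nhdsLE a)

theorem IsPL.exists_forall_Ioc_ap_ne (hx : IsPL x) (ha : ap x a = a)
    (h : x ∉ fixer (𝓝[≥] a)) : ∃ e > a, ∀ z ∈ Ioc a e, ap x z ≠ z := by
  obtain ⟨e, he, m, -, c, hmc⟩ := hx.exists_affineOn_right a
  exact ⟨e, he, fun z hz hxz => h <| mem_fixer_nhdsGE.2 ⟨e, he, ap_eq_self_of_affineOn hmc
    (left_mem_Icc.2 he.le) (Ioc_subset_Icc_self hz) hz.1.ne ha hxz⟩⟩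

theorem IsPL.exists_forall_Ico_ap_ne (hx : IsPL x) (ha : ap x a = a)
    (h : x ∉ fixer (𝓝[≤] a)) : ∃ e < a, ∀ z ∈ Ico e a, ap x z ≠ z := by
  obtain ⟨e, he, m, -, c, hmc⟩ := hx.exists_affineOn_left a
  exact ⟨e, he, fun z hz hxz => h <| mem_fixer_nhdsLE.2 ⟨e, he, ap_eq_self_of_affineOn hmc
    (right_mem_Icc.2 he.le) (Ico_subset_Icc_self hz) hz.2.ne' ha hxz⟩⟩

theorem mem_breakpoints (hp : p ∈ Ioo 0 1) (hl : x ∈ fixer (𝓝[≤] p))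
    (hr : x ∉ fixer (𝓝[≥] p)) : p ∈ Breakpoints x := by
  refine ⟨hp, fun ⟨m, c, hmc⟩ => hr ?_⟩
  obtain ⟨ε, hε, hball⟩ := Metric.eventually_nhds_iff_ball.1 hmc
  have hfix := ap_eq_self_of_mem_fixer_nhdsLE hl
  have hfixl : ∀ᶠ z in 𝓝[<] p, ap x z = z :=
    (mem_fixer.1 hl).filter_mono (nhdsWithin_mono p Iio_subset_Iic_self)
  obtain ⟨q, ⟨hq, hqε⟩, hqp⟩ := ((hfixl.and
    (mem_nhdsWithin_of_mem_nhds (Metric.ball_mem_nhds p hε))).and self_mem_nhdsWithin).exists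
  exact mem_fixer.2 (mem_nhdsWithin_of_mem_nhds (mem_of_superset (Metric.ball_mem_nhds p hε)
    (ap_eq_self_of_affineOn hball (Metric.mem_ball_self hε) hqε hqp.ne' hfix hq)))

theorem mem_fixer_of_forall_Ioo (h : ∀ z ∈ Ioo a b, ap x z = z) (hp : p ∈ Ioo a b) :
    x ∈ fixer (𝓝 p) :=
  mem_fixer.2 (mem_of_superset (Ioo_mem_nhds hp.1 hp.2) h)

theorem fixer_anti {l l' : Filter ℝ} (h : l ≤ l') : fixer l' ≤ fixer l :=
  fun _ hx => (mem_fixer.1 hx).filter_mono h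

theorem IsPL.eventually_ap_ne_or_mem_fixer (hx : IsPL x) (p : ℝ) :
    ∀ᶠ z in 𝓝[≠] p, ap x z ≠ z ∨ x ∈ fixer (𝓝 z) := by
  by_cases hp : ap x p = p
  swap
  · exact mem_of_superset (mem_nhdsWithin_of_mem_nhds
      (hx.isClosed_fixedPoints.isOpen_compl.mem_nhds hp)) fun z hz => Or.inl hz
  rw [← nhdsLT_sup_nhdsGT, eventually_sup]
  constructor
  · by_cases hl : x ∈ fixer (𝓝[≤] p)
    · obtain ⟨e, he, hfix⟩ := mem_fixer_nhdsLE.1 hl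
      exact mem_of_superset (Ioo_mem_nhdsLT he) fun z hz =>
        Or.inr (mem_fixer_of_forall_Ioo (fun t ht => hfix t (Ioo_subset_Icc_self ht)) hz)
    · obtain ⟨e, he, hne⟩ := hx.exists_forall_Ico_ap_ne hp hl
      exact mem_of_superset (Ico_mem_nhdsLT he) fun z hz => Or.inl (hne z hz)
  · by_cases hr : x ∈ fixer (𝓝[≥] p)
    · obtain ⟨e, he, hfix⟩ := mem_fixer_nhdsGE.1 hr
      exact mem_of_superset (Ioo_mem_nhdsGT he) fun z hz =>
        Or.inr (mem_fixer_of_forall_Ioo (fun t ht => hfix t (Ioo_subset_Icc_self ht)) hz)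
    · obtain ⟨e, he, hne⟩ := hx.exists_forall_Ioc_ap_ne hp hr
      exact mem_of_superset (Ioc_mem_nhdsGT he) fun z hz => Or.inl (hne z hz)

theorem IsPL.finite_fixed_notMem_fixer (hx : IsPL x) :
    {a | ap x a = a ∧ x ∉ fixer (𝓝 a)}.Finite := by
  have hIcc : {a | ap x a = a ∧ x ∉ fixer (𝓝 a)} ⊆ Icc 0 1 := by
    refine fun a ha => ⟨le_of_not_gt fun h => ha.2 ?_, le_of_not_gt fun h => ha.2 ?_⟩
    · exact mem_fixer_of_forall_Ioo (fun z hz => hx.ap_of_nonpos hz.2.le) ⟨sub_one_lt a, h⟩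
    · exact mem_fixer_of_forall_Ioo (fun z hz => hx.ap_of_one_le hz.1.le) ⟨h, lt_add_one a⟩
  by_contra hinf
  obtain ⟨p, -, hp⟩ := Set.Infinite.exists_accPt_of_subset_isCompact hinf isCompact_Icc hIcc
  refine accPt_iff_frequently_nhdsNE.1 hp ((hx.eventually_ap_ne_or_mem_fixer p).mono ?_)
  rintro z (hz | hz) ⟨hfix, hnot⟩
  exacts [hz hfix, hnot hz]

/-- `L` is the last point of `(-∞, z]` such that `x` is the identity on a left neighbourhood of it;
as `L` is not a point of local identity, `x` has a breakpoint at `L` if `L` lies in `(0, 1)`. -/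
structure IsLastLeftTrivial (x : PermR) (z L : ℝ) : Prop where
  le : L ≤ z
  mem_left : x ∈ fixer (𝓝[≤] L)
  notMem_right : x ∉ fixer (𝓝[≥] L)
  notMem_left : ∀ y ∈ Ioc L z, x ∉ fixer (𝓝[≤] y)

theorem IsLastLeftTrivial.mem_breakpoints {L : ℝ} (h : IsLastLeftTrivial x z L)
    (hL : L ∈ Ioo 0 1) : L ∈ Breakpoints x :=
  PLPaper.mem_breakpoints hL h.mem_left h.notMem_right

theorem IsLastLeftTrivial.notMem_right_of_mem_Ico {L : ℝ} (h : IsLastLeftTrivial x z L)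
    (ha : a ∈ Ico L z) : x ∉ fixer (𝓝[≥] a) := fun hr => by
  obtain ⟨e, he, hfix⟩ := mem_fixer_nhdsGE.1 hr
  have hmin : a < min e z := lt_min he ha.2
  exact h.notMem_left _ ⟨ha.1.trans_lt hmin, min_le_right _ _⟩ <| mem_fixer_nhdsLE.2
    ⟨_, hmin, fun t ht => hfix t ⟨ht.1, ht.2.trans (min_le_left _ _)⟩⟩

/-- Near `sSup {y ≤ z | x ∈ fixer (𝓝[≤] y)}` the map `x` is affine on the left and has two fixed
points there, so the supremum is attained. -/
theorem IsPL.exists_isLastLeftTrivial (hx : IsPL x) (h0 : 0 ≤ z) (hz : x ∉ fixer (𝓝[≥] z)) :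
    ∃ L, 0 ≤ L ∧ IsLastLeftTrivial x z L := by
  set A := {y | y ≤ z ∧ x ∈ fixer (𝓝[≤] y)}
  have h0A : (0 : ℝ) ∈ A :=
    ⟨h0, mem_of_superset self_mem_nhdsWithin fun t ht => hx.ap_of_nonpos ht⟩
  have hbdd : BddAbove A := ⟨z, fun t ht => ht.1⟩
  have hleft : x ∈ fixer (𝓝[≤] (sSup A)) := by
    obtain ⟨e, he, m, -, c, hmc⟩ := hx.exists_affineOn_left (sSup A)
    obtain ⟨y, hyA, hey⟩ := exists_lt_of_lt_csSup ⟨0, h0A⟩ he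
    obtain ⟨e', he', hfix⟩ := mem_fixer_nhdsLE.1 hyA.2
    have hyL : y ≤ sSup A := le_csSup hbdd hyA
    have hlt : max e e' < y := max_lt hey he'
    exact mem_fixer_nhdsLE.2 ⟨e, he, ap_eq_self_of_affineOn hmc ⟨hey.le, hyL⟩
      ⟨le_max_left _ _, hlt.le.trans hyL⟩ hlt.ne' (hfix y ⟨he'.le, le_rfl⟩)
      (hfix _ ⟨le_max_right _ _, hlt.le⟩)⟩
  have hle : sSup A ≤ z := csSup_le ⟨0, h0A⟩ fun t ht => ht.1
  refine ⟨sSup A, le_csSup hbdd h0A, hle, hleft, fun hr => ?_, fun y hy h =>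
    (le_csSup hbdd ⟨hy.2, h⟩).not_gt hy.1⟩
  obtain ⟨e, he, hfix⟩ := mem_fixer_nhdsGE.1 hr
  have hlt : sSup A < z := hle.lt_of_ne fun h => hz (h ▸ hr)
  have hmin : sSup A < min e z := lt_min he hlt
  exact (le_csSup hbdd ⟨min_le_right e z, mem_fixer_nhdsLE.2
    ⟨_, hmin, fun t ht => hfix t ⟨ht.1, ht.2.trans (min_le_left _ _)⟩⟩⟩).not_gt hmin

end PiecewiseLinear

section Orbitals

open Filter Topology

variable {x : PermR} {a b c d z : ℝ}

/-- The interval `(a, b)` is a connected component of the set `E`. -/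
def IsComponent (E : Set ℝ) (a b : ℝ) : Prop :=
  a < b ∧ Ioo a b ⊆ E ∧ a ∉ E ∧ b ∉ E

theorem exists_isComponent {E : Set ℝ} (hE : IsOpen E) (hcd : E ⊆ Ioo c d) (hz : z ∈ E) :
    ∃ a b, IsComponent E a b ∧ z ∈ Ioo a b := by
  set A := Eᶜ ∩ Iic z
  set B := Eᶜ ∩ Ici z
  have hAb : BddAbove A := ⟨z, fun t ht => ht.2⟩
  have hBb : BddBelow B := ⟨z, fun t ht => ht.2⟩
  have hA : sSup A ∈ A := (hE.isClosed_compl.inter isClosed_Iic).csSup_mem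
    ⟨c, fun h => (hcd h).1.false, (hcd hz).1.le⟩ hAb
  have hB : sInf B ∈ B := (hE.isClosed_compl.inter isClosed_Ici).csInf_mem
    ⟨d, fun h => (hcd h).2.false, (hcd hz).2.le⟩ hBb
  have ha : sSup A < z := lt_of_le_of_ne hA.2 fun h => hA.1 (h ▸ hz)
  have hb : z < sInf B := lt_of_le_of_ne hB.2 fun h => hB.1 (h ▸ hz)
  refine ⟨sSup A, sInf B, ⟨ha.trans hb, fun t ht => by_contra fun htE => ?_, hA.1, hB.1⟩, ha, hb⟩
  rcases le_total t z with h | h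
  · exact (le_csSup hAb ⟨htE, h⟩).not_gt ht.1
  · exact (csInf_le hBb ⟨htE, h⟩).not_gt ht.2

theorem IsComponent.le_of_Ioo_subset {E : Set ℝ} (h : IsComponent E a b) (hs : Ioo c d ⊆ E)
    (hz : z ∈ Ioo a b) (hz' : z ∈ Ioo c d) : a ≤ c ∧ d ≤ b :=
  ⟨not_lt.1 fun hc => h.2.2.1 (hs ⟨hc, hz.1.trans hz'.2⟩),
    not_lt.1 fun hc => h.2.2.2 (hs ⟨hz'.1.trans hz.2, hc⟩)⟩

theorem IsComponent.unique {E : Set ℝ} (h : IsComponent E a b) (h' : IsComponent E c d)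
    (hz : z ∈ Ioo a b) (hz' : z ∈ Ioo c d) : a = c ∧ b = d := by
  obtain ⟨hac, hdb⟩ := h.le_of_Ioo_subset h'.2.1 hz hz'
  obtain ⟨hca, hbd⟩ := h'.le_of_Ioo_subset h.2.1 hz' hz
  exact ⟨hac.antisymm hca, hbd.antisymm hdb⟩

theorem IsPL.exists_orbital (hx : IsPL x) (hz : ap x z ≠ z) :
    ∃ a b, IsOrbital x a b ∧ z ∈ Ioo a b :=
  exists_isComponent hx.isClosed_fixedPoints.isOpen_compl (fun _ ht => hx.mem_Ioo_of_ap_ne ht) hz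

theorem IsOrbital.ap_left (h : IsOrbital x a b) : ap x a = a := notMem_supp_iff.1 h.2.2.1

theorem IsOrbital.ap_right (h : IsOrbital x a b) : ap x b = b := notMem_supp_iff.1 h.2.2.2

theorem IsOrbital.ap_ne (h : IsOrbital x a b) (hz : z ∈ Ioo a b) : ap x z ≠ z := h.2.1 hz

theorem IsOrbital.left_eq (h : IsOrbital x a b) (hz : z ∈ Ioo a b) (hxc : ap x c = c)
    (hcz : ∀ t ∈ Ioc c z, ap x t ≠ t) (hlt : c < z) : a = c :=
  eq_of_le_of_not_lt (le_of_not_gt fun hc => hcz a ⟨hc, hz.1.le⟩ h.ap_left) fun hc =>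
    h.ap_ne ⟨hc, hlt.trans hz.2⟩ hxc

theorem IsOrbital.right_eq (h : IsOrbital x a b) (hz : z ∈ Ioo a b) (hxc : ap x c = c)
    (hcz : ∀ t ∈ Ico z c, ap x t ≠ t) (hlt : z < c) : b = c :=
  eq_of_le_of_not_lt (le_of_not_gt fun hc => h.ap_ne ⟨hz.1.trans hlt, hc⟩ hxc) fun hc =>
    hcz b ⟨hz.2.le, hc⟩ h.ap_right

theorem IsPL.exists_orbital_right (hx : IsPL x) (ha : ap x a = a) (h : x ∉ fixer (𝓝[≥] a)) :
    ∃ b, IsOrbital x a b := by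
  obtain ⟨e, he, hne⟩ := hx.exists_forall_Ioc_ap_ne ha h
  obtain ⟨a', b, hab, hmem⟩ := hx.exists_orbital (hne e ⟨he, le_rfl⟩)
  exact ⟨b, hab.left_eq hmem ha hne he ▸ hab⟩

theorem IsPL.exists_orbital_left (hx : IsPL x) (hb : ap x b = b) (h : x ∉ fixer (𝓝[≤] b)) :
    ∃ a, IsOrbital x a b := by
  obtain ⟨e, he, hne⟩ := hx.exists_forall_Ico_ap_ne hb h
  obtain ⟨a, b', hab, hmem⟩ := hx.exists_orbital (hne e ⟨le_rfl, he⟩)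
  exact ⟨a, hab.right_eq hmem hb hne he ▸ hab⟩

theorem IsOrbital.notMem_fixer_nhdsGE (h : IsOrbital x a b) : x ∉ fixer (𝓝[≥] a) := fun hx => by
  have hIoo : ∀ᶠ z in 𝓝[>] a, z ∈ Ioo a b := Ioo_mem_nhdsGT h.1
  obtain ⟨z, hz, hxz⟩ := (hIoo.and (fixer_anti (nhdsWithin_mono a Ioi_subset_Ici_self) hx)).exists
  exact h.ap_ne hz hxz

theorem IsOrbital.conj (h : IsOrbital x a b) {g : PermR} (hg : IsPL g) :
    IsOrbital (g⁻¹ * x * g) (ap g a) (ap g b) := by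
  refine ⟨hg.lt.2 h.1, fun z hz => ?_, ?_, ?_⟩
  · obtain ⟨t, rfl⟩ := ap_surjective g z
    rw [Supp, mem_ofPred_eq, ap_conj]
    exact (ap_injective g).ne (h.ap_ne ⟨hg.lt.1 hz.1, hg.lt.1 hz.2⟩)
  · rw [notMem_supp_iff, ap_conj, h.ap_left]
  · rw [notMem_supp_iff, ap_conj, h.ap_right]

end Orbitals

section Groups

open Filter Topology
open scoped commutatorElement

variable {G H K : Subgroup PermR} {X : Set PermR} {x y : PermR} {a b t z : ℝ}

theorem breakpoints_one : Breakpoints 1 = ∅ :=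
  eq_empty_of_forall_notMem fun _ hz =>
    hz.2 (isLocallyAffineAt_of_eventually_eq_self (Eventually.of_forall ap_one))

theorem IsPL.breakpoints_mul_subset (hx : IsPL x) :
    Breakpoints (x * y) ⊆ Breakpoints x ∪ ap x ⁻¹' Breakpoints y := fun z hz => by
  by_contra! h
  exact hz.2 (IsLocallyAffineAt.mul (of_not_not fun hn => h (Or.inl ⟨hz.1, hn⟩))
    (of_not_not fun hn => h (Or.inr ⟨hx.ap_mem_Ioo_iff.2 hz.1, hn⟩)) hx.continuous)

theorem IsPL.breakpoints_inv_subset (hx : IsPL x) :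
    Breakpoints x⁻¹ ⊆ ap x '' Breakpoints x := fun z hz => by
  obtain ⟨t, rfl⟩ := ap_surjective x z
  refine mem_image_of_mem _ ⟨hx.ap_mem_Ioo_iff.1 hz.1, fun ht => hz.2 (ht.inv ?_)⟩
  set e := hx.1.orderIsoOfSurjective _ (ap_surjective x)
  exact e.symm.continuous.congr fun s => (ap_inv_eq_iff.2 (e.apply_symm_apply s).symm).symm

/-- The group PL₊(I), as a group of permutations of `ℝ`. -/
def plHomeo : Subgroup PermR where
  carrier := {x | IsPL x}
  one_mem' := ⟨strictMono_id, fun z _ => ap_one z, by simp only [breakpoints_one, finite_empty]⟩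
  mul_mem' := fun {x y} hx hy => ⟨hy.1.comp hx.1,
    fun z hz => by rw [ap_mul, hx.2.1 z hz, hy.2.1 z hz],
    (hx.2.2.union (hy.2.2.preimage (ap_injective x).injOn)).subset hx.breakpoints_mul_subset⟩
  inv_mem' := fun {x} hx => ⟨fun u v huv => by
      rwa [← ap_ap_inv x u, ← ap_ap_inv x v, hx.lt] at huv,
    fun z hz => ap_inv_eq_self (hx.2.1 z hz), (hx.2.2.image _).subset hx.breakpoints_inv_subset⟩

theorem IsPL.inv (hx : IsPL x) : IsPL x⁻¹ := plHomeo.inv_mem hx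

theorem IsPL.zpow (hx : IsPL x) (n : ℤ) : IsPL (x ^ n) := plHomeo.zpow_mem hx n

theorem exists_eq_ap_of_mem_breakpoints (hPL : ∀ g ∈ G, IsPL g) (hX : Subgroup.closure X = G)
    (hx : x ∈ G) (hz : z ∈ Breakpoints x) : ∃ p ∈ BreakSet X, ∃ g ∈ G, z = ap g p := by
  rw [← hX] at hx
  induction hx using Subgroup.closure_induction generalizing z with
  | mem x hx => exact ⟨z, mem_biUnion hx hz, 1, one_mem _, rfl⟩
  | one => simp [breakpoints_one] at hz
  | mul x y hx hy ihx ihy =>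
    rw [hX] at hx
    rcases (hPL x hx).breakpoints_mul_subset hz with h | h
    · exact ihx h
    · obtain ⟨p, hp, g, hg, hgp⟩ := ihy h
      exact ⟨p, hp, g * x⁻¹, mul_mem hg (inv_mem hx), by rw [ap_mul, ← hgp, ap_inv_ap]⟩
  | inv x hx ihx =>
    rw [hX] at hx
    obtain ⟨t, ht, rfl⟩ := (hPL x hx).breakpoints_inv_subset hz
    obtain ⟨p, hp, g, hg, rfl⟩ := ihx ht
    exact ⟨p, hp, g * x, mul_mem hg hx, by rw [ap_mul]⟩

theorem finite_breakSet (hX : X.Finite) (h : ∀ x ∈ X, IsPL x) : (BreakSet X).Finite :=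
  hX.biUnion fun x hx => (h x hx).2.2

theorem commutator_le_fixer_nhdsGE (hK : ∀ k ∈ K, IsPL k) (hfix : ∀ k ∈ K, ap k a = a) :
    ⁅K, K⁆ ≤ fixer (𝓝[≥] a) :=
  Subgroup.commutator_le.2 fun u hu v hv =>
    (hK u hu).commutatorElement_mem_fixer_nhdsGE (hK v hv) (hfix u hu) (hfix v hv)

theorem commutator_le_fixer_nhdsLE (hK : ∀ k ∈ K, IsPL k) (hfix : ∀ k ∈ K, ap k a = a) :
    ⁅K, K⁆ ≤ fixer (𝓝[≤] a) :=
  Subgroup.commutator_le.2 fun u hu v hv =>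
    (hK u hu).commutatorElement_mem_fixer_nhdsLE (hK v hv) (hfix u hu) (hfix v hv)

theorem ap_eq_self_of_isGLB_orbit (hH : ∀ h ∈ H, IsPL h)
    (ht : IsGLB ((fun h => ap h z) '' (H : Set PermR)) t) : ∀ h ∈ H, ap h t = t := by
  have hle : ∀ h ∈ H, ap h t ≤ t := by
    refine fun h hh => ht.2 ?_
    rintro _ ⟨k, hk, rfl⟩
    rw [← (hH _ (inv_mem hh)).le, ap_inv_ap]
    exact ht.1 ⟨k * h⁻¹, mul_mem hk (inv_mem hh), ap_mul _ _ _⟩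
  intro h hh
  refine (hle h hh).antisymm ?_
  rw [← (hH _ (inv_mem hh)).le, ap_inv_ap]
  exact hle _ (inv_mem hh)

theorem ap_eq_self_of_isLUB_orbit (hH : ∀ h ∈ H, IsPL h)
    (ht : IsLUB ((fun h => ap h z) '' (H : Set PermR)) t) : ∀ h ∈ H, ap h t = t := by
  have hle : ∀ h ∈ H, t ≤ ap h t := by
    refine fun h hh => ht.2 ?_
    rintro _ ⟨k, hk, rfl⟩
    rw [← (hH _ (inv_mem hh)).le, ap_inv_ap]
    exact ht.1 ⟨k * h⁻¹, mul_mem hk (inv_mem hh), ap_mul _ _ _⟩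
  intro h hh
  refine le_antisymm ?_ (hle h hh)
  rw [← (hH _ (inv_mem hh)).le, ap_inv_ap]
  exact hle _ (inv_mem hh)

theorem exists_ap_lt (hH : ∀ h ∈ H, IsPL h) (hmove : ∀ t ∈ Ioo a b, ∃ h ∈ H, ap h t ≠ t)
    (hz : z < b) (ha : ∀ h ∈ H, a ≤ ap h z) {c : ℝ} (hc : a < c) : ∃ h ∈ H, ap h z < c := by
  by_contra! hle
  have hmem : z ∈ (fun h => ap h z) '' (H : Set PermR) := ⟨1, one_mem _, rfl⟩
  have hglb := isGLB_csInf ⟨z, hmem⟩ ⟨a, forall_mem_image.2 ha⟩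
  obtain ⟨h, hh, hne⟩ := hmove _
    ⟨hc.trans_le (hglb.2 (forall_mem_image.2 hle)), (hglb.1 hmem).trans_lt hz⟩
  exact hne (ap_eq_self_of_isGLB_orbit hH hglb h hh)

theorem exists_lt_ap (hH : ∀ h ∈ H, IsPL h) (hmove : ∀ t ∈ Ioo a b, ∃ h ∈ H, ap h t ≠ t)
    (hz : a < z) (hb : ∀ h ∈ H, ap h z ≤ b) {c : ℝ} (hc : c < b) : ∃ h ∈ H, c < ap h z := by
  by_contra! hle
  have hmem : z ∈ (fun h => ap h z) '' (H : Set PermR) := ⟨1, one_mem _, rfl⟩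
  have hlub := isLUB_csSup ⟨z, hmem⟩ ⟨b, forall_mem_image.2 hb⟩
  obtain ⟨h, hh, hne⟩ := hmove _
    ⟨hz.trans_le (hlub.1 hmem), (hlub.2 (forall_mem_image.2 hle)).trans_lt hc⟩
  exact hne (ap_eq_self_of_isLUB_orbit hH hlub h hh)

theorem IsOrbital.exists_zpow_ap_lt (h : IsOrbital x a b) (hx : IsPL x) (hz : z ∈ Ioo a b)
    {c : ℝ} (hc : a < c) : ∃ n : ℤ, ap (x ^ n) z < c := by
  obtain ⟨_, ⟨n, rfl⟩, hn⟩ := exists_ap_lt (H := Subgroup.zpowers x)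
    (by rintro _ ⟨n, rfl⟩; exact hx.zpow n)
    (fun t ht => ⟨x, Subgroup.mem_zpowers x, h.ap_ne ht⟩) hz.2
    (by
      rintro _ ⟨n, rfl⟩
      have := (hx.zpow n).le.2 hz.1.le
      rwa [ap_zpow_eq_self h.ap_left] at this) hc
  exact ⟨n, hn⟩

theorem IsOrbital.exists_lt_zpow_ap (h : IsOrbital x a b) (hx : IsPL x) (hz : z ∈ Ioo a b)
    {c : ℝ} (hc : c < b) : ∃ n : ℤ, c < ap (x ^ n) z := by
  obtain ⟨_, ⟨n, rfl⟩, hn⟩ := exists_lt_ap (H := Subgroup.zpowers x)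
    (by rintro _ ⟨n, rfl⟩; exact hx.zpow n)
    (fun t ht => ⟨x, Subgroup.mem_zpowers x, h.ap_ne ht⟩) hz.1
    (by
      rintro _ ⟨n, rfl⟩
      have := (hx.zpow n).le.2 hz.2.le
      rwa [ap_zpow_eq_self h.ap_right] at this) hc
  exact ⟨n, hn⟩

end Groups

section Blocks

open Filter Topology

variable {G R : Subgroup PermR} {E : Set ℝ} {X : Set PermR} {g h x y : PermR}
  {a b c d e z L : ℝ}

/-- The interval `(a, b)` is a block of `G`: an element of `G` either fixes both endpoints or
moves the interval off itself. -/
def IsBlock (G : Subgroup PermR) (a b : ℝ) : Prop :=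
  ∀ h ∈ G, ap h a < b → a < ap h b → ap h a = a ∧ ap h b = b

/-- The element `x` has an orbital which is not a block of `G`. -/
def HasNonblockOrbital (G : Subgroup PermR) (x : PermR) : Prop :=
  ∃ a b, IsOrbital x a b ∧ ¬ IsBlock G a b

/-- Every orbital of an element of `R` which is not a block of `G` is contained in `E`. -/
def NonblockOrbitalsIn (G R : Subgroup PermR) (E : Set ℝ) : Prop :=
  ∀ x ∈ R, ∀ ⦃a b⦄, IsOrbital x a b → ¬ IsBlock G a b → Ioo a b ⊆ E

/-- The set `E` is invariant under `G`. -/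
def IsInvariant (G : Subgroup PermR) (E : Set ℝ) : Prop :=
  ∀ g ∈ G, ∀ z ∈ E, ap g z ∈ E

theorem IsInvariant.ap_mem_iff (hE : IsInvariant G E) (hg : g ∈ G) : ap g z ∈ E ↔ z ∈ E :=
  ⟨fun h => ap_inv_ap g z ▸ hE g⁻¹ (inv_mem hg) _ h, hE g hg z⟩

theorem IsBlock.conj (hPL : ∀ g ∈ G, IsPL g) (h : IsBlock G a b) (hg : g ∈ G) :
    IsBlock G (ap g a) (ap g b) := fun k hk h₁ h₂ => by
  have key : ∀ t, ap k (ap g t) = ap g (ap (g * k * g⁻¹) t) := fun t => by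
    simp only [ap_mul, ap_ap_inv]
  simp only [key, (hPL g hg).lt, (ap_injective g).eq_iff] at h₁ h₂ ⊢
  exact h _ (mul_mem (mul_mem hg hk) (inv_mem hg)) h₁ h₂

theorem isBlock_ap_iff (hPL : ∀ g ∈ G, IsPL g) (hg : g ∈ G) :
    IsBlock G (ap g a) (ap g b) ↔ IsBlock G a b :=
  ⟨fun h => by simpa only [ap_inv_ap] using h.conj hPL (inv_mem hg), fun h => h.conj hPL hg⟩

theorem IsBlock.ap_right_eq (hPL : ∀ g ∈ G, IsPL g) (hb : IsBlock G a b) (hab : a < b)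
    (hh : h ∈ G) (ha : ap h a = a) : ap h b = b :=
  (hb h hh (ha.trans_lt hab) (ha.symm.trans_lt ((hPL h hh).lt.2 hab))).2

theorem IsBlock.ap_left_eq (hPL : ∀ g ∈ G, IsPL g) (h' : IsBlock G a b) (hab : a < b)
    (hh : h ∈ G) (hb : ap h b = b) : ap h a = a :=
  (h' h hh (((hPL h hh).lt.2 hab).trans_eq hb) (hab.trans_eq hb.symm)).1

theorem IsBlock.exists_orbital (hPL : ∀ g ∈ G, IsPL g) (hb : IsBlock G a b)
    (hh : h ∈ G) (hm : ap h a ≠ a) : ∃ c d, IsOrbital h c d ∧ c < a ∧ b < d := by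
  obtain ⟨c, d, ho, hca, had⟩ := (hPL h hh).exists_orbital hm
  refine ⟨c, d, ho, hca, not_le.1 fun hdb => hm (hb h hh ?_ ?_).1⟩
  · exact ((hPL h hh).lt.2 had).trans_le (ho.ap_right.trans_le hdb)
  · exact had.trans_le (ho.ap_right.symm.trans_le ((hPL h hh).le.2 hdb))

theorem IsInvariant.orbital_subset_of_Ioo_left (hE : IsInvariant G E) (hPL : ∀ g ∈ G, IsPL g)
    (hx : x ∈ G) (h : IsOrbital x a b) (hae : a < e) (hs : Ioo a e ⊆ E) : Ioo a b ⊆ E :=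
  fun t ht => by
    obtain ⟨n, hn⟩ := h.exists_zpow_ap_lt (hPL x hx) ht hae
    have hxn := zpow_mem hx n
    refine (hE.ap_mem_iff hxn).1 (hs ⟨?_, hn⟩)
    exact (ap_zpow_eq_self h.ap_left n).symm.trans_lt ((hPL _ hxn).lt.2 ht.1)

theorem IsInvariant.orbital_subset_of_Ioo_right (hE : IsInvariant G E) (hPL : ∀ g ∈ G, IsPL g)
    (hx : x ∈ G) (h : IsOrbital x a b) (heb : e < b) (hs : Ioo e b ⊆ E) : Ioo a b ⊆ E :=
  fun t ht => by
    obtain ⟨n, hn⟩ := h.exists_lt_zpow_ap (hPL x hx) ht heb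
    have hxn := zpow_mem hx n
    refine (hE.ap_mem_iff hxn).1 (hs ⟨hn, ?_⟩)
    exact ((hPL _ hxn).lt.2 ht.2).trans_eq (ap_zpow_eq_self h.ap_right n)

theorem IsPL.orbital_subset (hx : IsPL x) (h : IsOrbital x a b) : 0 ≤ a ∧ b ≤ 1 :=
  (Ioo_subset_Ioo_iff h.1).1 fun _ hz => hx.mem_Ioo_of_ap_ne (h.ap_ne hz)

theorem IsLastLeftTrivial.lt_of_nested (hPL : ∀ g ∈ G, IsPL g) (hE : IsInvariant G E)
    (hR : R ≤ G) (hblk : NonblockOrbitalsIn G R E) (hx : x ∈ R) (ho : IsOrbital x a b)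
    (hL : IsLastLeftTrivial x a L) (hy : y ∈ R) (ho' : IsOrbital y c d) (hoE : ¬ Ioo c d ⊆ E)
    (hca : c < a) (hbd : b < d) : c < L := by
  by_contra! hLc
  have hb : IsBlock G c d := of_not_not (mt (hblk y hy ho') hoE)
  have hxc : ap x c = c := by
    have hxPL := hPL x (hR hx)
    refine (hb x (hR hx) ?_ ?_).1
    · exact ((hxPL.lt.2 hca).trans_eq ho.ap_left).trans (ho.1.trans hbd)
    · exact (hca.trans ho.1).trans (ho.ap_right.symm.trans_lt (hxPL.lt.2 hbd))
  obtain ⟨e, hoe⟩ := (hPL x (hR hx)).exists_orbital_right hxc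
    (hL.notMem_right_of_mem_Ico ⟨hLc, hca⟩)
  have hed : e < d :=
    ((not_lt.1 fun hae => hoe.ap_ne ⟨hca, hae⟩ ho.ap_left).trans_lt ho.1).trans hbd
  refine hoE (hE.orbital_subset_of_Ioo_left hPL (hR hy) ho' hoe.1 (hblk x hx hoe fun hce => ?_))
  exact ho'.ap_ne ⟨hoe.1, hed⟩ (hce.ap_right_eq hPL hoe.1 (hR hy) ho'.ap_left)

theorem IsLastLeftTrivial.ap_ne_of_mem_orbital (hPL : ∀ g ∈ G, IsPL g) (hE : IsInvariant G E)
    (hR : R ≤ G) (hblk : NonblockOrbitalsIn G R E) (hx : x ∈ R) (ho : IsOrbital x a b)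
    (hoE : ¬ Ioo a b ⊆ E) (hL : IsLastLeftTrivial x a L) (hh : h ∈ G) (hz : z ∈ Ioo a b) :
    ap h z ≠ L := by
  rintro rfl
  have hb : IsBlock G a b := of_not_not (mt (hblk x hx ho) hoE)
  have hH := hPL h hh
  have hlt : ap h a < ap h z := hH.lt.2 hz.1
  have hgt : ap h z < ap h b := hH.lt.2 hz.2
  have hba : ap h b ≤ a := not_lt.1 fun hab =>
    hlt.not_ge (hL.le.trans (hb h hh (hlt.trans_le (hL.le.trans ho.1.le)) hab).1.ge)
  have hxL : ap x (ap h z) = ap h z := ap_eq_self_of_mem_fixer_nhdsLE hL.mem_left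
  have hxb : ap x (ap h b) = ap h b := by
    have hxPL := hPL x (hR hx)
    refine (hb.conj hPL hh x (hR hx) ?_ ?_).2
    · exact ((hxPL.lt.2 hlt).trans_eq hxL).trans hgt
    · exact hlt.trans (hxL.symm.trans_lt (hxPL.lt.2 hgt))
  obtain ⟨e, hoe⟩ := (hPL x (hR hx)).exists_orbital_left hxb (hL.notMem_left _ ⟨hgt, hba⟩)
  have hze : ap h z ≤ e := not_lt.1 fun hez => hoe.ap_ne ⟨hez, hgt⟩ hxL
  have hoy := ho.conj hH
  have hyG : h⁻¹ * x * h ∈ G := mul_mem (mul_mem (inv_mem hh) (hR hx)) hh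
  have heE : Ioo e (ap h b) ⊆ E := hblk x hx hoe fun he =>
    hoy.ap_ne ⟨hlt.trans_le hze, hoe.1⟩ (he.ap_left_eq hPL hoe.1 hyG hoy.ap_right)
  have hsub := hE.orbital_subset_of_Ioo_right hPL hyG hoy hoe.1 heE
  exact hoE fun t ht => (hE.ap_mem_iff hh).1 (hsub ⟨hH.lt.2 ht.1, hH.lt.2 ht.2⟩)

/-- The interval `(c, d)` is the bottom of a tower of `n + 1` strictly nested orbitals of elements
of `R`, the larger ones sharing no endpoint with the smaller ones. -/
def HasOrbitalTower (R : Subgroup PermR) : ℕ → ℝ → ℝ → Prop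
  | 0, c, d => ∃ y ∈ R, IsOrbital y c d
  | n + 1, c, d => (∃ y ∈ R, IsOrbital y c d) ∧ ∃ a b, a < c ∧ d < b ∧ HasOrbitalTower R n a b

theorem HasOrbitalTower.exists_orbital {n : ℕ} (h : HasOrbitalTower R n c d) :
    ∃ y ∈ R, IsOrbital y c d := by
  cases n with
  | zero => exact h
  | succ n => exact h.1

/-- Each orbital below the top contributes the last point left of which its element is trivial; it
is a breakpoint, and no element of `G` carries it to the corresponding point of a larger orbital. -/
theorem HasOrbitalTower.exists_finset_breakSet (hPL : ∀ g ∈ G, IsPL g)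
    (hX : Subgroup.closure X = G) (hE : IsInvariant G E) (hR : R ≤ G)
    (hblk : NonblockOrbitalsIn G R E) {n : ℕ} (h : HasOrbitalTower R n c d)
    (hcdE : ¬ Ioo c d ⊆ E) :
    ∃ T : Finset ℝ, ↑T ⊆ BreakSet X ∧ T.card = n ∧ ∀ p ∈ T, ∃ x ∈ R, ∃ a b L, IsOrbital x a b ∧
      ¬ Ioo a b ⊆ E ∧ Ioo c d ⊆ Ioo a b ∧ IsLastLeftTrivial x a L ∧ ∃ g ∈ G, L = ap g p := by
  induction n generalizing c d with
  | zero => exact ⟨∅, by simp only [Finset.coe_empty, empty_subset], rfl, by simp⟩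
  | succ n ih =>
    obtain ⟨⟨y, hyR, ho⟩, a, b, hac, hdb, htower⟩ := h
    obtain ⟨h, hhR, ho'⟩ := htower.exists_orbital
    have hsub : Ioo c d ⊆ Ioo a b := Ioo_subset_Ioo hac.le hdb.le
    have habE : ¬ Ioo a b ⊆ E := fun hs => hcdE (hsub.trans hs)
    obtain ⟨T, hTX, hTn, hT⟩ := ih htower habE
    have hyPL := hPL y (hR hyR)
    obtain ⟨L, -, hL⟩ :=
      hyPL.exists_isLastLeftTrivial (hyPL.orbital_subset ho).1 ho.notMem_fixer_nhdsGE
    have haL : a < L := hL.lt_of_nested hPL hE hR hblk hyR ho hhR ho' habE hac hdb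
    have hLmem : L ∈ Ioo a b := ⟨haL, hL.le.trans_lt (ho.1.trans hdb)⟩
    obtain ⟨p, hp, g, hg, hLp⟩ := exists_eq_ap_of_mem_breakpoints hPL hX (hR hyR)
      (hL.mem_breakpoints ((hPL h (hR hhR)).mem_Ioo_of_ap_ne (ho'.ap_ne hLmem)))
    have hpT : p ∉ T := fun hpT => by
      obtain ⟨x, hx, a', b', L', hox, hxE, hs, hL', g', hg', hLp'⟩ := hT p hpT
      refine hL'.ap_ne_of_mem_orbital hPL hE hR hblk hx hox hxE
        (mul_mem (inv_mem hg) hg') (hs hLmem) ?_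
      rw [ap_mul, hLp, ap_inv_ap, hLp']
    refine ⟨insert p T, ?_, by rw [Finset.card_insert_of_notMem hpT, hTn], fun q hq => ?_⟩
    · rw [Finset.coe_insert]
      exact insert_subset hp hTX
    · obtain rfl | hq := Finset.mem_insert.1 hq
      · exact ⟨y, hyR, c, d, L, ho, hcdE, Subset.rfl, hL, g, hg, hLp⟩
      · obtain ⟨x, hx, a', b', L', hox, hxE, hs, hrest⟩ := hT q hq
        exact ⟨x, hx, a', b', L', hox, hxE, hsub.trans hs, hrest⟩

theorem HasOrbitalTower.subset (hPL : ∀ g ∈ G, IsPL g) (hXf : X.Finite)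
    (hX : Subgroup.closure X = G) (hE : IsInvariant G E) (hR : R ≤ G)
    (hblk : NonblockOrbitalsIn G R E) (h : HasOrbitalTower R ((BreakSet X).ncard + 1) c d) :
    Ioo c d ⊆ E := by
  by_contra hcdE
  obtain ⟨T, hTX, hTn, -⟩ := h.exists_finset_breakSet hPL hX hE hR hblk hcdE
  have hfin := finite_breakSet hXf fun x hx => hPL x (hX ▸ Subgroup.subset_closure hx)
  have := ncard_le_ncard hTX hfin
  rw [ncard_coe_finset] at this
  lia

theorem not_hasOrbitalTower (hPL : ∀ g ∈ G, IsPL g) (hXf : X.Finite)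
    (hX : Subgroup.closure X = G) (hR : R ≤ G) (hblk : ∀ x ∈ R, ¬ HasNonblockOrbital G x) :
    ¬ HasOrbitalTower R ((BreakSet X).ncard + 1) c d := fun h => by
  obtain ⟨y, -, ho⟩ := h.exists_orbital
  exact (nonempty_Ioo.2 ho.1).not_subset_empty (h.subset hPL hXf hX (fun _ _ _ h => h.elim) hR
    fun x hx a b ho hb => (hblk x hx ⟨a, b, ho, hb⟩).elim)

theorem hasOrbitalTower_of_mem_iteratedCommutator (hPL : ∀ g ∈ G, IsPL g) (hR : R ≤ G)
    (hblk : NonblockOrbitalsIn G R E) {n : ℕ} (hy : y ∈ iteratedCommutator R n)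
    (ho : IsOrbital y c d) (hcdE : ¬ Ioo c d ⊆ E) : HasOrbitalTower R n c d := by
  induction n generalizing y c d with
  | zero => exact ⟨y, hy, ho⟩
  | succ n ih =>
    have hyR : y ∈ R := iteratedCommutator_le_self R _ hy
    obtain ⟨h, hh, hm⟩ : ∃ h ∈ iteratedCommutator R n, ap h c ≠ c := by
      by_contra! hfix
      exact ho.notMem_fixer_nhdsGE (commutator_le_fixer_nhdsGE
        (fun k hk => hPL k (hR (iteratedCommutator_le_self R n hk))) hfix hy)
    obtain ⟨a, b, ho', hac, hdb⟩ := (of_not_not (mt (hblk y hyR ho) hcdE)).exists_orbital hPL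
      (hR (iteratedCommutator_le_self R n hh)) hm
    exact ⟨⟨y, hyR, ho⟩, a, b, hac, hdb,
      ih hh ho' fun hs => hcdE ((Ioo_subset_Ioo hac.le hdb.le).trans hs)⟩

theorem orbital_subset_of_mem_iteratedCommutator (hPL : ∀ g ∈ G, IsPL g) (hXf : X.Finite)
    (hX : Subgroup.closure X = G) (hE : IsInvariant G E) (hR : R ≤ G)
    (hblk : NonblockOrbitalsIn G R E)
    (hy : y ∈ iteratedCommutator R ((BreakSet X).ncard + 1)) (ho : IsOrbital y a b) :
    Ioo a b ⊆ E :=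
  by_contra fun h => h ((hasOrbitalTower_of_mem_iteratedCommutator hPL hR hblk hy ho h).subset
    hPL hXf hX hE hR hblk)

theorem IsPL.eq_one_of_forall_not_isOrbital (hx : IsPL x) (h : ∀ a b, ¬ IsOrbital x a b) :
    x = 1 :=
  ap_ext fun _ => of_not_not fun hz =>
    let ⟨a, b, ho, _⟩ := hx.exists_orbital hz
    h a b ho

theorem iteratedCommutator_eq_bot_of_forall_not_hasNonblockOrbital (hPL : ∀ g ∈ G, IsPL g)
    (hXf : X.Finite) (hX : Subgroup.closure X = G) (hR : R ≤ G)
    (hblk : ∀ x ∈ R, ¬ HasNonblockOrbital G x) :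
    iteratedCommutator R ((BreakSet X).ncard + 1) = ⊥ := by
  refine eq_bot_iff.2 fun y hy => (hPL y (hR (iteratedCommutator_le_self R _ hy)))
    |>.eq_one_of_forall_not_isOrbital fun a b ho => ?_
  refine (nonempty_Ioo.2 ho.1).not_subset_empty ?_
  exact orbital_subset_of_mem_iteratedCommutator hPL hXf hX (E := ∅)
    (fun _ _ _ h => h.elim) hR (fun x hx a b ho hb => (hblk x hx ⟨a, b, ho, hb⟩).elim) hy ho

end Blocks

section Overlaps

open Filter Topology
open scoped commutatorElement

variable {G K : Subgroup PermR} {x h u v : PermR} {a b c d p q : ℝ}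

theorem ap_commutatorElement_eq_self_iff {z : ℝ} :
    ap ⁅u, v⁆ z = z ↔ ap v (ap u z) = ap u (ap v z) := by
  simp only [commutatorElement_def, ap_mul, ap_inv_eq_iff]

theorem hasNonblockOrbital_commutatorElement (hPL : ∀ g ∈ G, IsPL g) (hu : u ∈ G) (hv : v ∈ G)
    (ho : IsOrbital v p q) (hc : c = p ∨ c = q) (hcu : ap u c ∈ Ioo p q) :
    HasNonblockOrbital G ⁅u, v⁆ := by
  have hvc : ap v c = c := by
    rcases hc with rfl | rfl
    exacts [ho.ap_left, ho.ap_right]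
  have hm : ap ⁅u, v⁆ c ≠ c := by
    rw [Ne, ap_commutatorElement_eq_self_iff, hvc]
    exact ho.ap_ne hcu
  obtain ⟨r, s, hD, hr, hs⟩ := (hPL _ (G.mul_mem (G.mul_mem (G.mul_mem hu hv) (G.inv_mem hu))
    (G.inv_mem hv))).exists_orbital hm
  refine ⟨r, s, hD, fun hb => ?_⟩
  have hV := hPL v hv
  have hU := hPL u hu
  obtain ⟨hvr, hvs⟩ := hb v hv (((hV.lt.2 hr).trans_eq hvc).trans hs)
    (hr.trans (hvc.symm.trans_lt (hV.lt.2 hs)))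
  have hrp : r ≤ p := by
    rcases hc with rfl | rfl
    exacts [hr.le, not_lt.1 fun hpr => ho.ap_ne ⟨hpr, hr⟩ hvr]
  have hqs : q ≤ s := by
    rcases hc with rfl | rfl
    exacts [not_lt.1 fun hsq => ho.ap_ne ⟨hs, hsq⟩ hvs, hs.le]
  have hur : ap u r = r := (hb u hu (((hU.lt.2 hr).trans hcu.2).trans_le hqs)
    ((hrp.trans_lt hcu.1).trans (hU.lt.2 hs))).1
  exact hD.notMem_fixer_nhdsGE (hU.commutatorElement_mem_fixer_nhdsGE hV hur hvr)

theorem exists_hasNonblockOrbital_of_lt_of_lt_of_le (hPL : ∀ g ∈ G, IsPL g) (hK : K ≤ G)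
    (hu : u ∈ K) (hv : v ∈ K) (ho : IsOrbital u a b) (ho' : IsOrbital v c d) (hac : a < c)
    (hcb : c < b) (hbd : b ≤ d) : ∃ e ∈ ⁅K, K⁆, HasNonblockOrbital G e := by
  obtain ⟨n, hn⟩ := ho.exists_lt_zpow_ap (hPL u (hK hu)) ⟨hac, hcb⟩ hcb
  have hun := zpow_mem hu n
  refine ⟨_, Subgroup.commutator_mem_commutator hun hv,
    hasNonblockOrbital_commutatorElement hPL (hK hun) (hK hv) ho' (Or.inl rfl) ⟨hn, ?_⟩⟩
  exact (((hPL _ (hK hun)).lt.2 hcb).trans_eq (ap_zpow_eq_self ho.ap_right n)).trans_le hbd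

theorem exists_hasNonblockOrbital_of_left_eq (hPL : ∀ g ∈ G, IsPL g) (hK : K ≤ G)
    (hu : u ∈ K) (hv : v ∈ K) (ho : IsOrbital u a b) (ho' : IsOrbital v a d) (hbd : b < d) :
    ∃ e ∈ ⁅K, K⁆, HasNonblockOrbital G e := by
  obtain ⟨n, hn⟩ := ho'.exists_zpow_ap_lt (hPL v (hK hv)) ⟨ho.1, hbd⟩ ho.1
  have hvn := zpow_mem hv n
  refine ⟨_, Subgroup.commutator_mem_commutator hvn hu,
    hasNonblockOrbital_commutatorElement hPL (hK hvn) (hK hu) ho (Or.inr rfl) ⟨?_, hn⟩⟩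
  exact (ap_zpow_eq_self ho'.ap_left n).symm.trans_lt ((hPL _ (hK hvn)).lt.2 ho.1)

/-- One of the two elements moves an endpoint of the other orbital into that orbital. -/
theorem exists_hasNonblockOrbital_of_overlap (hPL : ∀ g ∈ G, IsPL g) (hK : K ≤ G)
    (hu : u ∈ K) (hv : v ∈ K) (ho : IsOrbital u a b) (ho' : IsOrbital v c d) (had : a < d)
    (hcb : c < b) (hne : ¬ (a = c ∧ b = d)) (hn₁ : ¬ (a < c ∧ d < b))
    (hn₂ : ¬ (c < a ∧ b < d)) : ∃ e ∈ ⁅K, K⁆, HasNonblockOrbital G e := by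
  rcases lt_trichotomy a c with hac | rfl | hac
  · exact exists_hasNonblockOrbital_of_lt_of_lt_of_le hPL hK hu hv ho ho' hac hcb
      (not_lt.1 fun hdb => hn₁ ⟨hac, hdb⟩)
  · rcases lt_trichotomy b d with hbd | rfl | hbd
    · exact exists_hasNonblockOrbital_of_left_eq hPL hK hu hv ho ho' hbd
    · exact absurd ⟨rfl, rfl⟩ hne
    · exact exists_hasNonblockOrbital_of_left_eq hPL hK hv hu ho' ho hbd
  · exact exists_hasNonblockOrbital_of_lt_of_lt_of_le hPL hK hv hu ho' ho hac had
      (not_lt.1 fun hbd => hn₂ ⟨hac, hbd⟩)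

theorem mem_fixer_nhdsLE_of_nested (hPL : ∀ g ∈ G, IsPL g) (hK : K ≤ G) (hu : u ∈ K) (hv : v ∈ K)
    (ho : IsOrbital u a b) (ho' : IsOrbital v c d) (hca : c < a) (hbd : b < d)
    (hno : ∀ e ∈ ⁅K, K⁆, ¬ HasNonblockOrbital G e) : u ∈ fixer (𝓝[≤] d) := by
  have hU := hPL u (hK hu)
  have hnot : ∀ p q, IsOrbital u p q → p < d → ¬ d ≤ q := fun p q hpq hpd hdq => by
    have hbp : b ≤ p := not_lt.1 fun hpb => hpq.ap_ne ⟨hpb, hbd.trans_le hdq⟩ ho.ap_right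
    have hab := ho.1
    obtain ⟨e, he, heG⟩ := exists_hasNonblockOrbital_of_overlap hPL hK hu hv hpq ho' hpd
      (by linarith) (fun h => by linarith) (fun h => by linarith) (fun h => by linarith)
    exact hno e he heG
  have hud : ap u d = d := by
    by_contra hm
    obtain ⟨p, q, hpq, hp, hq⟩ := hU.exists_orbital hm
    exact hnot p q hpq hp hq.le
  by_contra hm
  obtain ⟨e, he⟩ := hU.exists_orbital_left hud hm
  exact hnot e d he he.1 le_rfl

theorem IsOrbital.congr (ho : IsOrbital u a b) (h : ∀ z ∈ Icc a b, ap v z = ap u z) :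
    IsOrbital v a b := by
  refine ⟨ho.1, fun z hz => ?_, ?_, ?_⟩
  · exact (h z (Ioo_subset_Icc_self hz)).trans_ne (ho.ap_ne hz)
  · exact notMem_supp_iff.2 ((h a (left_mem_Icc.2 ho.1.le)).trans ho.ap_left)
  · exact notMem_supp_iff.2 ((h b (right_mem_Icc.2 ho.1.le)).trans ho.ap_right)

/-- A power `v ^ n` carries `(a, b)` to where `u` is trivial; there `⁅u, v ^ n⁆` agrees with `u`. -/
theorem exists_isOrbital_commutator_of_nested (hPL : ∀ g ∈ G, IsPL g) (hK : K ≤ G) (hu : u ∈ K)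
    (hv : v ∈ K) (ho : IsOrbital u a b) (ho' : IsOrbital v c d) (hca : c < a) (hbd : b < d)
    (hno : ∀ e ∈ ⁅K, K⁆, ¬ HasNonblockOrbital G e) : ∃ e ∈ ⁅K, K⁆, IsOrbital e a b := by
  obtain ⟨f, hf, hid⟩ := mem_fixer_nhdsLE.1
    (mem_fixer_nhdsLE_of_nested hPL hK hu hv ho ho' hca hbd hno)
  obtain ⟨n, hn⟩ := ho'.exists_lt_zpow_ap (hPL v (hK hv)) ⟨hca, ho.1.trans hbd⟩ hf
  have hvn := zpow_mem hv n
  have hU := hPL u (hK hu)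
  have hV := hPL _ (hK hvn)
  refine ⟨_, Subgroup.commutator_mem_commutator hu hvn, ho.congr fun z hz => ?_⟩
  have hau : a ≤ ap u z := ho.ap_left.symm.trans_le (hU.le.2 hz.1)
  have hub : ap u z ≤ b := (hU.le.2 hz.2).trans_eq ho.ap_right
  have hfix : ap u (ap (v ^ n) (ap u z)) = ap (v ^ n) (ap u z) := by
    refine hid _ ⟨hn.le.trans (hV.le.2 hau), ?_⟩
    exact (hV.le.2 (hub.trans hbd.le)).trans_eq (ap_zpow_eq_self ho'.ap_right n)
  rw [commutatorElement_def, ap_mul, ap_mul, ap_mul, ap_inv_eq_self hfix, ap_inv_ap]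

theorem exists_hasNonblockOrbital_of_two_orbitals (hPL : ∀ g ∈ G, IsPL g) (hK : K ≤ G)
    (hu : u ∈ K) (hv : v ∈ K) (ho : IsOrbital u a b) (ho' : IsOrbital v c d)
    (hb : ¬ IsBlock G a b) (hb' : ¬ IsBlock G c d) (had : a < d) (hcb : c < b)
    (hne : ¬ (a = c ∧ b = d)) : ∃ e ∈ ⁅K, K⁆, HasNonblockOrbital G e := by
  by_contra! hno
  refine (exists_hasNonblockOrbital_of_overlap hPL hK hu hv ho ho' had hcb hne ?_ ?_).elim
    fun e he => hno e he.1 he.2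
  · rintro ⟨hac, hdb⟩
    obtain ⟨e, he, heo⟩ := exists_isOrbital_commutator_of_nested hPL hK hv hu ho' ho hac hdb hno
    exact hno e he ⟨c, d, heo, hb'⟩
  · rintro ⟨hca, hbd⟩
    obtain ⟨e, he, heo⟩ := exists_isOrbital_commutator_of_nested hPL hK hu hv ho ho' hca hbd hno
    exact hno e he ⟨a, b, heo, hb⟩

/-- The image of `(a, b)` under `h` meets `(a, b)` but is different from it. -/
def OverlapsImage (h : PermR) (a b : ℝ) : Prop :=
  ap h a < b ∧ a < ap h b ∧ ¬ (ap h a = a ∧ ap h b = b)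

theorem not_isBlock_iff : ¬ IsBlock G a b ↔ ∃ h ∈ G, OverlapsImage h a b := by
  simp only [IsBlock, OverlapsImage, not_forall, exists_prop]

theorem OverlapsImage.exists_hasNonblockOrbital_commutator (hov : OverlapsImage h a b)
    (hPL : ∀ g ∈ G, IsPL g) (hh : h ∈ G) (hK : K ≤ G) (ho : IsOrbital x a b) (hx : x ∈ K)
    (hxh : h⁻¹ * x * h ∈ K) : ∃ e ∈ ⁅K, K⁆, HasNonblockOrbital G e := by
  have hb : ¬ IsBlock G a b := not_isBlock_iff.2 ⟨h, hh, hov⟩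
  exact exists_hasNonblockOrbital_of_two_orbitals hPL hK hx hxh ho (ho.conj (hPL h hh)) hb
    (mt (isBlock_ap_iff hPL hh).1 hb) hov.2.1 hov.1 fun e => hov.2.2 ⟨e.1.symm, e.2.symm⟩

end Overlaps

section Components

open Filter Topology
open scoped commutatorElement

variable {G : Subgroup PermR} {E E' : Set ℝ} {X : Set PermR} {g k x : PermR}
  {a b p z α β : ℝ}

/-- A `G`-invariant union of orbitals of elements of `G` which are not blocks of `G`. -/
structure IsNonblockUnion (G : Subgroup PermR) (E : Set ℝ) : Prop where
  invariant : IsInvariant G E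
  exists_orbital : ∀ z ∈ E, ∃ x ∈ G, ∃ a b, IsOrbital x a b ∧ ¬ IsBlock G a b ∧ z ∈ Ioo a b ∧
    Ioo a b ⊆ E

/-- The subgroup of the elements of `G` that fix both endpoints of the interval `(α, β)`. -/
def intervalStabilizer (G : Subgroup PermR) (α β : ℝ) : Subgroup PermR where
  carrier := {g | g ∈ G ∧ ap g α = α ∧ ap g β = β}
  one_mem' := ⟨one_mem _, rfl, rfl⟩
  mul_mem' hx hy := ⟨mul_mem hx.1 hy.1, by rw [ap_mul, hx.2.1, hy.2.1],
    by rw [ap_mul, hx.2.2, hy.2.2]⟩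
  inv_mem' hx := ⟨inv_mem hx.1, ap_inv_eq_self hx.2.1, ap_inv_eq_self hx.2.2⟩

theorem commutator_intervalStabilizer_le_fixer_nhdsGE (hPL : ∀ g ∈ G, IsPL g) :
    ⁅intervalStabilizer G α β, intervalStabilizer G α β⁆ ≤ fixer (𝓝[≥] α) :=
  commutator_le_fixer_nhdsGE (fun k hk => hPL k hk.1) fun _ hk => hk.2.1

theorem commutator_intervalStabilizer_le_fixer_nhdsLE (hPL : ∀ g ∈ G, IsPL g) :
    ⁅intervalStabilizer G α β, intervalStabilizer G α β⁆ ≤ fixer (𝓝[≤] β) :=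
  commutator_le_fixer_nhdsLE (fun k hk => hPL k hk.1) fun _ hk => hk.2.2

theorem IsNonblockUnion.subset_Ioo (hPL : ∀ g ∈ G, IsPL g) (hE : IsNonblockUnion G E) :
    E ⊆ Ioo 0 1 := fun z hz =>
  let ⟨x, hx, _, _, ho, _, hzo, _⟩ := hE.exists_orbital z hz
  (hPL x hx).mem_Ioo_of_ap_ne (ho.ap_ne hzo)

theorem IsNonblockUnion.isOpen (hE : IsNonblockUnion G E) : IsOpen E :=
  isOpen_iff_mem_nhds.2 fun z hz =>
    let ⟨_, _, _, _, _, _, hzo, hs⟩ := hE.exists_orbital z hz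
    mem_of_superset (isOpen_Ioo.mem_nhds hzo) hs

theorem IsNonblockUnion.exists_isComponent (hPL : ∀ g ∈ G, IsPL g) (hE : IsNonblockUnion G E)
    (hz : z ∈ E) : ∃ α β, IsComponent E α β ∧ z ∈ Ioo α β :=
  PLPaper.exists_isComponent hE.isOpen (hE.subset_Ioo hPL) hz

theorem IsComponent.conj (hPL : ∀ g ∈ G, IsPL g) (hE : IsInvariant G E) (h : IsComponent E α β)
    (hg : g ∈ G) : IsComponent E (ap g α) (ap g β) := by
  have hG := hPL g hg
  refine ⟨hG.lt.2 h.1, fun t ht => ?_, mt (hE.ap_mem_iff hg).1 h.2.2.1,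
    mt (hE.ap_mem_iff hg).1 h.2.2.2⟩
  obtain ⟨t, rfl⟩ := ap_surjective g t
  exact hE g hg t (h.2.1 ⟨hG.lt.1 ht.1, hG.lt.1 ht.2⟩)

theorem IsComponent.mem_intervalStabilizer (hPL : ∀ g ∈ G, IsPL g) (hE : IsInvariant G E)
    (h : IsComponent E α β) (hg : g ∈ G) (hz : z ∈ Ioo α β) (hgz : ap g z ∈ Ioo α β) :
    g ∈ intervalStabilizer G α β :=
  ⟨hg, (h.conj hPL hE hg).unique h ⟨(hPL g hg).lt.2 hz.1, (hPL g hg).lt.2 hz.2⟩ hgz⟩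

theorem IsComponent.mem_intervalStabilizer_of_ap_left_eq (hPL : ∀ g ∈ G, IsPL g)
    (hE : IsInvariant G E) (h : IsComponent E α β) (hg : g ∈ G) (hα : ap g α = α) :
    g ∈ intervalStabilizer G α β := by
  have hc := h.conj hPL hE hg
  rw [hα] at hc
  obtain ⟨z, hz⟩ := exists_between (lt_min h.1 hc.1)
  rw [lt_min_iff] at hz
  exact ⟨hg, hα, (hc.unique h ⟨hz.1, hz.2.2⟩ ⟨hz.1, hz.2.1⟩).2⟩

theorem IsComponent.mem_intervalStabilizer_of_ap_right_eq (hPL : ∀ g ∈ G, IsPL g)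
    (hE : IsInvariant G E) (h : IsComponent E α β) (hg : g ∈ G) (hβ : ap g β = β) :
    g ∈ intervalStabilizer G α β := by
  have hc := h.conj hPL hE hg
  rw [hβ] at hc
  obtain ⟨z, hz⟩ := exists_between (max_lt h.1 hc.1)
  rw [max_lt_iff] at hz
  exact ⟨hg, (hc.unique h ⟨hz.1.2, hz.2⟩ ⟨hz.1.1, hz.2⟩).1, hβ⟩

theorem IsOrbital.isGLB_zpowers (ho : IsOrbital x a b) (hx : IsPL x) (hz : z ∈ Ioo a b) :
    IsGLB ((fun h => ap h z) '' (Subgroup.zpowers x : Set PermR)) a := by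
  refine ⟨?_, fun c hc => not_lt.1 fun hac => ?_⟩
  · rintro _ ⟨_, ⟨n, rfl⟩, rfl⟩
    exact (ap_zpow_eq_self ho.ap_left n).symm.trans_le ((hx.zpow n).le.2 hz.1.le)
  · obtain ⟨n, hn⟩ := ho.exists_zpow_ap_lt hx hz hac
    exact hn.not_ge (hc ⟨_, ⟨n, rfl⟩, rfl⟩)

theorem IsOrbital.isLUB_zpowers (ho : IsOrbital x a b) (hx : IsPL x) (hz : z ∈ Ioo a b) :
    IsLUB ((fun h => ap h z) '' (Subgroup.zpowers x : Set PermR)) b := by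
  refine ⟨?_, fun c hc => not_lt.1 fun hcb => ?_⟩
  · rintro _ ⟨_, ⟨n, rfl⟩, rfl⟩
    exact ((hx.zpow n).le.2 hz.2.le).trans_eq (ap_zpow_eq_self ho.ap_right n)
  · obtain ⟨n, hn⟩ := ho.exists_lt_zpow_ap hx hz hcb
    exact hn.not_ge (hc ⟨_, ⟨n, rfl⟩, rfl⟩)

/-- The endpoint `a` is the infimum of the orbit of `z` under the powers of `x`, so `ap k a` is the
infimum of the orbit of `ap k z`, and such an infimum is fixed by `x`. -/
theorem IsOrbital.ap_endpoints_notMem_of_comm (ho : IsOrbital x a b) (hx : IsPL x) (hk : IsPL k)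
    (hz : z ∈ Ioo a b) (hc : ∀ n : ℤ, ap (x ^ n) (ap k z) = ap k (ap (x ^ n) z)) :
    ap k a ∉ Ioo a b ∧ ap k b ∉ Ioo a b := by
  have himage : ap k '' ((fun h => ap h z) '' (Subgroup.zpowers x : Set PermR)) =
      (fun h => ap h (ap k z)) '' (Subgroup.zpowers x : Set PermR) := by
    rw [image_image]
    refine image_congr ?_
    rintro _ ⟨n, rfl⟩
    exact (hc n).symm
  have hzp : ∀ h ∈ Subgroup.zpowers x, IsPL h := by
    rintro _ ⟨n, rfl⟩
    exact hx.zpow n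
  have hxmem := Subgroup.mem_zpowers x
  let e : ℝ ≃o ℝ := hk.1.orderIsoOfSurjective _ (ap_surjective k)
  refine ⟨
    fun hm => ho.ap_ne hm (ap_eq_self_of_isGLB_orbit (z := ap k z) hzp ?_ x hxmem),
    fun hm => ho.ap_ne hm (ap_eq_self_of_isLUB_orbit (z := ap k z) hzp ?_ x hxmem)⟩
  · exact himage ▸ e.isGLB_image'.2 (ho.isGLB_zpowers hx hz)
  · exact himage ▸ e.isLUB_image'.2 (ho.isLUB_zpowers hx hz)

/-- If the commutator subgroup of the stabilizer of the component fixes `z`, then no element of the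
stabilizer moves an endpoint of a non-block orbital around `z` into that orbital. -/
theorem IsNonblockUnion.exists_commutator_ap_ne (hPL : ∀ g ∈ G, IsPL g)
    (hE : IsNonblockUnion G E) (hZ : IsComponent E α β) (hz : z ∈ Ioo α β) :
    ∃ x ∈ ⁅intervalStabilizer G α β, intervalStabilizer G α β⁆, ap x z ≠ z := by
  by_contra! hfix
  obtain ⟨x, hx, a, b, ho, hb, hzo, hs⟩ := hE.exists_orbital z (hZ.2.1 hz)
  have hX := hPL x hx
  obtain ⟨hαa, hbβ⟩ := hZ.le_of_Ioo_subset hs hz hzo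
  have hsub : Ioo a b ⊆ Ioo α β := Ioo_subset_Ioo hαa hbβ
  have hxZ : x ∈ intervalStabilizer G α β := hZ.mem_intervalStabilizer hPL hE.invariant hx hz
    (hsub ⟨ho.ap_left.symm.trans_lt (hX.lt.2 hzo.1), (hX.lt.2 hzo.2).trans_eq ho.ap_right⟩)
  have hend : ∀ k ∈ intervalStabilizer G α β, ap k a ∉ Ioo a b ∧ ap k b ∉ Ioo a b :=
    fun k hk => ho.ap_endpoints_notMem_of_comm hX (hPL k hk.1) hzo fun n =>
      ap_commutatorElement_eq_self_iff.1
        (hfix _ (Subgroup.commutator_mem_commutator hk (zpow_mem hxZ n)))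
  refine hb fun h hh hab hba => ?_
  have hH := hPL h hh
  have hhZ : h ∈ intervalStabilizer G α β := by
    obtain ⟨t, ht⟩ := exists_between (max_lt (lt_min ho.1 hba) (lt_min hab (hH.lt.2 ho.1)))
    obtain ⟨s, rfl⟩ := ap_surjective h t
    simp only [lt_min_iff, max_lt_iff, hH.lt] at ht
    exact hZ.mem_intervalStabilizer hPL hE.invariant hh (hsub ⟨ht.1.2, ht.2.2⟩)
      (hsub ⟨ht.1.1, ht.2.1⟩)
  have hha : ap h a ≤ a := not_lt.1 fun hc => (hend h hhZ).1 ⟨hc, hab⟩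
  have hhb : b ≤ ap h b := not_lt.1 fun hc => (hend h hhZ).2 ⟨hba, hc⟩
  have hinv := hend h⁻¹ (inv_mem hhZ)
  have hI := hH.inv
  have ha : ap h⁻¹ a ≤ a := not_lt.1 fun hc => hinv.1 ⟨hc, by
    simpa only [ap_inv_ap] using hI.lt.2 hba⟩
  have hb : b ≤ ap h⁻¹ b := not_lt.1 fun hc => hinv.2 ⟨by
    simpa only [ap_inv_ap] using hI.lt.2 hab, hc⟩
  refine ⟨hha.antisymm ?_, hhb.antisymm' ?_⟩
  · simpa only [ap_ap_inv] using hH.le.2 ha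
  · simpa only [ap_ap_inv] using hH.le.2 hb

theorem IsNonblockUnion.exists_isLastLeftTrivial (hPL : ∀ g ∈ G, IsPL g)
    (hX : Subgroup.closure X = G) (hE : IsNonblockUnion G E) (hZ : IsComponent E α β)
    (hz : z ∈ Ioo α β) : ∃ x ∈ intervalStabilizer G α β, ∃ L ∈ Ioo α z,
      IsLastLeftTrivial x z L ∧ ∃ p ∈ BreakSet X, ∃ g ∈ G, L = ap g p := by
  obtain ⟨x, hx, hm⟩ := hE.exists_commutator_ap_ne hPL hZ hz
  have hxZ : x ∈ intervalStabilizer G α β := commutator_self_le _ hx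
  have hxPL := hPL x hxZ.1
  have hz0 : 0 ≤ z := (hxPL.mem_Ioo_of_ap_ne hm).1.le
  obtain ⟨L, -, hL⟩ := hxPL.exists_isLastLeftTrivial hz0
    (mt ap_eq_self_of_mem_fixer_nhdsGE hm)
  have hLz : L < z := lt_of_le_of_ne hL.le fun h =>
    hm (h ▸ ap_eq_self_of_mem_fixer_nhdsLE hL.mem_left)
  have hαL : α < L := not_le.1 fun hLα => hL.notMem_right_of_mem_Ico ⟨hLα, hz.1⟩
    (commutator_intervalStabilizer_le_fixer_nhdsGE hPL hx)
  have hLE := hE.subset_Ioo hPL (hZ.2.1 ⟨hαL, hLz.trans hz.2⟩)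
  exact ⟨x, hxZ, L, ⟨hαL, hLz⟩, hL,
    exists_eq_ap_of_mem_breakpoints hPL hX hxZ.1 (hL.mem_breakpoints hLE)⟩

theorem IsComponent.eq_or_lt_of_subset (hPL : ∀ g ∈ G, IsPL g) (hE : IsNonblockUnion G E)
    (hE' : IsInvariant G E') (hs : E' ⊆ E) (hV : IsComponent E' a b) (hZ : IsComponent E α β)
    (hp : p ∈ Ioo a b) (hp' : p ∈ Ioo α β) : (a = α ∧ b = β) ∨ (α < a ∧ b < β) := by
  obtain ⟨hαa, hbβ⟩ := hZ.le_of_Ioo_subset (hV.2.1.trans hs) hp' hp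
  rcases hαa.eq_or_lt with rfl | hαa
  · rcases hbβ.eq_or_lt with rfl | hbβ
    · exact Or.inl ⟨rfl, rfl⟩
    · obtain ⟨x, hx, hm⟩ := hE.exists_commutator_ap_ne hPL hZ ⟨hV.1, hbβ⟩
      have hxZ := commutator_self_le _ hx
      exact absurd (hV.mem_intervalStabilizer_of_ap_left_eq hPL hE' hxZ.1 hxZ.2.1).2.2 hm
  · rcases hbβ.eq_or_lt with rfl | hbβ
    · obtain ⟨x, hx, hm⟩ := hE.exists_commutator_ap_ne hPL hZ ⟨hαa, hV.1⟩
      have hxZ := commutator_self_le _ hx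
      exact absurd (hV.mem_intervalStabilizer_of_ap_right_eq hPL hE' hxZ.1 hxZ.2.2).2.1 hm
    · exact Or.inr ⟨hαa, hbβ⟩

end Components

section ChainCondition

open Filter Topology

variable {G : Subgroup PermR} {E E' : Set ℝ} {F : ℕ → Set ℝ} {X : Set PermR} {g x : PermR}
  {a b c p q L : ℝ}

/-- The `G`-orbit of `q` meets the component of `E` that contains `p`. -/
def OrbitMeetsComponent (G : Subgroup PermR) (E : Set ℝ) (p q : ℝ) : Prop :=
  ∃ k ∈ G, ∃ α β, IsComponent E α β ∧ p ∈ Ioo α β ∧ ap k q ∈ Ioo α β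

theorem OrbitMeetsComponent.mem (hE : IsInvariant G E) (h : OrbitMeetsComponent G E p q) :
    q ∈ E :=
  let ⟨_, hk, _, _, hc, _, hq⟩ := h
  (hE.ap_mem_iff hk).1 (hc.2.1 hq)

theorem OrbitMeetsComponent.ap_right (hg : g ∈ G) (h : OrbitMeetsComponent G E p q) :
    OrbitMeetsComponent G E p (ap g q) :=
  let ⟨k, hk, α, β, hc, hp, hq⟩ := h
  ⟨g⁻¹ * k, mul_mem (inv_mem hg) hk, α, β, hc, hp, by rwa [ap_mul, ap_inv_ap]⟩

theorem OrbitMeetsComponent.mono (hPL : ∀ g ∈ G, IsPL g) (hE : IsNonblockUnion G E)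
    (hs : E' ⊆ E) (h : OrbitMeetsComponent G E' p q) : OrbitMeetsComponent G E p q := by
  obtain ⟨k, hk, α, β, hc, hp, hq⟩ := h
  obtain ⟨γ, δ, hc', hp'⟩ := hE.exists_isComponent hPL (hs (hc.2.1 hp))
  obtain ⟨hγ, hδ⟩ := hc'.le_of_Ioo_subset (hc.2.1.trans hs) hp' hp
  exact ⟨k, hk, γ, δ, hc', hp', Ioo_subset_Ioo hγ hδ hq⟩

theorem exists_forall_orbitMeetsComponent (hPL : ∀ g ∈ G, IsPL g)
    (hF : ∀ i, IsNonblockUnion G (F i)) (hanti : Antitone F) {B : Set ℝ} (hB : B.Finite) (p : ℝ) :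
    ∃ n, ∀ j ≥ n, ∀ q ∈ B, OrbitMeetsComponent G (F n) p q → OrbitMeetsComponent G (F j) p q := by
  classical
  let T : ℕ → Finset ℝ := fun i => {q ∈ hB.toFinset | OrbitMeetsComponent G (F i) p q}
  have hT : Antitone T := fun i j hij =>
    Finset.monotone_filter_right _ fun _ _ h => h.mono hPL (hF i) (hanti hij)
  obtain ⟨n, hn⟩ := WellFoundedLT.antitone_chain_condition hT
  refine ⟨n, fun j hj q hq h => (Finset.mem_filter.1 (?_ : q ∈ T j)).2⟩
  exact hn j hj ▸ Finset.mem_filter.2 ⟨hB.mem_toFinset.2 hq, h⟩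

/-- An element fixing `L` fixes the right endpoints of all components around `L`; as it is not
trivial to the left of them, they form a finite set. -/
theorem exists_forall_isComponent_of_fixed (hPL : ∀ g ∈ G, IsPL g)
    (hF : ∀ i, IsNonblockUnion G (F i)) (hanti : Antitone F) (hL : ∀ i, L ∈ F i) (hx : x ∈ G)
    (hLc : IsLastLeftTrivial x c L) (hc : c ∉ F 0) :
    ∃ n a b, L ∈ Ioo a b ∧ ∀ i ≥ n, IsComponent (F i) a b := by
  choose a b hab hLab using fun i => (hF i).exists_isComponent hPL (hL i)
  have hxL : ap x L = L := ap_eq_self_of_mem_fixer_nhdsLE hLc.mem_left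
  have hb (i) : ap x (b i) = b i ∧ x ∉ fixer (𝓝 (b i)) := by
    have hxi := (hab i).mem_intervalStabilizer hPL (hF i).invariant hx (hLab i)
      (hxL.symm ▸ hLab i)
    have hbc : b i ≤ c := not_lt.1 fun hcb =>
      hc (hanti i.zero_le ((hab i).2.1 ⟨(hLab i).1.trans_le hLc.le, hcb⟩))
    exact ⟨hxi.2.2, mt (fixer_anti nhdsWithin_le_nhds ·) (hLc.notMem_left _ ⟨(hLab i).2, hbc⟩)⟩
  have hfin : (range b).Finite := (hPL x hx).finite_fixed_notMem_fixer.subset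
    (range_subset_iff.2 hb)
  obtain ⟨_, ⟨n, rfl⟩, hmin⟩ := exists_min_image _ id hfin (range_nonempty b)
  refine ⟨n, a n, b n, hLab n, fun i hi => ?_⟩
  rcases (hab i).eq_or_lt_of_subset hPL (hF n) (hF i).invariant (hanti hi) (hab n) (hLab i)
    (hLab n) with h | h
  · exact h.1 ▸ h.2 ▸ hab i
  · exact absurd (hmin _ ⟨i, rfl⟩) h.2.not_ge

theorem OrbitMeetsComponent.exists_mem_Ioo_ap (hPL : ∀ g ∈ G, IsPL g) (hE : IsInvariant G E)
    (h : OrbitMeetsComponent G E p q) (hab : IsComponent E a b) (hq : q ∈ Ioo a b) :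
    ∃ k ∈ G, p ∈ Ioo (ap k a) (ap k b) := by
  obtain ⟨k, hk, α, β, hc, hp, hqk⟩ := h
  have hkq : ap k q ∈ Ioo (ap k a) (ap k b) := ⟨(hPL k hk).lt.2 hq.1, (hPL k hk).lt.2 hq.2⟩
  obtain ⟨rfl, rfl⟩ := (hab.conj hPL hE hk).unique hc hkq hqk
  exact ⟨k, hk, hp⟩

theorem exists_forall_isComponent (hPL : ∀ g ∈ G, IsPL g) (hXf : X.Finite)
    (hX : Subgroup.closure X = G) (hF : ∀ i, IsNonblockUnion G (F i)) (hanti : Antitone F)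
    (hp : ∀ i, p ∈ F i) : ∃ n a b, p ∈ Ioo a b ∧ ∀ i ≥ n, IsComponent (F i) a b := by
  have hfin := finite_breakSet hXf fun x hx => hPL x (hX ▸ Subgroup.subset_closure hx)
  obtain ⟨n, hn⟩ := exists_forall_orbitMeetsComponent hPL hF hanti hfin p
  obtain ⟨α, β, hα, hpα⟩ := (hF n).exists_isComponent hPL (hp n)
  by_cases hstable : ∀ i ≥ n, IsComponent (F i) α β
  · exact ⟨n, α, β, hpα, hstable⟩
  push Not at hstable
  obtain ⟨m, hnm, hm⟩ := hstable
  obtain ⟨γ, δ, hγ, hpγ⟩ := (hF m).exists_isComponent hPL (hp m)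
  have hlt : α < γ ∧ δ < β := (hγ.eq_or_lt_of_subset hPL (hF n) (hF m).invariant (hanti hnm) hα
    hpγ hpα).resolve_left fun h => hm (h.1 ▸ h.2 ▸ hγ)
  obtain ⟨x, hx, _, hL, hδL, q, hq, g, hg, rfl⟩ :=
    (hF n).exists_isLastLeftTrivial hPL hX hα ⟨hlt.1.trans hγ.1, hlt.2⟩
  have hmeets (i) (hi : n ≤ i) : OrbitMeetsComponent G (F i) p (ap g q) :=
    (hn i hi q hq ⟨g, hg, α, β, hα, hpα, hL.1, hL.2.trans hlt.2⟩).ap_right hg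
  obtain ⟨l, a, b, hLab, hab⟩ := exists_forall_isComponent_of_fixed (F := fun i => F (m + i)) hPL
    (fun _ => hF _) (fun i j hij => hanti (by lia)) (fun i => (hmeets _ (by lia)).mem
      (hF _).invariant) hx.1 hδL hγ.2.2.2
  obtain ⟨k, hk, hpk⟩ := (hmeets _ (by lia)).exists_mem_Ioo_ap hPL (hF _).invariant
    (hab l le_rfl) hLab
  refine ⟨m + l, ap k a, ap k b, hpk, fun i hi => ?_⟩
  obtain ⟨j, rfl⟩ := Nat.exists_eq_add_of_le hi
  exact (add_assoc m l j ▸ hab (l + j) (by lia)).conj hPL (hF _).invariant hk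

/-- Every component of a nonblock union contains a translate of one of the finitely many
breakpoints of the generators. -/
theorem IsNonblockUnion.antitone_chain_condition (hPL : ∀ g ∈ G, IsPL g) (hXf : X.Finite)
    (hX : Subgroup.closure X = G) (hF : ∀ i, IsNonblockUnion G (F i)) (hanti : Antitone F) :
    ∃ n, ∀ i ≥ n, F i = F n := by
  have hstable (p : ℝ) : ∃ n, p ∈ F n → ∃ a b, p ∈ Ioo a b ∧ ∀ i ≥ n, IsComponent (F i) a b := by
    by_cases hp : ∀ i, p ∈ F i
    · obtain ⟨n, h⟩ := exists_forall_isComponent hPL hXf hX hF hanti hp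
      exact ⟨n, fun _ => h⟩
    · push Not at hp
      obtain ⟨n, hn⟩ := hp
      exact ⟨n, (absurd · hn)⟩
  choose f hf using hstable
  have hfin := finite_breakSet hXf fun x hx => hPL x (hX ▸ Subgroup.subset_closure hx)
  obtain ⟨n, hn⟩ := (hfin.image f).bddAbove
  refine ⟨n, fun i hi => (hanti hi).antisymm fun z hz => ?_⟩
  obtain ⟨α, β, hα, hzα⟩ := (hF n).exists_isComponent hPL hz
  obtain ⟨_, -, _, hL, -, p, hp, g, hg, rfl⟩ := (hF n).exists_isLastLeftTrivial hPL hX hα hzα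
  have hpα : ap g p ∈ Ioo α β := ⟨hL.1, hL.2.trans hzα.2⟩
  have hpn : f p ≤ n := hn ⟨p, hp, rfl⟩
  have hpF : p ∈ F n := ((hF n).invariant.ap_mem_iff hg).1 (hα.2.1 hpα)
  obtain ⟨a, b, hpa, hab⟩ := hf p (hanti hpn hpF)
  have hconj (j) (hj : n ≤ j) := (hab j (hpn.trans hj)).conj hPL (hF j).invariant hg
  have hgp : ap g p ∈ Ioo (ap g a) (ap g b) :=
    ⟨(hPL g hg).lt.2 hpa.1, (hPL g hg).lt.2 hpa.2⟩
  obtain ⟨rfl, rfl⟩ := (hconj n le_rfl).unique hα hgp hpα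
  exact (hconj i hi).2.1 hzα

end ChainCondition

section Admissible

open Filter Topology
open scoped commutatorElement

variable {G R : Subgroup PermR} {E : Set ℝ} {X : Set PermR} {g x : PermR} {z α β : ℝ}

/-- The subgroup of the elements of `G` that are trivial outside `E`. -/
def rigidStabilizer (G : Subgroup PermR) (E : Set ℝ) : Subgroup PermR :=
  G ⊓ fixer (𝓟 Eᶜ)

theorem mem_rigidStabilizer_of_forall_isOrbital (hPL : ∀ g ∈ G, IsPL g) (hx : x ∈ G)
    (h : ∀ ⦃a b⦄, IsOrbital x a b → Ioo a b ⊆ E) : x ∈ rigidStabilizer G E := by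
  refine ⟨hx, mem_fixer_principal.2 fun z hz => by_contra fun hm => ?_⟩
  obtain ⟨a, b, ho, hzo⟩ := (hPL x hx).exists_orbital hm
  exact hz (h ho hzo)

theorem conj_mem_rigidStabilizer (hE : IsInvariant G E) (hg : g ∈ G)
    (hx : x ∈ rigidStabilizer G E) : MulAut.conj g x ∈ rigidStabilizer G E := by
  refine ⟨G.mul_mem (G.mul_mem hg hx.1) (G.inv_mem hg), mem_fixer_principal.2 fun z hz => ?_⟩
  have hgz : ap g z ∈ Eᶜ := mt (hE.ap_mem_iff hg).1 hz
  rw [MulAut.conj_apply, ap_mul, ap_mul, mem_fixer_principal.1 hx.2 _ hgz, ap_inv_ap]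

/-- The commutator subgroup of the group of the elements of `G` that are trivial outside `E`. -/
def derivedRigidStabilizer (G : Subgroup PermR) (E : Set ℝ) : Subgroup PermR :=
  ⁅rigidStabilizer G E, rigidStabilizer G E⁆

theorem derivedRigidStabilizer_le : derivedRigidStabilizer G E ≤ G :=
  (commutator_self_le _).trans inf_le_left

theorem ap_eq_self_of_mem_derivedRigidStabilizer (hx : x ∈ derivedRigidStabilizer G E)
    (hz : z ∉ E) : ap x z = z :=
  mem_fixer_principal.1 (commutator_self_le _ hx).2 z hz

theorem conj_mem_derivedRigidStabilizer (hE : IsInvariant G E) (hg : g ∈ G)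
    (hx : x ∈ derivedRigidStabilizer G E) : g⁻¹ * x * g ∈ derivedRigidStabilizer G E := by
  have := conj_mem_iteratedCommutator (n := 1)
    (fun _ => conj_mem_rigidStabilizer hE (inv_mem hg)) hx
  rwa [MulAut.conj_apply, inv_inv] at this

theorem IsComponent.rigidStabilizer_le (hZ : IsComponent E α β) :
    rigidStabilizer G E ≤ intervalStabilizer G α β := fun _ hx =>
  ⟨hx.1, mem_fixer_principal.1 hx.2 _ hZ.2.2.1, mem_fixer_principal.1 hx.2 _ hZ.2.2.2⟩

theorem IsComponent.derivedRigidStabilizer_le (hZ : IsComponent E α β) :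
    derivedRigidStabilizer G E ≤ intervalStabilizer G α β :=
  (commutator_self_le _).trans hZ.rigidStabilizer_le

theorem iteratedCommutator_le_derivedRigidStabilizer (hPL : ∀ g ∈ G, IsPL g) (hXf : X.Finite)
    (hX : Subgroup.closure X = G) (hE : IsInvariant G E) (hR : R ≤ G)
    (hRE : NonblockOrbitalsIn G R E) :
    iteratedCommutator R ((BreakSet X).ncard + 2) ≤ derivedRigidStabilizer G E := by
  have hle : iteratedCommutator R ((BreakSet X).ncard + 1) ≤ rigidStabilizer G E := fun y hy =>
    mem_rigidStabilizer_of_forall_isOrbital hPL (hR (iteratedCommutator_le_self R _ hy))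
      fun _ _ => orbital_subset_of_mem_iteratedCommutator hPL hXf hX hE hR hRE hy
  exact Subgroup.commutator_mono hle hle

/-- A nonblock union whose derived rigid stabilizer has elements with orbitals that are not blocks
of `G`. -/
structure IsAdmissible (G : Subgroup PermR) (E : Set ℝ) : Prop where
  isNonblockUnion : IsNonblockUnion G E
  exists_hasNonblockOrbital : ∃ x ∈ derivedRigidStabilizer G E, HasNonblockOrbital G x

/-- The union of the non-block orbitals of the elements of `S`. -/
def nonblockUnion (G : Subgroup PermR) (S : Set PermR) : Set ℝ :=
  {z | ∃ x ∈ S, ∃ a b, IsOrbital x a b ∧ ¬ IsBlock G a b ∧ z ∈ Ioo a b}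

theorem isNonblockUnion_nonblockUnion (hPL : ∀ g ∈ G, IsPL g) {S : Set PermR} (hSG : S ⊆ G)
    (hS : ∀ g ∈ G, ∀ x ∈ S, g⁻¹ * x * g ∈ S) : IsNonblockUnion G (nonblockUnion G S) where
  invariant := by
    rintro g hg z ⟨x, hx, a, b, ho, hb, hz⟩
    have hG := hPL g hg
    exact ⟨_, hS g hg x hx, _, _, ho.conj hG, mt (isBlock_ap_iff hPL hg).1 hb, hG.lt.2 hz.1,
      hG.lt.2 hz.2⟩
  exists_orbital := fun _ ⟨x, hx, a, b, ho, hb, hz⟩ =>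
    ⟨x, hSG hx, a, b, ho, hb, hz, fun _ ht => ⟨x, hx, a, b, ho, hb, ht⟩⟩

theorem exists_isAdmissible (hPL : ∀ g ∈ G, IsPL g) (hXf : X.Finite)
    (hX : Subgroup.closure X = G) (hns : ¬ Group.IsSolvable G) : ∃ E, IsAdmissible G E := by
  have hE := isNonblockUnion_nonblockUnion hPL (S := G) subset_rfl
    fun g hg x hx => mul_mem (mul_mem (inv_mem hg) hx) hg
  refine ⟨_, hE, by_contra fun hno => hns ?_⟩
  push Not at hno
  have hle := iteratedCommutator_le_derivedRigidStabilizer hPL hXf hX hE.invariant le_rfl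
    fun x hx a b ho hb t ht => ⟨x, hx, a, b, ho, hb, ht⟩
  have hbot := iteratedCommutator_eq_bot_of_forall_not_hasNonblockOrbital hPL hXf hX
    derivedRigidStabilizer_le hno
  have := iteratedCommutator_mono hle ((BreakSet X).ncard + 1)
  rw [hbot, iteratedCommutator_iteratedCommutator] at this
  exact isSolvable_of_iteratedCommutator_eq_bot (le_bot_iff.1 this)

theorem exists_minimal_isAdmissible (hPL : ∀ g ∈ G, IsPL g) (hXf : X.Finite)
    (hX : Subgroup.closure X = G) (hns : ¬ Group.IsSolvable G) :
    ∃ E, Minimal (IsAdmissible G) E := by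
  by_contra! hmin
  obtain ⟨E₀, hE₀⟩ := exists_isAdmissible hPL hXf hX hns
  have hstep (E : {E // IsAdmissible G E}) : ∃ E' : {E // IsAdmissible G E}, E' < E := by
    obtain ⟨E', hE', hlt⟩ := (not_minimal_iff_exists_lt E.2).1 (hmin E)
    exact ⟨⟨E', hlt⟩, hE'⟩
  choose f hf using hstep
  let F : ℕ → {E // IsAdmissible G E} := fun n => f^[n] ⟨E₀, hE₀⟩
  have hF (n) : F (n + 1) < F n := by
    simpa only [F, Function.iterate_succ_apply'] using hf (F n)
  obtain ⟨n, hn⟩ := IsNonblockUnion.antitone_chain_condition hPL hXf hX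
    (F := fun n => (F n : Set ℝ)) (fun i => (F i).2.isNonblockUnion)
    (antitone_nat_of_succ_le fun n => (hF n).le)
  exact (hF n).ne (Subtype.ext (hn (n + 1) n.le_succ))

end Admissible

section SetStabilizer

open Filter Topology
open scoped commutatorElement

variable {I : Set ℝ} {g u v : PermR} {α β : ℝ}

/-- The subgroup of the permutations mapping the set `I` onto itself. -/
def setStabilizer (I : Set ℝ) : Subgroup PermR where
  carrier := {g | ∀ z, ap g z ∈ I ↔ z ∈ I}
  one_mem' z := by rw [ap_one]
  mul_mem' {g h} hg hh z := by rw [ap_mul, hh, hg]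
  inv_mem' {g} hg z := by rw [← hg, ap_ap_inv]

theorem mem_setStabilizer : g ∈ setStabilizer I ↔ ∀ z, ap g z ∈ I ↔ z ∈ I := Iff.rfl

theorem setStabilizer_le_normalizer :
    setStabilizer I ≤ Subgroup.normalizer (fixer (𝓟 I) : Set PermR) := by
  refine Subgroup.le_normalizer_iff.2 fun g hg x hx => mem_fixer_principal.2 fun z hz => ?_
  rw [ap_mul, ap_mul, mem_fixer_principal.1 hx _ ((mem_setStabilizer.1 hg z).2 hz), ap_inv_ap]

theorem fixer_le_setStabilizer : fixer (𝓟 I) ≤ setStabilizer I := fun x hx z =>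
  ⟨fun hz => ap_injective x (mem_fixer_principal.1 hx _ hz) ▸ hz,
    fun hz => (mem_fixer_principal.1 hx z hz).symm ▸ hz⟩

theorem intervalStabilizer_le_setStabilizer {G : Subgroup PermR} (hPL : ∀ g ∈ G, IsPL g) :
    intervalStabilizer G α β ≤ setStabilizer (Ioo α β) := fun x hx z => by
  have h := hPL x hx.1
  rw [mem_Ioo, mem_Ioo, ← h.lt (a := α) (b := z), ← h.lt (a := z) (b := β), hx.2.1, hx.2.2]

theorem commutatorElement_mem_fixer_of_forall_or (hu : u ∈ setStabilizer I)
    (hv : v ∈ setStabilizer I) (h : ∀ z ∈ I, ap u z = z ∨ ap v z = z) : ⁅u, v⁆ ∈ fixer (𝓟 I) := by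
  refine mem_fixer_principal.2 fun z hz => ap_commutatorElement_eq_self_iff.2 ?_
  by_cases hvz : ap v z = z
  · by_cases huz : ap u z = z
    · rw [huz, hvz, huz]
    · have hvu : ap v (ap u z) = ap u z :=
        (h _ ((hu z).2 hz)).resolve_left fun huu => huz (ap_injective u huu)
      rw [hvz, hvu]
  · have huz : ap u z = z := (h z hz).resolve_right hvz
    have huv : ap u (ap v z) = ap v z :=
      (h _ ((hv z).2 hz)).resolve_right fun hvv => hvz (ap_injective v hvv)
    rw [huz, huv]

theorem commutator_closure_pair_le_fixer (hu : u ∈ fixer (𝓟 I)) (hv : v ∈ setStabilizer I) :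
    ⁅Subgroup.closure {u, v}, Subgroup.closure {u, v}⁆ ≤ fixer (𝓟 I) :=
  commutator_closure_pair_le (setStabilizer_le_normalizer (fixer_le_setStabilizer hu))
    (setStabilizer_le_normalizer hv) <|
    commutatorElement_mem_fixer_of_forall_or (fixer_le_setStabilizer hu) hv fun z hz =>
      .inl (mem_fixer_principal.1 hu z hz)

end SetStabilizer

section MinimallyActive

open Filter Topology
open scoped commutatorElement

variable {G : Subgroup PermR} {E : Set ℝ} {e g h u v x : PermR}
  {a b c d z : ℝ}

/-- The left endpoints of the components of `E` on which `x` is not trivial. -/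
def activeComponents (E : Set ℝ) (x : PermR) : Set ℝ :=
  {α | ∃ β, IsComponent E α β ∧ ∃ z ∈ Ioo α β, ap x z ≠ z}

theorem finite_activeComponents (hPL : ∀ g ∈ G, IsPL g) (hx : x ∈ derivedRigidStabilizer G E) :
    (activeComponents E x).Finite := by
  have hxPL := hPL x (derivedRigidStabilizer_le hx)
  have hfix (α) (hα : α ∈ activeComponents E x) : ∃ a β, IsComponent E α β ∧ a ∈ Ico α β ∧
      ap x a = a ∧ x ∉ fixer (𝓝 a) := by
    obtain ⟨β, hc, z, hz, hm⟩ := hα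
    obtain ⟨a, b, ho, hzo⟩ := hxPL.exists_orbital hm
    refine ⟨a, β, hc, ⟨not_lt.1 fun haα => ho.ap_ne ⟨haα, hz.1.trans hzo.2⟩ ?_,
      hzo.1.trans hz.2⟩, ho.ap_left, mt (fixer_anti nhdsWithin_le_nhds ·) ho.notMem_fixer_nhdsGE⟩
    exact ap_eq_self_of_mem_derivedRigidStabilizer hx hc.2.2.1
  choose! f β hc hf hfx using hfix
  refine Finite.of_injOn (f := f) (fun α hα => hfx α hα) (fun α hα α' hα' heq => ?_)
    hxPL.finite_fixed_notMem_fixer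
  rcases lt_trichotomy α α' with hlt | hlt | hlt
  · exact absurd ((hc α hα).2.1 ⟨hlt, (hf α' hα').1.trans_lt (heq ▸ (hf α hα).2)⟩)
      (hc α' hα').2.2.1
  · exact hlt
  · exact absurd ((hc α' hα').2.1 ⟨hlt, (hf α hα).1.trans_lt (heq ▸ (hf α' hα').2)⟩)
      (hc α hα).2.2.1

theorem activeComponents_conj (hPL : ∀ g ∈ G, IsPL g) (hE : IsInvariant G E) (hg : g ∈ G)
    (x : PermR) : activeComponents E (g⁻¹ * x * g) = ap g '' activeComponents E x := by
  have hsub : ∀ g ∈ G, ∀ x, ap g '' activeComponents E x ⊆ activeComponents E (g⁻¹ * x * g) := by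
    rintro g hg x _ ⟨α, ⟨β, hc, z, hz, hm⟩, rfl⟩
    have hG := hPL g hg
    refine ⟨ap g β, hc.conj hPL hE hg, ap g z, ⟨hG.lt.2 hz.1, hG.lt.2 hz.2⟩, ?_⟩
    rwa [ap_conj, (ap_injective g).ne_iff]
  refine Subset.antisymm (fun α hα => ⟨ap g⁻¹ α, ?_, ap_ap_inv g α⟩) (hsub g hg x)
  have := hsub g⁻¹ (inv_mem hg) _ ⟨α, hα, rfl⟩
  rwa [show g⁻¹⁻¹ * (g⁻¹ * x * g) * g⁻¹ = x by group] at this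

theorem activeComponents_subset_of_mem_commutator_closure_pair (hPL : ∀ g ∈ G, IsPL g)
    (hv : v ∈ derivedRigidStabilizer G E)
    (he : e ∈ ⁅Subgroup.closure {u, v}, Subgroup.closure {u, v}⁆) :
    activeComponents E e ⊆ activeComponents E u := by
  rintro α ⟨β, hc, z, hz, hm⟩
  refine ⟨β, hc, by_contra fun hu => hm ?_⟩
  push Not at hu
  exact mem_fixer_principal.1 (commutator_closure_pair_le_fixer (mem_fixer_principal.2 hu)
    (intervalStabilizer_le_setStabilizer hPL (hc.derivedRigidStabilizer_le hv)) he) z hz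

/-- The element `x` of the derived rigid stabilizer of `E` is active on no more components than any
element that has an orbital which is not a block. -/
structure IsMinimallyActive (G : Subgroup PermR) (E : Set ℝ) (x : PermR) : Prop where
  mem : x ∈ derivedRigidStabilizer G E
  ncard_le : ∀ y ∈ derivedRigidStabilizer G E, HasNonblockOrbital G y →
    (activeComponents E x).ncard ≤ (activeComponents E y).ncard

theorem IsAdmissible.exists_isMinimallyActive (hE : IsAdmissible G E) :
    ∃ x, IsMinimallyActive G E x ∧ HasNonblockOrbital G x := by
  obtain ⟨x₀, hx₀⟩ := hE.exists_hasNonblockOrbital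
  obtain ⟨x, hx, hmin⟩ := exists_minimalFor_of_wellFoundedLT
    (fun x => x ∈ derivedRigidStabilizer G E ∧ HasNonblockOrbital G x)
    (fun x => (activeComponents E x).ncard) ⟨x₀, hx₀⟩
  exact ⟨x, ⟨hx.1, fun y hy hyb => (le_total _ _).elim id (hmin ⟨hy, hyb⟩)⟩, hx.2⟩

theorem IsMinimallyActive.conj (hPL : ∀ g ∈ G, IsPL g) (hE : IsInvariant G E) (hg : g ∈ G)
    (hx : IsMinimallyActive G E x) : IsMinimallyActive G E (g⁻¹ * x * g) :=
  ⟨conj_mem_derivedRigidStabilizer hE hg hx.mem, fun y hy hyb => by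
    rw [activeComponents_conj hPL hE hg, ncard_image_of_injective _ (ap_injective g)]
    exact hx.ncard_le y hy hyb⟩

theorem IsMinimallyActive.activeComponents_eq_of_subset (hPL : ∀ g ∈ G, IsPL g)
    (hu : IsMinimallyActive G E u) (he : e ∈ derivedRigidStabilizer G E)
    (heb : HasNonblockOrbital G e) (hs : activeComponents E e ⊆ activeComponents E u) :
    activeComponents E e = activeComponents E u :=
  eq_of_subset_of_ncard_le hs (hu.ncard_le e he heb) (finite_activeComponents hPL hu.mem)

theorem IsMinimallyActive.activeComponents_eq (hPL : ∀ g ∈ G, IsPL g)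
    (hu : IsMinimallyActive G E u) (hv : IsMinimallyActive G E v)
    (he : ∃ e ∈ ⁅Subgroup.closure {u, v}, Subgroup.closure {u, v}⁆, HasNonblockOrbital G e) :
    activeComponents E u = activeComponents E v := by
  obtain ⟨e, he, heb⟩ := he
  have hcl : Subgroup.closure {u, v} ≤ derivedRigidStabilizer G E :=
    (Subgroup.closure_le _).2 (pair_subset hu.mem hv.mem)
  have heD : e ∈ derivedRigidStabilizer G E := hcl (commutator_self_le _ he)
  rw [← hu.activeComponents_eq_of_subset hPL heD heb
    (activeComponents_subset_of_mem_commutator_closure_pair hPL hv.mem he)]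
  rw [pair_comm] at he
  exact hv.activeComponents_eq_of_subset hPL heD heb
    (activeComponents_subset_of_mem_commutator_closure_pair hPL hu.mem he)

theorem IsMinimallyActive.image_activeComponents_eq (hPL : ∀ g ∈ G, IsPL g)
    (hE : IsInvariant G E) (hx : IsMinimallyActive G E x) (ho : IsOrbital x a b) (hh : h ∈ G)
    (hov : OverlapsImage h a b) : ap h '' activeComponents E x = activeComponents E x := by
  have hx' := hx.conj hPL hE hh
  have hcl : Subgroup.closure {x, h⁻¹ * x * h} ≤ G := (Subgroup.closure_le _).2
    (pair_subset (derivedRigidStabilizer_le hx.mem) (derivedRigidStabilizer_le hx'.mem))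
  rw [← activeComponents_conj hPL hE hh]
  exact (hx.activeComponents_eq hPL hx' <| hov.exists_hasNonblockOrbital_commutator hPL hh hcl ho
    (Subgroup.subset_closure (mem_insert _ _))
    (Subgroup.subset_closure (mem_insert_of_mem _ rfl))).symm

theorem IsMinimallyActive.activeComponents_eq_of_mem_Ioo (hPL : ∀ g ∈ G, IsPL g)
    (hE : IsInvariant G E) (hu : IsMinimallyActive G E u) (hv : IsMinimallyActive G E v)
    (ho : IsOrbital u a b) (hb : ¬ IsBlock G a b) (ho' : IsOrbital v c d)
    (hb' : ¬ IsBlock G c d) (hz : z ∈ Ioo a b) (hz' : z ∈ Ioo c d) :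
    activeComponents E u = activeComponents E v := by
  have hle : ∀ {u v}, IsMinimallyActive G E u → IsMinimallyActive G E v →
      Subgroup.closure {u, v} ≤ G := fun hu hv => (Subgroup.closure_le _).2
    (pair_subset (derivedRigidStabilizer_le hu.mem) (derivedRigidStabilizer_le hv.mem))
  by_cases hne : a = c ∧ b = d
  · obtain ⟨rfl, rfl⟩ := hne
    obtain ⟨h, hh, hov⟩ := not_isBlock_iff.1 hb
    have hv' := hv.conj hPL hE hh
    rw [← hv.image_activeComponents_eq hPL hE ho' hh hov, ← activeComponents_conj hPL hE hh]
    exact hu.activeComponents_eq hPL hv' <| exists_hasNonblockOrbital_of_two_orbitals hPL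
      (hle hu hv') (Subgroup.subset_closure (mem_insert _ _))
      (Subgroup.subset_closure (mem_insert_of_mem _ rfl)) ho (ho'.conj (hPL h hh)) hb
      (mt (isBlock_ap_iff hPL hh).1 hb) hov.2.1 hov.1 fun e => hov.2.2 ⟨e.1.symm, e.2.symm⟩
  · exact hu.activeComponents_eq hPL hv <| exists_hasNonblockOrbital_of_two_orbitals hPL
      (hle hu hv) (Subgroup.subset_closure (mem_insert _ _))
      (Subgroup.subset_closure (mem_insert_of_mem _ rfl)) ho ho' hb hb'
      (hz.1.trans hz'.2) (hz'.1.trans hz.2) hne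

end MinimallyActive

section Core

open Filter Topology
open scoped commutatorElement

variable {G : Subgroup PermR} {E S : Set ℝ} {X : Set PermR} {g w x : PermR}
  {a b z z₀ α β : ℝ}

/-- The subgroup of the elements of the derived rigid stabilizer of `E` that are trivial on all
components of `E` whose left endpoint is not in `S`. -/
def activeSubgroup (G : Subgroup PermR) (E S : Set ℝ) : Subgroup PermR where
  carrier := {x | x ∈ derivedRigidStabilizer G E ∧ activeComponents E x ⊆ S}
  one_mem' := ⟨one_mem _, fun _ ⟨_, _, _, _, hm⟩ => (hm (ap_one _)).elim⟩
  mul_mem' := by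
    rintro x y ⟨hx, hxS⟩ ⟨hy, hyS⟩
    refine ⟨mul_mem hx hy, fun α ⟨β, hc, z, hz, hm⟩ => ?_⟩
    by_cases hxz : ap x z = z
    · exact hyS ⟨β, hc, z, hz, by rwa [ap_mul, hxz] at hm⟩
    · exact hxS ⟨β, hc, z, hz, hxz⟩
  inv_mem' := fun {x} ⟨hx, hxS⟩ => ⟨inv_mem hx, fun α ⟨β, hc, z, hz, hm⟩ =>
    hxS ⟨β, hc, z, hz, mt ap_inv_eq_self hm⟩⟩

theorem activeSubgroup_le : activeSubgroup G E S ≤ G :=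
  fun _ hx => derivedRigidStabilizer_le hx.1

theorem conj_mem_activeSubgroup (hPL : ∀ g ∈ G, IsPL g) (hE : IsInvariant G E) (hg : g ∈ G)
    (hS : ap g '' S ⊆ S) (hx : x ∈ activeSubgroup G E S) :
    g⁻¹ * x * g ∈ activeSubgroup G E S :=
  ⟨conj_mem_derivedRigidStabilizer hE hg hx.1,
    (activeComponents_conj hPL hE hg x).trans_subset ((image_mono hx.2).trans hS)⟩

theorem IsMinimallyActive.of_mem_activeSubgroup (hPL : ∀ g ∈ G, IsPL g)
    (hw : IsMinimallyActive G E w) (hx : x ∈ activeSubgroup G E (activeComponents E w))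
    (hxb : HasNonblockOrbital G x) :
    IsMinimallyActive G E x ∧ activeComponents E x = activeComponents E w := by
  have heq := hw.activeComponents_eq_of_subset hPL hx.1 hxb hx.2
  exact ⟨⟨hx.1, heq ▸ hw.ncard_le⟩, heq⟩

theorem IsMinimallyActive.exists_mem_iteratedCommutator (hPL : ∀ g ∈ G, IsPL g)
    (hE : IsInvariant G E) (hw : IsMinimallyActive G E w) (hwb : HasNonblockOrbital G w) (n : ℕ) :
    ∃ x ∈ iteratedCommutator (activeSubgroup G E (activeComponents E w)) n,
      HasNonblockOrbital G x := by
  induction n with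
  | zero => exact ⟨w, ⟨hw.mem, subset_rfl⟩, hwb⟩
  | succ n ih =>
    obtain ⟨x, hx, hxb⟩ := ih
    obtain ⟨hxm, hxw⟩ := hw.of_mem_activeSubgroup hPL (iteratedCommutator_le_self _ _ hx) hxb
    obtain ⟨a, b, ho, hb⟩ := hxb
    obtain ⟨h, hh, hov⟩ := not_isBlock_iff.1 hb
    have himage := hxm.image_activeComponents_eq hPL hE ho hh hov
    have hxh := conj_mem_iteratedCommutator (g := h⁻¹) (n := n) (fun y hy => by
      simpa only [MulAut.conj_apply, inv_inv] using
        conj_mem_activeSubgroup hPL hE hh (hxw ▸ himage.subset) hy) hx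
    rw [MulAut.conj_apply, inv_inv] at hxh
    exact hov.exists_hasNonblockOrbital_commutator hPL hh
      ((iteratedCommutator_le_self _ n).trans activeSubgroup_le) ho hx hxh

theorem nonblockUnion_isMinimallyActive (hPL : ∀ g ∈ G, IsPL g) (hXf : X.Finite)
    (hX : Subgroup.closure X = G) (hE : Minimal (IsAdmissible G) E) :
    nonblockUnion G {x | IsMinimallyActive G E x} = E := by
  have hEinv := hE.prop.isNonblockUnion.invariant
  have hF := isNonblockUnion_nonblockUnion hPL (S := {x | IsMinimallyActive G E x})
    (fun x hx => derivedRigidStabilizer_le hx.mem) fun g hg x hx => hx.conj hPL hEinv hg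
  refine hE.eq_of_subset ⟨hF, ?_⟩ fun z ⟨x, hx, a, b, ho, _, hz⟩ => by_contra fun hzE =>
    ho.ap_ne hz (ap_eq_self_of_mem_derivedRigidStabilizer hx.mem hzE)
  obtain ⟨w, hw, hwb⟩ := hE.prop.exists_isMinimallyActive
  obtain ⟨x, hx, hxb⟩ := hw.exists_mem_iteratedCommutator hPL hEinv hwb ((BreakSet X).ncard + 2)
  refine ⟨x, iteratedCommutator_le_derivedRigidStabilizer hPL hXf hX hF.invariant
    activeSubgroup_le (fun y hy a b ho hb t ht => ?_) hx, hxb⟩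
  exact ⟨y, (hw.of_mem_activeSubgroup hPL hy ⟨a, b, ho, hb⟩).1, a, b, ho, hb, ht⟩

/-- The set of active components of a minimally active element is locally constant along its
non-block orbitals, hence constant on components. -/
theorem exists_isMinimallyActive_of_mem_component (hPL : ∀ g ∈ G, IsPL g) (hXf : X.Finite)
    (hX : Subgroup.closure X = G) (hE : Minimal (IsAdmissible G) E) (hZ : IsComponent E α β)
    (hw : IsMinimallyActive G E w) (ho : IsOrbital w a b) (hb : ¬ IsBlock G a b)
    (hz₀ : z₀ ∈ Ioo a b) (hz₀' : z₀ ∈ Ioo α β) (hz : z ∈ Ioo α β) :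
    ∃ x, IsMinimallyActive G E x ∧ activeComponents E x = activeComponents E w ∧
      ∃ c d, IsOrbital x c d ∧ ¬ IsBlock G c d ∧ z ∈ Ioo c d := by
  have hEinv := hE.prop.isNonblockUnion.invariant
  have hcover (t) (ht : t ∈ Ioo α β) : ∃ x, IsMinimallyActive G E x ∧
      ∃ c d, IsOrbital x c d ∧ ¬ IsBlock G c d ∧ t ∈ Ioo c d :=
    (nonblockUnion_isMinimallyActive hPL hXf hX hE).superset (hZ.2.1 ht)
  choose! f hf c d hoc hbc hcd using hcover
  have hconst : activeComponents E (f z) = activeComponents E (f z₀) := by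
    refine isPreconnected_Ioo.induction₂
      (fun s t => activeComponents E (f s) = activeComponents E (f t)) (fun s hs => ?_)
      (fun _ _ _ _ _ _ => Eq.trans) (fun _ _ _ _ => Eq.symm) hz hz₀'
    filter_upwards [self_mem_nhdsWithin,
      mem_nhdsWithin_of_mem_nhds (isOpen_Ioo.mem_nhds (hcd s hs))] with t ht hts
    exact (hf s hs).activeComponents_eq_of_mem_Ioo hPL hEinv (hf t ht) (hoc s hs) (hbc s hs)
      (hoc t ht) (hbc t ht) hts (hcd t ht)
  refine ⟨f z, hf z hz, hconst.trans ?_, c z, d z, hoc z hz, hbc z hz, hcd z hz⟩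
  exact (hf z₀ hz₀').activeComponents_eq_of_mem_Ioo hPL hEinv hw (hoc z₀ hz₀') (hbc z₀ hz₀') ho
    hb (hcd z₀ hz₀') hz₀

/-- A group `R` of elements of `G` supported near the component `(α, β)` of the nonblock union `E`:
it is normalized by the stabilizer of the component, has germs trivial at both endpoints and no
fixed points inside, and its elements that are trivial on `(α, β)` have only blocks as orbitals. -/
structure IsCore (G R : Subgroup PermR) (E : Set ℝ) (α β : ℝ) : Prop where
  isNonblockUnion : IsNonblockUnion G E
  isComponent : IsComponent E α β
  le : R ≤ intervalStabilizer G α β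
  le_fixer_left : R ≤ fixer (𝓝[≥] α)
  le_fixer_right : R ≤ fixer (𝓝[≤] β)
  conj_mem : ∀ g ∈ intervalStabilizer G α β, ∀ x ∈ R, g⁻¹ * x * g ∈ R
  exists_ap_ne : ∀ z ∈ Ioo α β, ∃ x ∈ R, ap x z ≠ z
  not_hasNonblockOrbital : ∀ x ∈ R, (∀ z ∈ Ioo α β, ap x z = z) → ¬ HasNonblockOrbital G x

theorem IsMinimallyActive.isCore (hPL : ∀ g ∈ G, IsPL g) (hXf : X.Finite)
    (hX : Subgroup.closure X = G) (hE : Minimal (IsAdmissible G) E) (hZ : IsComponent E α β)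
    (hw : IsMinimallyActive G E w) (ho : IsOrbital w a b) (hb : ¬ IsBlock G a b)
    (hz₀ : z₀ ∈ Ioo a b) (hz₀' : z₀ ∈ Ioo α β) :
    IsCore G (activeSubgroup G E (activeComponents E w)) E α β := by
  have hEinv := hE.prop.isNonblockUnion.invariant
  have hcover {z} (hz : z ∈ Ioo α β) := exists_isMinimallyActive_of_mem_component hPL hXf hX hE
    hZ hw ho hb hz₀ hz₀' hz
  have hcomm : derivedRigidStabilizer G E ≤ ⁅intervalStabilizer G α β, intervalStabilizer G α β⁆ :=
    Subgroup.commutator_mono hZ.rigidStabilizer_le hZ.rigidStabilizer_le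
  refine ⟨hE.prop.isNonblockUnion, hZ, fun x hx => hZ.derivedRigidStabilizer_le hx.1,
    fun x hx => commutator_intervalStabilizer_le_fixer_nhdsGE hPL (hcomm hx.1),
    fun x hx => commutator_intervalStabilizer_le_fixer_nhdsLE hPL (hcomm hx.1),
    fun g hg x hx => conj_mem_activeSubgroup hPL hEinv hg.1 ?_ hx, fun z hz => ?_,
    fun x hx hfix hxb => ?_⟩
  · have hG := hPL g hg.1
    obtain ⟨x, hx, hxw, c, d, hoc, hbc, hcd⟩ :=
      hcover ((intervalStabilizer_le_setStabilizer hPL hg _).2 hz₀')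
    have heq := (hw.conj hPL hEinv hg.1).activeComponents_eq_of_mem_Ioo hPL hEinv hx
      (ho.conj hG) (mt (isBlock_ap_iff hPL hg.1).1 hb) hoc hbc
      ⟨hG.lt.2 hz₀.1, hG.lt.2 hz₀.2⟩ hcd
    rw [activeComponents_conj hPL hEinv hg.1, hxw] at heq
    exact heq.subset
  · obtain ⟨x, hx, hxw, c, d, hoc, -, hcd⟩ := hcover hz
    exact ⟨x, ⟨hx.mem, hxw.subset⟩, hoc.ap_ne hcd⟩
  · have hα : α ∈ activeComponents E x := by
      rw [(hw.of_mem_activeSubgroup hPL hx hxb).2]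
      exact ⟨β, hZ, z₀, hz₀', ho.ap_ne hz₀⟩
    obtain ⟨β', hc, z, hz, hm⟩ := hα
    have hβ : β' ≤ β := not_lt.1 fun h => hZ.2.2.2 (hc.2.1 ⟨hZ.1, h⟩)
    exact hm (hfix z ⟨hz.1, hz.2.trans_le hβ⟩)

theorem exists_isCore (hPL : ∀ g ∈ G, IsPL g) (hXf : X.Finite) (hX : Subgroup.closure X = G)
    (hns : ¬ Group.IsSolvable G) : ∃ R E α β, IsCore G R E α β := by
  obtain ⟨E, hE⟩ := exists_minimal_isAdmissible hPL hXf hX hns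
  obtain ⟨w, hw, a, b, ho, hb⟩ := hE.prop.exists_isMinimallyActive
  obtain ⟨z, hz⟩ := exists_between ho.1
  have hzE : z ∈ E := by_contra fun hzE =>
    ho.ap_ne hz (ap_eq_self_of_mem_derivedRigidStabilizer hw.mem hzE)
  obtain ⟨α, β, hZ, hzZ⟩ := hE.prop.isNonblockUnion.exists_isComponent hPL hzE
  exact ⟨_, E, α, β, hw.isCore hPL hXf hX hE hZ ho hb hz hzZ⟩

end Core

section Slopes

open Filter Topology
open scoped Pointwise commutatorElement

variable {G R : Subgroup PermR} {E : Set ℝ} {X : Set PermR} {g h x : PermR}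
  {a e e' m m' z α β : ℝ}

/-- `x` is affine of slope `m > 0` on the nondegenerate interval `[a, e]`. -/
structure IsAffineOnRight (x : PermR) (a e m : ℝ) : Prop where
  lt : a < e
  pos : 0 < m
  ap_eq : ∀ z ∈ Icc a e, ap x z = ap x a + m * (z - a)

theorem IsPL.exists_isAffineOnRight (hx : IsPL x) (hae : a < e)
    (h : ∀ z ∈ Ioo a e, IsLocallyAffineAt x z) : ∃ m, IsAffineOnRight x a e m := by
  obtain ⟨m, hm, c, hmc⟩ := hx.exists_affineOn_Icc hae h
  exact ⟨m, hae, hm, fun z hz => by rw [hmc z hz, hmc a (left_mem_Icc.2 hae.le)]; ring⟩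

theorem IsPL.exists_exists_isAffineOnRight (hx : IsPL x) (a : ℝ) :
    ∃ e m, IsAffineOnRight x a e m := by
  obtain ⟨e, he, m, hm, c, hmc⟩ := hx.exists_affineOn_right a
  exact ⟨e, m, he, hm, fun z hz => by rw [hmc z hz, hmc a (left_mem_Icc.2 he.le)]; ring⟩

theorem IsAffineOnRight.slope_eq (hg : IsAffineOnRight g a e m) (hh : IsAffineOnRight h a e' m')
    (heq : ∀ᶠ z in 𝓝[≥] a, ap g z = ap h z) : m = m' := by
  have hIoc : ∀ᶠ z in 𝓝[>] a, z ∈ Ioc a e ∧ z ∈ Ioc a e' :=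
    .and (Ioc_mem_nhdsGT hg.lt) (Ioc_mem_nhdsGT hh.lt)
  obtain ⟨z, hz, hze, hze'⟩ :=
    ((heq.filter_mono (nhdsWithin_mono a Ioi_subset_Ici_self)).and hIoc).exists
  rw [hg.ap_eq z (Ioc_subset_Icc_self hze), hh.ap_eq z (Ioc_subset_Icc_self hze'),
    heq.self_of_nhdsWithin self_mem_Ici, add_right_inj] at hz
  exact mul_right_cancel₀ (sub_pos.2 hze.1).ne' hz

theorem IsAffineOnRight.mul (hg : IsAffineOnRight g a e m)
    (hx : IsAffineOnRight x (ap g a) (ap g e) m') (hgPL : IsPL g) :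
    IsAffineOnRight (g * x) a e (m' * m) :=
  ⟨hg.lt, mul_pos hx.pos hg.pos, fun z hz => by
    rw [ap_mul, ap_mul, hx.ap_eq _ ⟨hgPL.le.2 hz.1, hgPL.le.2 hz.2⟩, hg.ap_eq z hz]; ring⟩

theorem IsComponent.eventually_slope_mul_le (hPL : ∀ g ∈ G, IsPL g) (hE : IsInvariant G E)
    (hc : IsComponent E α β) (hfix : intervalStabilizer G α β ≤ fixer (𝓝[≥] α)) (p : ℝ) :
    ∀ᶠ ε in 𝓝[>] (0 : ℝ), ∀ g ∈ G, p ∈ Ioo (ap g α) (ap g β) →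
      ∀ e m, IsAffineOnRight g α e m → m * ε ≤ p - ap g α := by
  by_cases hex : ∃ h ∈ G, p ∈ Ioo (ap h α) (ap h β)
  · obtain ⟨h, hh, hp⟩ := hex
    obtain ⟨e₀, m₀, h₀⟩ := (hPL h hh).exists_exists_isAffineOnRight α
    filter_upwards [Ioo_mem_nhdsGT (div_pos (sub_pos.2 hp.1) h₀.pos)] with ε hε g hg hgp e m hm
    have hα : ap g α = ap h α := ((hc.conj hPL hE hg).unique (hc.conj hPL hE hh) hgp hp).1
    have hgh : g * h⁻¹ ∈ fixer (𝓝[≥] α) := hfix <|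
      hc.mem_intervalStabilizer_of_ap_left_eq hPL hE (mul_mem hg (inv_mem hh))
        (by rw [ap_mul, hα, ap_inv_ap])
    have hslope : m = m₀ := hm.slope_eq h₀ <| (mem_fixer.1 hgh).mono fun z hz => by
      rwa [ap_mul, ap_inv_eq_iff] at hz
    rw [hα, hslope, mul_comm]
    exact ((lt_div_iff₀ h₀.pos).1 hε.2).le
  · exact .of_forall fun ε g hg hgp => (hex ⟨g, hg, hgp⟩).elim

/- A uniform `ε` exists because the image of `[α, α + ε]` under `g` never reaches the first
breakpoint of a generator to the right of `ap g α`. -/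
theorem IsNonblockUnion.exists_forall_isAffineOnRight (hPL : ∀ g ∈ G, IsPL g) (hXf : X.Finite)
    (hX : Subgroup.closure X = G) (hE : IsNonblockUnion G E) (hc : IsComponent E α β)
    (hfix : intervalStabilizer G α β ≤ fixer (𝓝[≥] α)) :
    ∃ e, ∀ g ∈ G, ∃ m, IsAffineOnRight g α e m := by
  have hXG : ∀ x ∈ X ∪ X⁻¹, x ∈ G := by
    rintro x (hx | hx)
    · exact hX ▸ Subgroup.subset_closure hx
    · exact inv_mem_iff.1 (hX ▸ Subgroup.subset_closure hx)
  have hfin : (BreakSet (X ∪ X⁻¹)).Finite :=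
    finite_breakSet (hXf.union hXf.inv) fun x hx => hPL x (hXG x hx)
  obtain ⟨ε, hε, hε₀, hεβ⟩ := (((eventually_all_finite hfin).2 fun p _ =>
    hc.eventually_slope_mul_le hPL hE.invariant hfix p).and
      (Ioo_mem_nhdsGT (sub_pos.2 hc.1))).exists
  have hα : α < α + ε := lt_add_of_pos_right α hε₀
  have hstep : ∀ x ∈ X ∪ X⁻¹, ∀ g ∈ G, (∃ m, IsAffineOnRight g α (α + ε) m) →
      ∃ m, IsAffineOnRight (g * x) α (α + ε) m := by
    rintro x hx g hg ⟨m, hm⟩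
    have hgPL := hPL g hg
    have hlt : ap g (α + ε) < ap g β := hgPL.lt.2 (by linarith)
    obtain ⟨m', hm'⟩ := (hPL x (hXG x hx)).exists_isAffineOnRight (hgPL.lt.2 hα) fun y hy => by
      by_contra hbreak
      have hyβ : y ∈ Ioo (ap g α) (ap g β) := ⟨hy.1, hy.2.trans hlt⟩
      have hyE : y ∈ E := (hc.conj hPL hE.invariant hg).2.1 hyβ
      have hle := hε y (mem_biUnion hx ⟨hE.subset_Ioo hPL hyE, hbreak⟩) g hg hyβ _ m hm
      have hε' := hm.ap_eq _ (right_mem_Icc.2 hα.le)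
      rw [add_sub_cancel_left] at hε'
      linarith [hy.2]
    exact ⟨m' * m, hm.mul hm' hgPL⟩
  refine ⟨α + ε, fun g hg => ?_⟩
  rw [← hX] at hg
  induction hg using Subgroup.closure_induction_right with
  | one => exact ⟨1, hα, one_pos, fun z _ => by rw [ap_one, ap_one]; ring⟩
  | mul_right g hg x hx ih => exact hstep x (.inl hx) g (hX ▸ hg) ih
  | mul_inv_cancel g hg x hx ih => exact hstep x⁻¹ (.inr (inv_mem_inv.2 hx)) g (hX ▸ hg) ih

theorem IsCore.exists_notMem_fixer (hPL : ∀ g ∈ G, IsPL g) (hXf : X.Finite)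
    (hX : Subgroup.closure X = G) (hC : IsCore G R E α β) :
    ∃ g ∈ intervalStabilizer G α β, g ∉ fixer (𝓝[≥] α) := by
  by_contra! hfix
  obtain ⟨e, he⟩ :=
    hC.isNonblockUnion.exists_forall_isAffineOnRight hPL hXf hX hC.isComponent hfix
  have hαe : α < e := (he 1 (one_mem G)).choose_spec.lt
  obtain ⟨z, hαz, hz⟩ := exists_between (lt_min hαe hC.isComponent.1)
  obtain ⟨hze, hzβ⟩ := lt_min_iff.1 hz
  obtain ⟨x, hx, hxz⟩ := hC.exists_ap_ne z ⟨hαz, hzβ⟩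
  obtain ⟨m, hm⟩ := he x (hC.le hx).1
  have hone : IsAffineOnRight 1 α e 1 := ⟨hαe, one_pos, fun z _ => by rw [ap_one, ap_one]; ring⟩
  have hslope : m = 1 := hm.slope_eq hone <|
    (mem_fixer.1 (hC.le_fixer_left hx)).mono fun z hz => by rw [hz, ap_one]
  apply hxz
  rw [hm.ap_eq z ⟨hαz.le, hze.le⟩, (hC.le hx).2.1, hslope]
  ring

/- If the orbital of `g` at `α` is all of `(α, β)`, then `g` is corrected by an element of `R`
that has trivial germ at `α` and moves a point of `(α, β)` far enough to create a fixed point. -/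
theorem IsCore.exists_orbital_of_lt_ap (hPL : ∀ g ∈ G, IsPL g) (hC : IsCore G R E α β)
    (hg : g ∈ intervalStabilizer G α β) (hgα : g ∉ fixer (𝓝[≥] α)) (hz : z ∈ Ioo α β)
    (hgz : z < ap g z) : ∃ f ∈ intervalStabilizer G α β, ∃ q < β, IsOrbital f α q := by
  obtain ⟨d, hd⟩ := (hPL g hg.1).exists_orbital_right hg.2.1 hgα
  rcases lt_or_ge d β with hdβ | hβd
  · exact ⟨g, hg, d, hdβ, hd⟩
  obtain ⟨y, hy, hyz⟩ := exists_ap_lt (fun k hk => hPL k (hC.le hk).1) hC.exists_ap_ne hz.2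
    (fun k hk => ((intervalStabilizer_le_setStabilizer hPL (hC.le hk) _).2 hz).1.le)
    ((intervalStabilizer_le_setStabilizer hPL (inv_mem hg) _).2 hz).1
  obtain ⟨e, he, hye⟩ := mem_fixer_nhdsGE.1 (hC.le_fixer_left hy)
  obtain ⟨n, hn⟩ := hd.exists_zpow_ap_lt (hPL g hg.1) ⟨hz.1, hz.2.trans_le hβd⟩ (lt_min he hz.1)
  obtain ⟨hte, htz⟩ := lt_min_iff.1 hn
  set t := ap (g ^ n) z
  have hαt : α < t := ((intervalStabilizer_le_setStabilizer hPL (zpow_mem hg n) _).2 hz).1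
  have htg : t < ap g t := by
    rw [← ap_mul, (Commute.zpow_self g n).eq, ap_mul]
    exact (hPL _ (zpow_mem hg.1 n)).lt.2 hgz
  have hf : y * g ∈ intervalStabilizer G α β := mul_mem (hC.le hy) hg
  have hfPL := hPL _ hf.1
  have hft : t ≤ ap (y * g) t := by rw [ap_mul, hye t ⟨hαt.le, hte.le⟩]; exact htg.le
  have hfz : ap (y * g) z ≤ z := by
    have := (hPL g hg.1).lt.2 hyz
    rw [ap_ap_inv] at this
    rw [ap_mul]
    exact this.le
  obtain ⟨c, hc, hfc⟩ := exists_mem_Icc_isFixedPt hfPL.continuous.continuousOn htz.le hft hfz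
  obtain ⟨q, hq⟩ := hfPL.exists_orbital_right hf.2.1 fun hfα =>
    hgα ((Subgroup.mul_mem_cancel_left _ (hC.le_fixer_left hy)).1 hfα)
  refine ⟨_, hf, q, not_le.1 fun hβq => ?_, hq⟩
  exact hq.ap_ne ⟨hαt.trans_le hc.1, (hc.2.trans_lt hz.2).trans_le hβq⟩ hfc

theorem IsCore.exists_orbital (hPL : ∀ g ∈ G, IsPL g) (hXf : X.Finite)
    (hX : Subgroup.closure X = G) (hC : IsCore G R E α β) :
    ∃ f ∈ intervalStabilizer G α β, ∃ q < β, IsOrbital f α q := by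
  obtain ⟨g, hg, hgα⟩ := hC.exists_notMem_fixer hPL hXf hX
  obtain ⟨z, hz⟩ := exists_between hC.isComponent.1
  rcases lt_trichotomy z (ap g z) with hlt | heq | hgt
  · exact hC.exists_orbital_of_lt_ap hPL hg hgα hz hlt
  · obtain ⟨q, hq⟩ := (hPL g hg.1).exists_orbital_right hg.2.1 hgα
    exact ⟨g, hg, q, not_le.1 fun hβq => hq.ap_ne ⟨hz.1, hz.2.trans_le hβq⟩ heq.symm, hq⟩
  · refine hC.exists_orbital_of_lt_ap hPL (inv_mem hg) (mt inv_mem_iff.1 hgα) hz ?_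
    rwa [← (hPL g hg.1).lt, ap_ap_inv]

end Slopes

section PingPong

open Filter Topology
open scoped commutatorElement

variable {G : Subgroup PermR} {I C D E S : Set ℝ} {a b g t u v w : PermR} {z α β : ℝ} {i j k m : ℤ}

/-- The restriction homomorphism from the stabilizer of `I` to the permutations of `I`, which act
on the right like those in `PermR`. -/
def restrictHom (I : Set ℝ) : setStabilizer I →* (Equiv.Perm I)ᵐᵒᵖ where
  toFun g := .op (g.1.unop.subtypePerm g.2)
  map_one' := rfl
  map_mul' _ _ := rfl

theorem restrictHom_eq_iff {a b : setStabilizer I} :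
    restrictHom I a = restrictHom I b ↔ ∀ z ∈ I, ap a z = ap b z := by
  refine MulOpposite.op_inj.trans (Equiv.ext_iff.trans ?_)
  exact ⟨fun h z hz => congrArg Subtype.val (h ⟨z, hz⟩), fun h z => Subtype.ext (h z z.2)⟩

theorem mem_setStabilizer_of_eqOn (hb : b ∈ setStabilizer S) (h : ∀ z ∈ S, ap a z = ap b z) :
    a ∈ setStabilizer S := by
  refine fun z => ⟨fun haz => ?_, fun hz => h z hz ▸ (hb z).2 hz⟩
  have hy : ap b⁻¹ (ap a z) ∈ S := (inv_mem hb _).2 haz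
  have hay : ap a (ap b⁻¹ (ap a z)) = ap a z := by rw [h _ hy, ap_ap_inv]
  rwa [ap_injective a hay] at hy

theorem ap_zpow_eq_of_eqOn (hb : b ∈ setStabilizer S) (h : ∀ z ∈ S, ap a z = ap b z) (m : ℤ)
    (hz : z ∈ S) : ap (a ^ m) z = ap (b ^ m) z := by
  have hab : restrictHom S ⟨a, mem_setStabilizer_of_eqOn hb h⟩ = restrictHom S ⟨b, hb⟩ :=
    restrictHom_eq_iff.2 h
  have hm := congrArg (· ^ m) hab
  simp only [← map_zpow] at hm
  exact restrictHom_eq_iff.1 hm z hz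

theorem ap_mulAut_conj (g u : PermR) (z : ℝ) :
    ap g (ap (MulAut.conj g u) z) = ap u (ap g z) := by
  rw [MulAut.conj_apply, ap_mul, ap_mul, ap_ap_inv]

theorem ap_mem_of_ap_conj_ne (hg : g ∈ setStabilizer I) (hu : u ∈ fixer (𝓟 (I \ C)))
    (hz : z ∈ I) (h : ap (MulAut.conj g u) z ≠ z) : ap g z ∈ C := by
  by_contra hC
  refine h (ap_injective g ?_)
  rw [ap_mulAut_conj, mem_fixer_principal.1 hu _ ⟨(hg z).2 hz, hC⟩]

/-- A configuration on `I` producing Brin's group: inside `I`, the map `w` is supported in `C` and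
its nonzero powers displace `D ⊆ C`, while `t` maps `C` into `D`. -/
structure IsPingPong (I C D : Set ℝ) (w t : PermR) : Prop where
  mem_setStabilizer : w ∈ setStabilizer I
  mem_setStabilizer' : t ∈ setStabilizer I
  subset : C ⊆ I
  subset' : D ⊆ C
  nonempty : D.Nonempty
  mem_fixer : w ∈ fixer (𝓟 (I \ C))
  mapsTo : MapsTo (ap t) C D
  ap_zpow_notMem : ∀ m : ℤ, m ≠ 0 → ∀ z ∈ D, ap (w ^ m) z ∉ D

theorem IsPingPong.ap_zpow_mem (h : IsPingPong I C D w t) (hik : i < k)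
    (hz : ap (t ^ i) z ∈ C) : ap (t ^ k) z ∈ D := by
  have hsucc (l : ℤ) (hl : ap (t ^ l) z ∈ C) : ap (t ^ (l + 1)) z ∈ D := by
    rw [zpow_add_one, ap_mul]
    exact h.mapsTo hl
  induction k, hik using Int.leInduction with
  | base => exact hsucc i hz
  | succ l _ ih => exact hsucc l (h.subset' ih)

theorem IsPingPong.conj_zpow_mem_setStabilizer (h : IsPingPong I C D w t)
    (hu : u ∈ setStabilizer I) (i : ℤ) : MulAut.conj (t ^ i) u ∈ setStabilizer I :=
  mul_mem (mul_mem (zpow_mem h.mem_setStabilizer' i) hu)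
    (inv_mem (zpow_mem h.mem_setStabilizer' i))

/-- A point moved by the conjugate would be carried into `C` by `t ^ i` after applying the inverse
of the `k`-th conjugate of `w ^ m`; applying `t ^ k`, this would give a power of `w` mapping a
point of `D` into `D`. -/
theorem IsPingPong.ap_conj_eq_self (h : IsPingPong I C D w t) (hu : u ∈ fixer (𝓟 (I \ C)))
    (hik : i < k) (hjk : j < k) (hm : m ≠ 0) (hz : z ∈ I) (hzj : ap (t ^ j) z ∈ C) :
    ap (MulAut.conj (MulAut.conj (t ^ k) w ^ m) (MulAut.conj (t ^ i) u)) z = z := by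
  have hW : MulAut.conj (t ^ k) w ^ m = MulAut.conj (t ^ k) (w ^ m) := (map_zpow _ _ _).symm
  have hWI := h.conj_zpow_mem_setStabilizer (zpow_mem h.mem_setStabilizer m) k
  by_contra hne
  rw [hW, ← MulAut.mul_apply, ← map_mul] at hne
  have hC := ap_mem_of_ap_conj_ne (mul_mem hWI (zpow_mem h.mem_setStabilizer' i)) hu hz hne
  rw [ap_mul] at hC
  have hD := h.ap_zpow_mem hik hC
  rw [ap_mulAut_conj] at hD
  exact h.ap_zpow_notMem m hm _ (h.ap_zpow_mem hjk hzj) hD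

theorem IsPingPong.commutatorElement_mem_fixer (h : IsPingPong I C D w t)
    (hu : u ∈ setStabilizer I) (huC : u ∈ fixer (𝓟 (I \ C))) (hv : v ∈ setStabilizer I)
    (hvC : v ∈ fixer (𝓟 (I \ C))) (hik : i < k) (hjk : j < k) (hm : m ≠ 0) :
    ⁅MulAut.conj (MulAut.conj (t ^ k) w ^ m) (MulAut.conj (t ^ i) u), MulAut.conj (t ^ j) v⁆ ∈
      fixer (𝓟 I) := by
  have hWI := zpow_mem (h.conj_zpow_mem_setStabilizer h.mem_setStabilizer k) m
  refine commutatorElement_mem_fixer_of_forall_or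
    (mul_mem (mul_mem hWI (h.conj_zpow_mem_setStabilizer hu i)) (inv_mem hWI))
    (h.conj_zpow_mem_setStabilizer hv j) fun z hz => or_iff_not_imp_right.2 fun hne => ?_
  exact h.ap_conj_eq_self huC hik hjk hm hz
    (ap_mem_of_ap_conj_ne (zpow_mem h.mem_setStabilizer' j) hvC hz hne)

theorem IsPingPong.not_commute (h : IsPingPong I C D w t) :
    ¬ Commute w (MulAut.conj t w) := by
  intro hc
  obtain ⟨z, hz⟩ := h.nonempty
  have hzC : ap (MulAut.conj t w) z ∉ C := fun hC => by
    have hD := h.mapsTo hC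
    rw [ap_mulAut_conj, ← zpow_one w] at hD
    exact h.ap_zpow_notMem 1 one_ne_zero _ (h.mapsTo (h.subset' hz)) hD
  have hzI : ap (MulAut.conj t w) z ∈ I := by
    have := h.conj_zpow_mem_setStabilizer h.mem_setStabilizer 1
    rw [zpow_one] at this
    exact (this z).2 (h.subset (h.subset' hz))
  have hwz : ap w z = z := ap_injective (MulAut.conj t w) <| by
    rw [← ap_mul, hc.eq, ap_mul, mem_fixer_principal.1 h.mem_fixer _ ⟨hzI, hzC⟩]
  refine h.ap_zpow_notMem 1 one_ne_zero z hz ?_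
  rwa [zpow_one, hwz]

theorem IsPingPong.mem_setStabilizer_support (h : IsPingPong I C D w t) : w ∈ setStabilizer C := by
  intro z
  by_cases hz : z ∈ I \ C
  · rw [mem_fixer_principal.1 h.mem_fixer z hz]
  · refine ⟨fun hwz => not_not.1 fun hzC => hz ⟨?_, hzC⟩, fun hzC => not_not.1 fun hwz => hwz ?_⟩
    · exact (h.mem_setStabilizer z).1 (h.subset hwz)
    · have hwI := (h.mem_setStabilizer z).2 (h.subset hzC)
      rwa [ap_injective w (mem_fixer_principal.1 h.mem_fixer _ ⟨hwI, hwz⟩)]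

theorem IsPingPong.isBrinFamily_restrictHom (h : IsPingPong I C D w t) :
    IsBrinFamily fun i => restrictHom I
      ⟨MulAut.conj (t ^ i) w, h.conj_zpow_mem_setStabilizer h.mem_setStabilizer i⟩ := by
  intro i j k m hik hjk hm
  have hcomm := h.commutatorElement_mem_fixer h.mem_setStabilizer h.mem_fixer h.mem_setStabilizer
    h.mem_fixer hik hjk hm
  rw [MulAut.conj_apply, ← map_zpow, ← map_inv, ← map_mul, ← map_mul,
    ← commutatorElement_eq_one_iff_commute, ← map_commutatorElement, ← map_one (restrictHom I)]
  refine restrictHom_eq_iff.2 fun z hz => ?_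
  exact (mem_fixer_principal.1 hcomm z hz).trans (ap_one z).symm

theorem IsPingPong.exists_mem_iteratedCommutator_eqOn (h : IsPingPong I C D w t)
    {T : Subgroup PermR} (hTI : T ≤ setStabilizer I)
    (hT : ∀ i : ℤ, i ≤ 0 → MulAut.conj (t ^ i) w ∈ T) (n : ℕ) (hj : j = -2 * n) :
    ∃ c ∈ iteratedCommutator T n, ∀ z ∈ I, ap c z =
      ap ⁅(MulAut.conj (t ^ (j - 1)) w)⁻¹, (MulAut.conj (t ^ j) w)⁻¹⁆ z := by
  have hmem := h.isBrinFamily_restrictHom.commutatorElement_mem_iteratedCommutator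
    (T := (T.subgroupOf (setStabilizer I)).map (restrictHom I))
    (fun i hi => ⟨_, hT i hi, rfl⟩) n hj.le
  rw [← map_iteratedCommutator, ← map_inv, ← map_inv, ← map_commutatorElement] at hmem
  obtain ⟨c, hc, hceq⟩ := hmem
  refine ⟨c, ?_, restrictHom_eq_iff.1 hceq⟩
  have hmap := Subgroup.mem_map_of_mem (setStabilizer I).subtype hc
  rwa [map_iteratedCommutator, Subgroup.subgroupOf_map_subtype, inf_eq_left.2 hTI] at hmap

/-- On the preimage of `C` under `t ^ (j - 1)`, the commutator of the two conjugates of `w⁻¹` given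
by `exists_mem_iteratedCommutator_eqOn` agrees with the `(j - 1)`-st conjugate of `w⁻¹`, since the
other factor is trivial there. -/
theorem IsPingPong.exists_mem_iteratedCommutator (h : IsPingPong I C D w t) {T : Subgroup PermR}
    (hTI : T ≤ setStabilizer I) (hTC : T ≤ fixer (𝓟 (I \ C)))
    (hT : ∀ i : ℤ, i ≤ 0 → MulAut.conj (t ^ i) w ∈ T) (n : ℕ) :
    ∃ c ∈ iteratedCommutator T n, ∃ N : ℤ, ∃ D', IsPingPong I C D' c (t ^ N) := by
  obtain ⟨j, hj⟩ : ∃ j : ℤ, j = -2 * n := ⟨_, rfl⟩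
  obtain ⟨c, hc, hcI⟩ := h.exists_mem_iteratedCommutator_eqOn hTI hT n hj
  have hcT := iteratedCommutator_le_self T n hc
  have htI := zpow_mem h.mem_setStabilizer' (j - 1)
  set S := ap (t ^ (j - 1)) ⁻¹' C
  set b := MulAut.conj (t ^ (j - 1)) w⁻¹ with hb
  have hSI : S ⊆ I := fun z hz => (htI z).1 (h.subset hz)
  have hbS : b ∈ setStabilizer S := fun z => by
    rw [mem_preimage, ap_mulAut_conj]
    exact inv_mem h.mem_setStabilizer_support _
  have hcb : ∀ z ∈ S, ap c z = ap b z := fun z hz => by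
    have hbz := (hbS z).2 hz
    have hfix := h.ap_conj_eq_self (k := j) (m := -1) h.mem_fixer (sub_one_lt j) (sub_one_lt j)
      (by decide) (hSI hbz) hbz
    rw [zpow_neg_one, MulAut.conj_apply, inv_inv] at hfix
    rw [hcI z (hSI hz), commutatorElement_def, inv_inv, inv_inv, ← map_inv, ← hb, mul_assoc,
      mul_assoc, ap_mul, ← mul_assoc, hfix]
  refine ⟨c, hc, 2 - j, ap (t ^ (j - 1)) ⁻¹' D, hTI hcT, zpow_mem h.mem_setStabilizer' _,
    h.subset, fun z hz => ?_, h.nonempty.preimage (ap_surjective _), hTC hcT, fun z hz => ?_,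
    fun m hm z hz hcz => ?_⟩
  · have := h.ap_zpow_mem (i := j - 1) (k := 0) (by lia) (h.subset' hz)
    rw [zpow_zero, ap_one] at this
    exact h.subset' this
  · rw [mem_preimage, ← ap_mul, ← zpow_add, show 2 - j + (j - 1) = 1 by lia, zpow_one]
    exact h.mapsTo hz
  · rw [mem_preimage, ap_zpow_eq_of_eqOn hbS hcb m (h.subset' hz), hb, ← map_zpow,
      ap_mulAut_conj, inv_zpow'] at hcz
    exact h.ap_zpow_notMem (-m) (neg_ne_zero.2 hm) _ hz hcz

theorem IsPL.ap_zpow_notMem_Ioo (hw : IsPL w) {q : ℝ} (hwq : ap w q < q) (hm : m ≠ 0)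
    (hz : z ∈ Ioo (ap w q) q) : ap (w ^ m) z ∉ Ioo (ap w q) q := by
  have hsucc (k : ℤ) : ap (w ^ (k + 1)) q = ap (w ^ k) (ap w q) := by
    rw [add_comm, zpow_one_add, ap_mul]
  have hanti : Antitone fun k : ℤ => ap (w ^ k) q :=
    antitone_int_of_succ_le fun k => (hsucc k).trans_le ((hw.zpow k).le.2 hwq.le)
  rcases lt_or_gt_of_ne hm with hneg | hpos
  · have hq : q ≤ ap (w ^ (m + 1)) q := by
      simpa only [zpow_zero, ap_one] using hanti (show m + 1 ≤ 0 by lia)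
    rw [hsucc] at hq
    exact fun h => (hq.trans_lt ((hw.zpow m).lt.2 hz.1)).not_gt h.2
  · have hq : ap (w ^ m) q ≤ ap w q := by
      simpa only [zpow_one] using hanti (show 1 ≤ m by lia)
    exact fun h => (((hw.zpow m).lt.2 hz.2).trans_le hq).not_gt h.1

theorem IsCore.exists_ap_lt_self {R : Subgroup PermR} (hPL : ∀ g ∈ G, IsPL g)
    (hC : IsCore G R E α β) {q : ℝ} (hq : q ∈ Ioo α β) : ∃ w ∈ R, ap w q < q := by
  obtain ⟨x, hx, hne⟩ := hC.exists_ap_ne q hq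
  rcases lt_or_gt_of_ne hne with hlt | hgt
  · exact ⟨x, hx, hlt⟩
  · refine ⟨x⁻¹, inv_mem hx, ?_⟩
    rwa [← (hPL x (hC.le hx).1).lt, ap_ap_inv]

theorem IsCore.exists_mem_fixer_diff_Icc {R : Subgroup PermR} (hC : IsCore G R E α β)
    (hw : w ∈ R) {p q : ℝ} (hp : α < p) (hq : q < β) :
    ∃ p' ∈ Ioc α p, ∃ q' ∈ Ico q β, w ∈ fixer (𝓟 (Ioo α β \ Icc p' q')) := by
  obtain ⟨e, he, hfe⟩ := mem_fixer_nhdsGE.1 (hC.le_fixer_left hw)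
  obtain ⟨e', he', hfe'⟩ := mem_fixer_nhdsLE.1 (hC.le_fixer_right hw)
  refine ⟨min e p, ⟨lt_min he hp, min_le_right _ _⟩, max e' q, ⟨le_max_right _ _, max_lt he' hq⟩,
    mem_fixer_principal.2 fun z ⟨hz, hzC⟩ => ?_⟩
  rcases lt_or_ge z (min e p) with hlt | hge
  · exact hfe z ⟨hz.1.le, (hlt.trans_le (min_le_left _ _)).le⟩
  · have hgt : max e' q < z := not_le.1 fun hle => hzC ⟨hge, hle⟩
    exact hfe' z ⟨((le_max_left _ _).trans_lt hgt).le, hz.2.le⟩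

theorem IsCore.exists_isPingPong {R : Subgroup PermR} {X : Set PermR} (hPL : ∀ g ∈ G, IsPL g)
    (hXf : X.Finite) (hX : Subgroup.closure X = G) (hC : IsCore G R E α β) :
    ∃ w ∈ R, ∃ t ∈ intervalStabilizer G α β, ∃ C D, IsPingPong (Ioo α β) C D w t := by
  have hGI := intervalStabilizer_le_setStabilizer (α := α) (β := β) hPL
  have hRI (k) (hk : k ∈ R) {z} (hz : z ∈ Ioo α β) : ap k z ∈ Ioo α β :=
    (hGI (hC.le hk) z).2 hz
  obtain ⟨f, hf, q, hqβ, ho⟩ := hC.exists_orbital hPL hXf hX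
  have hq : q ∈ Ioo α β := ⟨ho.1, hqβ⟩
  obtain ⟨w, hw, hwq⟩ := hC.exists_ap_lt_self hPL hq
  obtain ⟨p', hp', q', hq', hwC⟩ := hC.exists_mem_fixer_diff_Icc hw (hRI w hw hq).1 hqβ
  have hpq : p' < q' := hp'.2.trans_lt (hwq.trans_le hq'.1)
  obtain ⟨k, hk, hkq⟩ := exists_ap_lt (fun h hh => hPL h (hC.le hh).1) hC.exists_ap_ne hq'.2
    (fun h hh => (hRI h hh ⟨hp'.1.trans hpq, hq'.2⟩).1.le) hq.1
  have hkPL := hPL k (hC.le hk).1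
  obtain ⟨n, hn⟩ := ho.exists_lt_zpow_ap (hPL f hf.1) (z := ap k p')
    ⟨(hRI k hk ⟨hp'.1, hpq.trans hq'.2⟩).1, (hkPL.lt.2 hpq).trans hkq⟩ hwq
  have ht : k * f ^ n ∈ intervalStabilizer G α β := mul_mem (hC.le hk) (zpow_mem hf n)
  have hfPL := (hPL f hf.1).zpow n
  refine ⟨w, hw, k * f ^ n, ht, Icc p' q', Ioo (ap w q) q, hGI (hC.le hw), hGI ht,
    fun z hz => ⟨hp'.1.trans_le hz.1, hz.2.trans_lt hq'.2⟩,
    fun z hz => ⟨hp'.2.trans hz.1.le, hz.2.le.trans hq'.1⟩, nonempty_Ioo.2 hwq, hwC,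
    fun z hz => ?_, fun m hm z hz => (hPL w (hC.le hw).1).ap_zpow_notMem_Ioo hwq hm hz⟩
  rw [ap_mul]
  refine ⟨hn.trans_le (hfPL.le.2 (hkPL.le.2 hz.1)), ?_⟩
  calc ap (f ^ n) (ap k z) < ap (f ^ n) q := hfPL.lt.2 ((hkPL.le.2 hz.2).trans_lt hkq)
    _ = q := ap_zpow_eq_self ho.ap_right n

end PingPong

section TamePairs

open Filter Topology
open scoped commutatorElement

variable {G K N P Q U V : Subgroup PermR} {u v : PermR} {a b c d p q : ℝ}

/-- A power of `v` carries `t` close to `d`, where `u` is trivial. -/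
theorem exists_zpow_ap_eq_self_of_nested (hPL : ∀ g ∈ G, IsPL g) (hK : K ≤ G) (hu : u ∈ K)
    (hv : v ∈ K) (ho : IsOrbital u a b) (ho' : IsOrbital v c d) (hca : c < a) (hbd : b < d)
    (hno : ∀ e ∈ ⁅K, K⁆, ¬ HasNonblockOrbital G e) {t : ℝ} (ht : t ∈ Ioo c d) :
    ∃ m : ℤ, ap u (ap (v ^ m) t) = ap (v ^ m) t := by
  obtain ⟨e, he, hue⟩ := mem_fixer_nhdsLE.1
    (mem_fixer_nhdsLE_of_nested hPL hK hu hv ho ho' hca hbd hno)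
  have hvPL := hPL v (hK hv)
  obtain ⟨m, hm⟩ := ho'.exists_lt_zpow_ap hvPL ht he
  refine ⟨m, hue _ ⟨hm.le, ?_⟩⟩
  exact ((hvPL.zpow m).le.2 ht.2.le).trans_eq (ap_zpow_eq_self ho'.ap_right m)

/-- A pair of subgroups of `G` such that no element of the derived subgroup of the group generated
by one element of each has an orbital that is not a block. -/
structure IsTamePair (G P Q : Subgroup PermR) : Prop where
  left_le : P ≤ G
  right_le : Q ≤ G
  not_hasNonblockOrbital : ∀ u ∈ P, ∀ v ∈ Q,
    ∀ e ∈ ⁅Subgroup.closure {u, v}, Subgroup.closure {u, v}⁆, ¬ HasNonblockOrbital G e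

theorem IsTamePair.symm (h : IsTamePair G P Q) : IsTamePair G Q P :=
  ⟨h.right_le, h.left_le, fun u hu v hv => pair_comm v u ▸ h.not_hasNonblockOrbital v hv u hu⟩

theorem IsTamePair.mono (h : IsTamePair G P Q) {P' Q' : Subgroup PermR} (hP : P' ≤ P)
    (hQ : Q' ≤ Q) : IsTamePair G P' Q' :=
  ⟨hP.trans h.left_le, hQ.trans h.right_le,
    fun u hu v hv => h.not_hasNonblockOrbital u (hP hu) v (hQ hv)⟩

theorem IsTamePair.of_commutatorElement_mem (hP : P ≤ G) (hQ : Q ≤ G)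
    (hN : ∀ x ∈ N, ¬ HasNonblockOrbital G x) (hPN : P ≤ Subgroup.normalizer (N : Set PermR))
    (hQN : Q ≤ Subgroup.normalizer (N : Set PermR)) (hPQ : ∀ u ∈ P, ∀ v ∈ Q, ⁅u, v⁆ ∈ N) :
    IsTamePair G P Q :=
  ⟨hP, hQ, fun u hu v hv e he =>
    hN e (commutator_closure_pair_le (hPN hu) (hQN hv) (hPQ u hu v hv) he)⟩

theorem IsTamePair.closure_pair_le (h : IsTamePair G P Q) (hu : u ∈ P) (hv : v ∈ Q) :
    Subgroup.closure {u, v} ≤ G :=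
  (Subgroup.closure_le G).2 (pair_subset (h.left_le hu) (h.right_le hv))

theorem ap_commutatorElement_eq_self_comm : ap ⁅u, v⁆ a = a ↔ ap ⁅v, u⁆ a = a := by
  rw [ap_commutatorElement_eq_self_iff, ap_commutatorElement_eq_self_iff, eq_comm]

theorem IsTamePair.not_nested (h : IsTamePair G P Q) (hPL : ∀ g ∈ G, IsPL g)
    (hc : ∀ u ∈ P, ∀ v ∈ Q, ap ⁅u, v⁆ a = a) (hu : u ∈ P) (hv : v ∈ Q) (ho : IsOrbital u c d)
    (ha : a ∈ Ioo c d) (ho' : IsOrbital v p q) : ¬ (p < c ∧ d < q) := by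
  rintro ⟨hpc, hdq⟩
  obtain ⟨m, hm⟩ := exists_zpow_ap_eq_self_of_nested hPL (h.closure_pair_le hu hv)
    (Subgroup.subset_closure (mem_insert u _))
    (Subgroup.subset_closure (mem_insert_of_mem u rfl)) ho ho' hpc hdq
    (h.not_hasNonblockOrbital u hu v hv) ⟨hpc.trans ha.1, ha.2.trans hdq⟩
  rw [← ap_commutatorElement_eq_self_iff.1 (hc u hu _ (zpow_mem hv m))] at hm
  exact ho.ap_ne ha (ap_injective _ hm)

theorem IsTamePair.orbital_eq (h : IsTamePair G P Q) (hPL : ∀ g ∈ G, IsPL g)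
    (hc : ∀ u ∈ P, ∀ v ∈ Q, ap ⁅u, v⁆ a = a) (hu : u ∈ P) (hv : v ∈ Q) (ho : IsOrbital u c d)
    (ha : a ∈ Ioo c d) (ho' : IsOrbital v p q) (ha' : a ∈ Ioo p q) : c = p ∧ d = q := by
  by_contra hne
  obtain ⟨e, he, heG⟩ := exists_hasNonblockOrbital_of_overlap hPL (h.closure_pair_le hu hv)
    (Subgroup.subset_closure (mem_insert u _))
    (Subgroup.subset_closure (mem_insert_of_mem u rfl)) ho ho' (ha.1.trans ha'.2)
    (ha'.1.trans ha.2) hne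
    (h.symm.not_nested hPL (fun v hv u hu => ap_commutatorElement_eq_self_comm.1 (hc u hu v hv))
      hv hu ho' ha' ho)
    (h.not_nested hPL hc hu hv ho ha ho')
  exact h.not_hasNonblockOrbital u hu v hv e he heG

theorem IsTamePair.ap_eq_self (h : IsTamePair G P Q) (hPL : ∀ g ∈ G, IsPL g)
    (hc : ∀ u ∈ P, ∀ v ∈ Q, ap ⁅u, v⁆ a = a) (hu : u ∈ ⁅P, P⁆) (hua : ap u a ≠ a) (hv : v ∈ Q) :
    ap v a = a := by
  by_contra hva
  have huP := commutator_self_le P hu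
  obtain ⟨c, d, ho, ha⟩ := (hPL u (h.left_le huP)).exists_orbital hua
  obtain ⟨p, q, ho', ha'⟩ := (hPL v (h.right_le hv)).exists_orbital hva
  obtain ⟨rfl, rfl⟩ := h.orbital_eq hPL hc huP hv ho ha ho' ha'
  have hPc : ∃ u' ∈ P, ap u' c ≠ c := by
    by_contra! hfix
    exact ho.notMem_fixer_nhdsGE
      (commutator_le_fixer_nhdsGE (fun k hk => hPL k (h.left_le hk)) hfix hu)
  obtain ⟨u', hu', hne⟩ := hPc
  obtain ⟨e, e', hoe, hec, hce⟩ := (hPL u' (h.left_le hu')).exists_orbital hne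
  rcases le_or_gt e' d with hed | hde
  · obtain ⟨x, hx, hxG⟩ := exists_hasNonblockOrbital_of_lt_of_lt_of_le hPL
      (h.closure_pair_le hu' hv) (Subgroup.subset_closure (mem_insert u' _))
      (Subgroup.subset_closure (mem_insert_of_mem u' rfl)) hoe ho' hec hce hed
    exact h.not_hasNonblockOrbital u' hu' v hv x hx hxG
  · exact hec.ne (h.orbital_eq hPL hc hu' hv hoe ⟨hec.trans ha.1, ha.2.trans hde⟩ ho' ha').1

theorem conj_mem_fixer_nhdsGE (hu : IsPL u) (hv : v ∈ fixer (𝓝[≥] (ap u a))) :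
    MulAut.conj u v ∈ fixer (𝓝[≥] a) :=
  mem_fixer.2 <| ((hu.tendsto_nhdsGE a).eventually (mem_fixer.1 hv)).mono fun z hz =>
    ap_injective u (by rw [ap_mulAut_conj, hz])

/-- If `u` moves `a`, then all of `Q` fixes both `a` and its image under `u`, so that `v`, a product
of commutators in `Q`, is trivial to the right of both points. -/
theorem IsTamePair.commutatorElement_mem_fixer_of_ap_ne (h : IsTamePair G P Q)
    (hPL : ∀ g ∈ G, IsPL g) (hc : ∀ u ∈ P, ∀ v ∈ Q, ap ⁅u, v⁆ a = a) (hu : u ∈ ⁅P, P⁆)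
    (hv : v ∈ ⁅Q, Q⁆) (hua : ap u a ≠ a) : ⁅u, v⁆ ∈ fixer (𝓝[≥] a) := by
  have huP := commutator_self_le P hu
  have hfix (k) (hk : k ∈ Q) : ap k a = a := h.ap_eq_self hPL hc hu hua hk
  have hfix' (k) (hk : k ∈ Q) : ap k (ap u a) = ap u a := by
    rw [ap_commutatorElement_eq_self_iff.1 (hc u huP k hk), hfix k hk]
  have hQPL (k) (hk : k ∈ Q) : IsPL k := hPL k (h.right_le hk)
  exact mul_mem (conj_mem_fixer_nhdsGE (hPL u (h.left_le huP))
    (commutator_le_fixer_nhdsGE hQPL hfix' hv)) (inv_mem (commutator_le_fixer_nhdsGE hQPL hfix hv))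

theorem IsTamePair.commutatorElement_mem_fixer (h : IsTamePair G P Q) (hPL : ∀ g ∈ G, IsPL g)
    (hc : ∀ u ∈ P, ∀ v ∈ Q, ap ⁅u, v⁆ a = a) (hu : u ∈ ⁅P, P⁆) (hv : v ∈ ⁅Q, Q⁆) :
    ⁅u, v⁆ ∈ fixer (𝓝[≥] a) := by
  by_cases hua : ap u a = a
  · by_cases hva : ap v a = a
    · exact (hPL u (h.left_le (commutator_self_le P hu))).commutatorElement_mem_fixer_nhdsGE
        (hPL v (h.right_le (commutator_self_le Q hv))) hua hva
    · rw [← commutatorElement_inv]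
      exact inv_mem (h.symm.commutatorElement_mem_fixer_of_ap_ne hPL
        (fun v hv u hu => ap_commutatorElement_eq_self_comm.1 (hc u hu v hv)) hv hu hva)
  · exact h.commutatorElement_mem_fixer_of_ap_ne hPL hc hu hv hua

/-- The commutator is nontrivial to the right of `c`, so some commutator one level down moves `c`;
as `(c, d)` is a block, the orbital around `c` of that commutator contains `[c, d]`. -/
theorem IsTamePair.hasOrbitalTower (h : IsTamePair G U V) (hPL : ∀ g ∈ G, IsPL g)
    (hN : ∀ x ∈ N, ¬ HasNonblockOrbital G x) (hUV : ∀ u ∈ U, ∀ v ∈ V, ⁅u, v⁆ ∈ N) {n : ℕ}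
    (hu : u ∈ iteratedCommutator U n) (hv : v ∈ iteratedCommutator V n)
    (ho : IsOrbital ⁅u, v⁆ c d) : HasOrbitalTower N n c d := by
  have hmem {n u v} (hu : u ∈ iteratedCommutator U n) (hv : v ∈ iteratedCommutator V n) :
      ⁅u, v⁆ ∈ N :=
    hUV u (iteratedCommutator_le_self U n hu) v (iteratedCommutator_le_self V n hv)
  induction n generalizing u v c d with
  | zero => exact ⟨_, hmem hu hv, ho⟩
  | succ n ih =>
    refine ⟨⟨_, hmem hu hv, ho⟩, ?_⟩
    have hb : IsBlock G c d := of_not_not fun hb => hN _ (hmem hu hv) ⟨c, d, ho, hb⟩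
    have hmove : ∃ u' ∈ iteratedCommutator U n, ∃ v' ∈ iteratedCommutator V n,
        ap ⁅u', v'⁆ c ≠ c := by
      by_contra! hfix
      exact ho.notMem_fixer_nhdsGE ((h.mono (iteratedCommutator_le_self U n)
        (iteratedCommutator_le_self V n)).commutatorElement_mem_fixer hPL hfix hu hv)
    obtain ⟨u', hu', v', hv', hne⟩ := hmove
    have hG : ⁅u', v'⁆ ∈ G := by
      have hu'G := h.left_le (iteratedCommutator_le_self U n hu')
      have hv'G := h.right_le (iteratedCommutator_le_self V n hv')
      exact mul_mem (mul_mem (mul_mem hu'G hv'G) (inv_mem hu'G)) (inv_mem hv'G)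
    obtain ⟨a, b, ho', hac, hdb⟩ := hb.exists_orbital hPL hG hne
    exact ⟨a, b, hac, hdb, ih hu' hv' ho'⟩

theorem commute_of_mem_iteratedCommutator {X : Set PermR} (hPL : ∀ g ∈ G, IsPL g) (hXf : X.Finite)
    (hX : Subgroup.closure X = G) (hNG : N ≤ G) (hU : U ≤ G) (hV : V ≤ G)
    (hN : ∀ x ∈ N, ¬ HasNonblockOrbital G x) (hUN : U ≤ Subgroup.normalizer (N : Set PermR))
    (hVN : V ≤ Subgroup.normalizer (N : Set PermR)) (hUV : ∀ u ∈ U, ∀ v ∈ V, ⁅u, v⁆ ∈ N)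
    (hu : u ∈ iteratedCommutator U ((BreakSet X).ncard + 1))
    (hv : v ∈ iteratedCommutator V ((BreakSet X).ncard + 1)) : Commute u v := by
  have huv : ⁅u, v⁆ ∈ N :=
    hUV u (iteratedCommutator_le_self U _ hu) v (iteratedCommutator_le_self V _ hv)
  have hUVtame := IsTamePair.of_commutatorElement_mem hU hV hN hUN hVN hUV
  refine commutatorElement_eq_one_iff_commute.1 <|
    (hPL _ (hNG huv)).eq_one_of_forall_not_isOrbital fun c d ho => ?_
  exact not_hasOrbitalTower hPL hXf hX hNG hN (hUVtame.hasOrbitalTower hPL hN hUV hu hv ho)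

end TamePairs

section BrinEmbedding

open Filter
open scoped commutatorElement

variable {G R T : Subgroup PermR} {X : Set PermR} {E C D I : Set ℝ} {t w : PermR} {α β : ℝ}

theorem IsPingPong.conj_zpow_mem_fixer (h : IsPingPong I C D w t) {i : ℤ} (hi : i ≤ 0) :
    MulAut.conj (t ^ i) w ∈ fixer (𝓟 (I \ C)) := by
  refine mem_fixer_principal.2 fun z hz => by_contra fun hwz => hz.2 ?_
  have hC : ap (t ^ i) z ∈ C :=
    ap_mem_of_ap_conj_ne (zpow_mem h.mem_setStabilizer' i) h.mem_fixer hz.1 hwz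
  rcases hi.eq_or_lt with rfl | hi
  · simpa only [zpow_zero, ap_one] using hC
  · simpa only [zpow_zero, ap_one] using h.subset' (h.ap_zpow_mem hi hC)

theorem IsCore.mulAut_conj_mem (hC : IsCore G R E α β) {g x : PermR}
    (hg : g ∈ intervalStabilizer G α β) (hx : x ∈ R) : MulAut.conj g x ∈ R := by
  simpa only [inv_inv, MulAut.conj_apply] using hC.conj_mem g⁻¹ (inv_mem hg) x hx

theorem IsCore.le_normalizer (hPL : ∀ g ∈ G, IsPL g) (hC : IsCore G R E α β) :
    R ≤ Subgroup.normalizer ((R ⊓ fixer (𝓟 (Ioo α β)) : Subgroup PermR) : Set PermR) := by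
  have hR : R ≤ Subgroup.normalizer (fixer (𝓟 (Ioo α β)) : Set PermR) :=
    hC.le.trans <| (intervalStabilizer_le_setStabilizer hPL).trans setStabilizer_le_normalizer
  refine Subgroup.le_normalizer_iff.2 fun g hg x hx => Subgroup.mem_inf.2 ⟨?_, ?_⟩
  · exact mul_mem (mul_mem hg hx.1) (inv_mem hg)
  · exact Subgroup.le_normalizer_iff.1 hR g hg x hx.2

theorem IsCore.isBrinFamily (hPL : ∀ g ∈ G, IsPL g) (hXf : X.Finite)
    (hX : Subgroup.closure X = G) (hC : IsCore G R E α β) (h : IsPingPong (Ioo α β) C D w t)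
    (ht : t ∈ intervalStabilizer G α β) (hTR : T ≤ R) (hTC : T ≤ fixer (𝓟 (Ioo α β \ C)))
    (hw : w ∈ iteratedCommutator T ((BreakSet X).ncard + 1)) :
    IsBrinFamily fun i : ℤ => MulAut.conj (t ^ i) w := by
  intro i j k m hik hjk hm
  have hRG : R ≤ G := hC.le.trans fun x hx => hx.1
  have hTI : T ≤ setStabilizer (Ioo α β) :=
    (hTR.trans hC.le).trans (intervalStabilizer_le_setStabilizer hPL)
  have hwR : w ∈ R := hTR (iteratedCommutator_le_self T _ hw)
  have hconj (g) (hg : g ∈ intervalStabilizer G α β) : T.map (MulAut.conj g).toMonoidHom ≤ R :=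
    Subgroup.map_le_iff_le_comap.2 fun x hx => hC.mulAut_conj_mem hg (hTR hx)
  have hmem (g : PermR) : MulAut.conj g w ∈ iteratedCommutator
      (T.map (MulAut.conj g).toMonoidHom) ((BreakSet X).ncard + 1) :=
    map_iteratedCommutator (MulAut.conj g).toMonoidHom T _ ▸ Subgroup.mem_map_of_mem _ hw
  let Y := MulAut.conj (t ^ k) w ^ m
  have hYR : Y ∈ R := zpow_mem (hC.mulAut_conj_mem (zpow_mem ht k) hwR) m
  have hU := hconj (Y * t ^ i) (mul_mem (hC.le hYR) (zpow_mem ht i))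
  have hV := hconj (t ^ j) (zpow_mem ht j)
  change Commute (MulAut.conj Y (MulAut.conj (t ^ i) w)) (MulAut.conj (t ^ j) w)
  rw [← MulAut.mul_apply, ← map_mul]
  refine commute_of_mem_iteratedCommutator hPL hXf hX (N := R ⊓ fixer (𝓟 (Ioo α β)))
    (inf_le_left.trans hRG) (hU.trans hRG) (hV.trans hRG)
    (fun x hx => hC.not_hasNonblockOrbital x hx.1 (mem_fixer_principal.1 hx.2))
    (hU.trans (hC.le_normalizer hPL)) (hV.trans (hC.le_normalizer hPL)) ?_
    (hmem _) (hmem _)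
  intro u hu v hv
  refine Subgroup.mem_inf.2
    ⟨mul_mem (mul_mem (mul_mem (hU hu) (hV hv)) (inv_mem (hU hu))) (inv_mem (hV hv)), ?_⟩
  obtain ⟨x, hx, rfl⟩ := hu
  obtain ⟨y, hy, rfl⟩ := hv
  rw [map_mul]
  exact h.commutatorElement_mem_fixer (hTI hx) (hTC hx) (hTI hy) (hTC hy) hik hjk hm

theorem exists_brinB_embedding_of_isBrinFamily (hw : w ∈ G) (ht : t ∈ G)
    (hB : IsBrinFamily fun i : ℤ => MulAut.conj (t ^ i) w)
    (hnc : ¬ Commute w (MulAut.conj t w)) : ∃ φ : BrinB →* G, Function.Injective φ := by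
  have hG (i : ℤ) : MulAut.conj (t ^ i) w ∈ G :=
    mul_mem (mul_mem (zpow_mem ht i) hw) (inv_mem (zpow_mem ht i))
  refine exists_brinB_embedding (w := fun i => ⟨MulAut.conj (t ^ i) w, hG i⟩)
    (s := ⟨t, ht⟩⁻¹) (fun i j k m hik hjk hm => ?_) (fun i => ?_) fun hc =>
      hnc ((commute_iff_eq _ _).2 ?_)
  · exact Subtype.ext (hB hik hjk hm).eq
  · refine Subtype.ext ?_
    change MulAut.conj t⁻¹⁻¹ (MulAut.conj (t ^ i) w) = _
    rw [inv_inv, ← MulAut.mul_apply, ← map_mul, ← zpow_one_add, add_comm]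
  · simpa only [zpow_zero, zpow_one, map_one, MulAut.one_apply, MulMemClass.mk_mul_mk] using
      congrArg Subtype.val hc.eq

theorem IsCore.exists_brinB_embedding (hPL : ∀ g ∈ G, IsPL g) (hXf : X.Finite)
    (hX : Subgroup.closure X = G) (hC : IsCore G R E α β) :
    ∃ φ : BrinB →* G, Function.Injective φ := by
  obtain ⟨w, hw, t, ht, C, D, h⟩ := hC.exists_isPingPong hPL hXf hX
  have hRI : R ≤ setStabilizer (Ioo α β) := hC.le.trans (intervalStabilizer_le_setStabilizer hPL)
  obtain ⟨c, hc, N, D', h'⟩ := h.exists_mem_iteratedCommutator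
    (T := R ⊓ fixer (𝓟 (Ioo α β \ C))) (inf_le_left.trans hRI) inf_le_right
    (fun i hi => ⟨hC.mulAut_conj_mem (zpow_mem ht i) hw, h.conj_zpow_mem_fixer hi⟩)
    ((BreakSet X).ncard + 1)
  have hcR : c ∈ R := (iteratedCommutator_le_self _ _ hc).1
  have hB := hC.isBrinFamily hPL hXf hX h' (zpow_mem ht N) inf_le_left inf_le_right hc
  exact exists_brinB_embedding_of_isBrinFamily (hC.le hcR).1 (zpow_mem ht N).1 hB h'.not_commute

end BrinEmbedding

theorem statement3 (G : Subgroup PermR) (hPL : ∀ g ∈ G, IsPL g)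
    (hfg : Group.FG ↥G) :
    ¬ IsSolvable ↥G ↔ ∃ φ : BrinB →* ↥G, Function.Injective φ := by
  constructor
  · intro hns
    obtain ⟨X, hX⟩ := (Group.fg_iff_subgroup_fg G).1 hfg
    obtain ⟨R, E, α, β, hC⟩ := exists_isCore hPL X.finite_toSet hX hns
    exact hC.exists_brinB_embedding hPL X.finite_toSet hX
  · rintro ⟨φ, hφ⟩ hs
    have : Group.IsSolvable G := hs
    exact not_isSolvable_brinB (Group.isSolvable_of_isSolvable_injective hφ)

end PLPaper
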